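/- For every α > 0 there exist a universal differentiability set E ⊆ ℝ², a Lipschitz function h : ℝ² → ℝ, a unit vector w ∈ S¹ and a number α' ∈ (0, α], such that the set of points x ∈ E at which h has a directional derivative in some direction v ∈ S¹ ∖ Ĉ(w,α') is contained in a purely unrectifiable set. -/

import Mathlib

/-!
Coordinates are taken in `ℝ × ℝ`, and the cone is the one around the vertical direction. All lines
that occur have the form `x₁ = c + m x₂` with `c`, `m` rational and `|m| ≤ η`, where `η` is small
compared to the width of the cone, so that directions outside the cone are transversal to all of
them. The construction treats each such line infinitely often, giving it in step `k` a thin strip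
`T k`, and `E` is the set of points which lie in infinitely many strips. It is a `G_δ` set
containing all the lines.

**`E` is a universal differentiability set** (`uds_prod`), by Preiss's method. For a Lipschitz `f`
one considers triples `(x, m, D)` such that `f` has derivative `D` at `x ∈ E` in direction `(m, 1)`.
One repeatedly picks almost maximal triples for `D` minus a penalty depending on the slope, each time
adding a quadratic penalty that vanishes at the slope just chosen, and each time admitting only
competitors near the current point from which `f` looks similar, up to an error of the order of the
square root of the gain. These classes of competitors are nested (`nest`), the triples converge, and
the limit is maximal in the strong sense of `optimal`. If `f` were not differentiable at the limit
point `x`, its linear approximation would fail at a nearby rational point `y`. Two segments of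
rational slopes through `y` form a broken line in `E` that starts and ends almost on the line through
`x` with the limit slope. Along the broken line the excess of `f` over its prediction is large at `y`
and small at the ends, and a one-dimensional argument (`good_point`), which rests on the weak-type
estimate `weak_type`, finds a point on it with a large derivative from which `f` looks similar
(`competitor`). This contradicts maximality.

**The function `h`** is the limit of functions `g k` with approximate gradients `(A, B)`, satisfying
`|A u + B| < 1` for `|u| ≤ 1`. In step `k` (`exists_step`) the gradient is changed near the line only
by multiples of the covector `(1, -m)`, which leaves the derivative `p = A m + B` along the line as
it is. The first-order dependence across the line is removed, and a concave roof of curvature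
`w = (1 - p²)² / 8` is put there. So at points of the strip, which is thin compared to the width `δ`
of the roof, the second difference of `h` at scale `δ` in direction `v` is about
`-δ w ζ² / (1 + ζ²)` with `ζ = v₁ - m v₂` (`Run.snd_h`). Later steps do not spoil this, since what
they add is much smaller than `δ`. A directional derivative in a transversal direction `v` forces
these second differences to be `o(δ)`, hence `p² → 1` along the strips containing `x`. The set `P` is
defined by this condition, see `Run.mem_P`.

**`P` is purely unrectifiable** (`Run.null_curve`). A curve transversal to all the lines meets `E`
in a null set by the Borel–Cantelli lemma, as the widths of the strips are summable
(`Run.null_transversal`). For nearly vertical curves one builds along with `g k` functions `q k`, with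
approximate gradients `(Ah, Bh)` such that the affine function `u ↦ Ah u + Bh` lies above
`u ↦ 1 / (1 - (A u + B)²)` for `|u| ≤ 2η`. The roof added to `g k` can be compensated by a roof added
to `q k`, by a Bregman estimate for the convex function `v ↦ 1 / (1 - v²)` (`dual_step`). In
particular the affine functions are nonnegative, so the limit `q`, or its negative, is monotone up to
a linear term along nearly vertical curves, and thus differentiable at almost every point of them. But at
points of `P` the values `1 / (1 - p²)` are unbounded and the difference quotients of `q` at suitable
scales blow up (`Run.null_vertical`).
-/

open MeasureTheory Filter Metric Set Topology RealInnerProductSpace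

noncomputable section

/-- The Euclidean plane. -/
abbrev E2 := EuclideanSpace ℝ (Fin 2)

/-- `IsC1Curve a b γ γ'` : `γ` restricted to the compact nondegenerate interval `[a,b]`
is a C¹ curve with (one-sided at endpoints) derivative `γ'`, continuous and of unit
norm on `[a,b]`. -/
def IsC1Curve (a b : ℝ) (γ γ' : ℝ → E2) : Prop :=
  a < b ∧ ContinuousOn γ' (Set.Icc a b) ∧
    (∀ t ∈ Set.Icc a b, HasDerivWithinAt γ (γ' t) (Set.Icc a b) t) ∧
    (∀ t ∈ Set.Icc a b, ‖γ' t‖ = 1)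

/-- A Borel set `P ⊆ ℝ²` is purely unrectifiable if every C¹ curve meets it in a set of
one-dimensional Lebesgue measure zero. -/
def PurelyUnrectifiable (P : Set E2) : Prop :=
  MeasurableSet P ∧
    ∀ a b : ℝ, ∀ γ γ' : ℝ → E2, IsC1Curve a b γ γ' →
      volume (γ ⁻¹' P ∩ Set.Icc a b) = 0

/-- `E ⊆ ℝ²` is a universal differentiability set if every (real-valued) Lipschitz function
on `ℝ²` has a point of differentiability in `E`. -/
def IsUDS (E : Set E2) : Prop :=
  ∀ f : E2 → ℝ, (∃ K, LipschitzWith K f) → ∃ x ∈ E, DifferentiableAt ℝ f x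

/-- The double-sided cone `Ĉ(w,α) = {v ∈ S¹ : |⟨v,w⟩| ≥ 1 − α}`. -/
def hatC (w : E2) (α : ℝ) : Set E2 :=
  {v ∈ sphere (0:E2) 1 | 1 - α ≤ |⟪v, w⟫|}

/-- `h` has a directional derivative at `x` in direction `v`. -/
def HasDirDeriv (h : E2 → ℝ) (x v : E2) : Prop :=
  ∃ L : ℝ, Tendsto (fun t : ℝ => (h (x + t • v) - h x) / t) (𝓝[≠] (0:ℝ)) (𝓝 L)

namespace UDS

/-! ### The weak-type estimate -/

/-- Weak-type estimate for the maximal difference quotient of a function whose increments are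
dominated by a finite measure. -/
lemma weak_type (φ : ℝ → ℝ) (ν : Measure ℝ) [IsFiniteMeasure ν]
    (hφ : ∀ x y, x ≤ y → ENNReal.ofReal |φ y - φ x| ≤ ν (Icc x y)) (μ : ℝ) (hμ : 0 < μ) :
    volume {t | ∃ s, μ * |s| < |φ (t + s) - φ t|} ≤ ENNReal.ofReal (5 / μ) * ν univ := by
  set B : Set ℝ := {t | ∃ s, μ * |s| < |φ (t + s) - φ t|} with hB
  have hch : ∀ t, ∃ s, t ∈ B → μ * |s| < |φ (t + s) - φ t| := by
    intro t
    by_cases h : t ∈ B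
    · obtain ⟨s, hs⟩ := h
      exact ⟨s, fun _ => hs⟩
    · exact ⟨0, fun h' => absurd h' h⟩
  choose s hs using hch
  have hs0 : ∀ t ∈ B, s t ≠ 0 := by
    intro t ht h0
    have := hs t ht
    simp [h0] at this
  have hball : ∀ t, closedBall (t + s t / 2) (|s t| / 2) = Icc (min t (t + s t)) (max t (t + s t)) := by
    intro t
    rw [Real.closedBall_eq_Icc]
    rcases le_total 0 (s t) with h | h
    · rw [abs_of_nonneg h, min_eq_left (by linarith), max_eq_right (by linarith)]
      congr 1 <;> ring
    · rw [abs_of_nonpos h, min_eq_right (by linarith), max_eq_left (by linarith)]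
      congr 1 <;> ring
  have hν : ∀ t ∈ B, ENNReal.ofReal (μ * |s t|) ≤ ν (closedBall (t + s t / 2) (|s t| / 2)) := by
    intro t ht
    rw [hball]
    refine le_trans (ENNReal.ofReal_le_ofReal (hs t ht).le) ?_
    refine le_trans (le_of_eq ?_) (hφ _ _ min_le_max)
    congr 1
    rcases le_total 0 (s t) with h | h
    · rw [min_eq_left (by linarith), max_eq_right (by linarith)]
    · rw [min_eq_right (by linarith), max_eq_left (by linarith), abs_sub_comm]
  have hR : ∀ t ∈ B, |s t| / 2 ≤ (ν univ).toReal / μ / 2 := by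
    intro t ht
    have h1 := (hν t ht).trans (measure_mono (subset_univ _))
    have h2 : μ * |s t| ≤ (ν univ).toReal := by
      rwa [ENNReal.ofReal_le_iff_le_toReal (measure_ne_top _ _)] at h1
    have : |s t| ≤ (ν univ).toReal / μ := by
      rw [le_div_iff₀ hμ]; linarith
    linarith
  obtain ⟨u, huB, hdisj, hcov⟩ := Vitali.exists_disjoint_subfamily_covering_enlargement_closedBall
    B (fun t => t + s t / 2) (fun t => |s t| / 2) _ hR 5 (by norm_num)
  have hucount : u.Countable := by
    apply hdisj.countable_of_nonempty_interior
    intro t ht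
    have h0 : 0 < |s t| / 2 := by have := abs_pos.mpr (hs0 t (huB ht)); linarith
    exact ⟨t + s t / 2, ball_subset_interior_closedBall (mem_ball_self h0)⟩
  have hsub : B ⊆ ⋃ b ∈ u, closedBall (b + s b / 2) (5 * (|s b| / 2)) := by
    intro t ht
    obtain ⟨b, hb, hb'⟩ := hcov t ht
    refine mem_iUnion₂.mpr ⟨b, hb, hb' ?_⟩
    rw [hball]
    exact ⟨min_le_left _ _, le_max_left _ _⟩
  calc volume B ≤ volume (⋃ b ∈ u, closedBall (b + s b / 2) (5 * (|s b| / 2))) := measure_mono hsub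
    _ ≤ ∑' b : u, volume (closedBall ((b : ℝ) + s b / 2) (5 * (|s b| / 2))) :=
        measure_biUnion_le _ hucount _
    _ ≤ ∑' b : u, ENNReal.ofReal (5 / μ) * ν (closedBall ((b : ℝ) + s b / 2) (|s b| / 2)) := by
        refine ENNReal.tsum_le_tsum fun b => ?_
        rw [Real.volume_closedBall]
        refine le_trans (le_of_eq ?_) (mul_le_mul_right (hν b (huB b.2)) _)
        rw [← ENNReal.ofReal_mul (by positivity)]
        congr 1
        field_simp
    _ = ENNReal.ofReal (5 / μ) * ν (⋃ b ∈ u, closedBall (b + s b / 2) (|s b| / 2)) := by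
        rw [ENNReal.tsum_mul_left, measure_biUnion hucount hdisj (fun _ _ => measurableSet_closedBall)]
    _ ≤ _ := mul_le_mul_right (measure_mono (subset_univ _)) _

lemma lintegral_sqrt_inv (c : ℝ) (hc : 0 ≤ c) :
    ∫⁻ l in Ioo (0:ℝ) 1, ENNReal.ofReal (c / √l) = ENNReal.ofReal (2 * c) := by
  have hint : IntervalIntegrable (fun l : ℝ => c * l ^ (-(1/2:ℝ))) volume 0 1 :=
    (intervalIntegral.intervalIntegrable_rpow' (by norm_num)).const_mul c
  have h1 : ∫ l in (0:ℝ)..1, c * l ^ (-(1/2:ℝ)) = 2 * c := by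
    rw [intervalIntegral.integral_const_mul, integral_rpow (by norm_num)]
    norm_num; ring
  rw [intervalIntegrable_iff_integrableOn_Ioo_of_le (by norm_num)] at hint
  rw [intervalIntegral.integral_of_le (by norm_num), integral_Ioc_eq_integral_Ioo] at h1
  rw [← h1, ofReal_integral_eq_lintegral_ofReal hint]
  · refine setLIntegral_congr_fun measurableSet_Ioo ?_
    intro l hl
    simp only
    congr 1
    rw [Real.rpow_neg hl.1.le, Real.sqrt_eq_rpow, div_eq_mul_inv]
  · filter_upwards [ae_restrict_mem measurableSet_Ioo] with l hl
    have := hl.1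
    simp only [Pi.zero_apply]
    positivity

/-! ### Points of positive derivative with controlled difference quotients -/

/-- A 1-Lipschitz function on an interval which increases substantially somewhere and does not
decrease too much globally has a point with derivative `a` bounded below at which all difference
quotients are controlled by `√a`. -/
lemma good_point (φ : ℝ → ℝ) (R γ β : ℝ) (hR : 0 < R) (hγ : 0 < γ) (hβ : 0 ≤ β)
    (hβγ : 2 * β ≤ γ * R / 4) (hφ : LipschitzWith 1 φ)
    (hcl : ∀ t, φ t = φ (max (-R) (min t R))) (u v : ℝ) (huv : u ≤ v)
    (hinc : γ * R ≤ φ v - φ u) (hend : -(γ * R) ≤ φ R - φ (-R)) :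
    ∃ t a, -R + β < t ∧ t < R - β ∧ t ≠ 0 ∧ γ / 8 ≤ a ∧ HasDerivAt φ a t ∧
      ∀ s, |φ (t + s) - φ t| ≤ 120 * √a * |s| := by
  -- Otherwise let `W` be the total positive variation. The points at which the derivative is at
  -- least `γ / 8`, away from the ends and from `0`, contribute at most `W / 4` to it: by the
  -- weak-type estimate those with derivative `> l` have measure at most `W / (8 √l)`, and
  -- `l ≤ 1`. Smaller derivatives contribute at most `γ R / 4 ≤ W / 4`, and the two end intervals
  -- at most `2 β ≤ W / 4`. The sum is less than `W`.
  by_contra hcon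
  push Not at hcon
  set d := deriv φ with hd
  have hdm : Measurable d := measurable_deriv φ
  have hd1 : ∀ t, |d t| ≤ 1 := fun t => by
    simpa using norm_deriv_le_of_lipschitz (x₀ := t) hφ
  have hftc : ∀ x y, ∫ t in x..y, d t = φ y - φ x := fun x y =>
    (hφ.lipschitzOnWith (s := uIcc x y)).absolutelyContinuousOnInterval.integral_deriv_eq_sub
  have hint : ∀ x y, IntervalIntegrable d volume x y := fun x y =>
    (hφ.lipschitzOnWith (s := uIcc x y)).absolutelyContinuousOnInterval.intervalIntegrable_deriv
  have hconst1 : ∀ t, R < t → d t = 0 := by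
    intro t ht
    have : φ =ᶠ[𝓝 t] fun _ => φ R := by
      filter_upwards [lt_mem_nhds ht] with y hy
      rw [hcl y, min_eq_right hy.le, max_eq_right (by linarith)]
    rw [hd, this.deriv_eq]; simp
  have hconst2 : ∀ t, t < -R → d t = 0 := by
    intro t ht
    have : φ =ᶠ[𝓝 t] fun _ => φ (-R) := by
      filter_upwards [gt_mem_nhds ht] with y hy
      rw [hcl y, min_eq_left (by linarith), max_eq_left (by linarith)]
    rw [hd, this.deriv_eq]; simp
  have hsupp : ∀ t, t ∉ Icc (-R) R → d t = 0 := by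
    intro t ht
    by_cases h : t < -R
    · exact hconst2 t h
    · exact hconst1 t (by by_contra h'; exact ht ⟨not_lt.mp h, not_lt.mp h'⟩)
  have hInt : Integrable d := by
    have h1 : IntegrableOn d (Icc (-R) R) := by
      rw [integrableOn_Icc_iff_integrableOn_Ioc]
      exact (intervalIntegrable_iff_integrableOn_Ioc_of_le (by linarith)).mp (hint (-R) R)
    exact (integrableOn_iff_integrable_of_support_subset
      (fun t ht => by by_contra h; exact ht (hsupp t h))).mp h1
  -- `W` is the total positive variation
  set W := ∫ t, max (d t) 0 with hW
  have hIntp : Integrable (fun t => max (d t) 0) := hInt.pos_part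
  have htot : ∫ t, d t = φ R - φ (-R) := by
    rw [← hftc, intervalIntegral.integral_of_le (by linarith), ← integral_Icc_eq_integral_Ioc]
    exact (setIntegral_eq_integral_of_forall_compl_eq_zero hsupp).symm
  have hWγ : γ * R ≤ W := by
    refine hinc.trans ?_
    rw [← hftc, intervalIntegral.integral_of_le huv]
    refine le_trans (integral_mono hInt.integrableOn hIntp.integrableOn (fun t => le_max_left _ _)) ?_
    exact setIntegral_le_integral hIntp (Eventually.of_forall fun t => le_max_right _ _)
  have hWpos : 0 < W := lt_of_lt_of_le (by positivity) hWγ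
  have habs : ∫ t, |d t| ≤ 3 * W := by
    have : ∀ t, |d t| = 2 * max (d t) 0 - d t := by
      intro t
      rcases le_total 0 (d t) with h | h
      · rw [abs_of_nonneg h, max_eq_left h]; ring
      · rw [abs_of_nonpos h, max_eq_right h]; ring
    simp_rw [this]
    rw [integral_sub (hIntp.const_mul 2) hInt, integral_const_mul, htot]
    linarith
  set ν : Measure ℝ := volume.withDensity (fun t => ENNReal.ofReal |d t|) with hν
  have hνu : ν univ ≤ ENNReal.ofReal (3 * W) := by
    rw [hν, withDensity_apply _ MeasurableSet.univ, Measure.restrict_univ,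
      ← ofReal_integral_eq_lintegral_ofReal hInt.abs (Eventually.of_forall fun t => abs_nonneg _)]
    exact ENNReal.ofReal_le_ofReal habs
  have : IsFiniteMeasure ν := ⟨hνu.trans_lt ENNReal.ofReal_lt_top⟩
  have hνφ : ∀ x y, x ≤ y → ENNReal.ofReal |φ y - φ x| ≤ ν (Icc x y) := by
    intro x y hxy
    rw [hν, withDensity_apply _ measurableSet_Icc,
      ← ofReal_integral_eq_lintegral_ofReal hInt.abs.integrableOn
        (Eventually.of_forall fun t => abs_nonneg _)]
    refine ENNReal.ofReal_le_ofReal ?_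
    rw [← hftc, intervalIntegral.integral_of_le hxy, integral_Icc_eq_integral_Ioc]
    exact abs_integral_le_integral_abs
  -- points where the derivative is large
  set A : Set ℝ := {t | -R + β < t ∧ t < R - β ∧ t ≠ 0 ∧ γ / 8 ≤ d t ∧ DifferentiableAt ℝ φ t}
    with hA
  have hAm : MeasurableSet A := by
    have h1 : MeasurableSet {t : ℝ | -R + β < t} := measurableSet_Ioi
    have h2 : MeasurableSet {t : ℝ | t < R - β} := measurableSet_Iio
    have h3 : MeasurableSet {t : ℝ | t ≠ 0} := (measurableSet_singleton (0:ℝ)).compl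
    have h4 : MeasurableSet {t : ℝ | γ / 8 ≤ d t} := measurableSet_le measurable_const hdm
    have h5 := measurableSet_of_differentiableAt ℝ φ
    exact h1.inter (h2.inter (h3.inter (h4.inter h5)))
  have hAd : ∀ t, 0 ≤ A.indicator d t := by
    intro t
    refine indicator_nonneg (fun x hx => ?_) t
    have := hx.2.2.2.1
    linarith
  have hlayer : ∫ t, A.indicator d t ≤ W / 4 := by
    rw [integral_eq_lintegral_of_nonneg_ae (Eventually.of_forall hAd)
      (hdm.indicator hAm).aestronglyMeasurable]
    refine ENNReal.toReal_le_of_le_ofReal (by linarith) ?_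
    rw [lintegral_eq_lintegral_meas_lt _ (Eventually.of_forall hAd) (hdm.indicator hAm).aemeasurable]
    have hle : ∀ l ∈ Ioi (0:ℝ), volume {t | l < A.indicator d t} ≤
        (Ioo (0:ℝ) 1).indicator (fun l => ENNReal.ofReal (W / 8 / √l)) l := by
      intro l hl
      have hl0 : 0 < l := hl
      by_cases h1 : l < 1
      · rw [indicator_of_mem (show l ∈ Ioo (0:ℝ) 1 from ⟨hl, h1⟩)]
        have hs : 0 < √l := Real.sqrt_pos.mpr hl
        have hsub : {t | l < A.indicator d t} ⊆
            {t | ∃ s, (120 * √l) * |s| < |φ (t + s) - φ t|} := by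
          intro t ht
          have htA : t ∈ A := by
            by_contra h
            simp only [mem_ofPred_eq, indicator_of_notMem h] at ht
            linarith
          simp only [mem_ofPred_eq, indicator_of_mem htA] at ht
          obtain ⟨s, hs'⟩ := hcon t (d t) htA.1 htA.2.1 htA.2.2.1 htA.2.2.2.1 htA.2.2.2.2.hasDerivAt
          refine ⟨s, lt_of_le_of_lt ?_ hs'⟩
          have : √l ≤ √(d t) := Real.sqrt_le_sqrt ht.le
          gcongr
        refine (measure_mono hsub).trans ((weak_type φ ν hνφ _ (by positivity)).trans ?_)
        refine (mul_le_mul_right hνu _).trans ?_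
        rw [← ENNReal.ofReal_mul (by positivity)]
        refine ENNReal.ofReal_le_ofReal (le_of_eq ?_)
        field_simp; norm_num
      · have : {t | l < A.indicator d t} = ∅ := by
          ext t
          simp only [mem_ofPred_eq, mem_empty_iff_false, iff_false, not_lt]
          refine le_trans ?_ (not_lt.mp h1)
          by_cases h : t ∈ A
          · rw [indicator_of_mem h]; exact (abs_le.mp (hd1 t)).2
          · rw [indicator_of_notMem h]; norm_num
        simp [this]
    refine (setLIntegral_mono' measurableSet_Ioi hle).trans ?_
    refine (setLIntegral_le_lintegral _ _).trans ?_
    rw [lintegral_indicator measurableSet_Ioo, lintegral_sqrt_inv _ (by linarith)]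
    exact ENNReal.ofReal_le_ofReal (by linarith)
  have hdom : ∀ᵐ t : ℝ, max (d t) 0 ≤ (Icc (-R) R).indicator (fun _ => γ / 8) t
      + ((Icc (-R) (-R + β)).indicator (fun _ => (1:ℝ)) t
      + ((Icc (R - β) R).indicator (fun _ => (1:ℝ)) t + A.indicator d t)) := by
    have h0 : ∀ᵐ t : ℝ, t ≠ 0 := by
      have := (measure_singleton (μ := (volume : Measure ℝ)) 0)
      exact compl_mem_ae_iff.mpr this
    filter_upwards [hφ.ae_differentiableAt_real, h0] with t ht ht0
    have n1 : 0 ≤ (Icc (-R) R).indicator (fun _ => γ / 8) t :=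
      indicator_nonneg (fun _ _ => by positivity) t
    have n2 : 0 ≤ (Icc (-R) (-R + β)).indicator (fun _ => (1:ℝ)) t :=
      indicator_nonneg (fun _ _ => by positivity) t
    have n3 : 0 ≤ (Icc (R - β) R).indicator (fun _ => (1:ℝ)) t :=
      indicator_nonneg (fun _ _ => by positivity) t
    have n4 := hAd t
    have hm1 : d t ≤ 1 := (abs_le.mp (hd1 t)).2
    by_cases hI : t ∈ Icc (-R) R
    · by_cases hsm : d t < γ / 8
      · rw [indicator_of_mem hI] at n1 ⊢
        have : max (d t) 0 ≤ γ / 8 := max_le hsm.le (by positivity)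
        linarith
      · by_cases hl : t ≤ -R + β
        · rw [indicator_of_mem (show t ∈ Icc (-R) (-R + β) from ⟨hI.1, hl⟩)]
          have : max (d t) 0 ≤ 1 := max_le hm1 (by norm_num)
          linarith
        by_cases hr : R - β ≤ t
        · rw [indicator_of_mem (show t ∈ Icc (R - β) R from ⟨hr, hI.2⟩)]
          have : max (d t) 0 ≤ 1 := max_le hm1 (by norm_num)
          linarith
        rw [indicator_of_mem (show t ∈ A from ⟨not_le.mp hl, not_le.mp hr, ht0, not_lt.mp hsm, ht⟩)]
        rw [max_eq_left (by linarith)]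
        linarith
    · rw [hsupp t hI]
      simp only [max_self]; linarith
  have hc : ∀ (x y c : ℝ), Integrable ((Icc x y).indicator (fun _ => c)) := fun x y c =>
    (integrable_indicator_iff measurableSet_Icc).mpr (by simp)
  have hci : ∀ (x y c : ℝ), x ≤ y → ∫ t, (Icc x y).indicator (fun _ => c) t = (y - x) * c := by
    intro x y c hxy
    rw [integral_indicator measurableSet_Icc]
    simp [hxy]
  have hIA : Integrable (A.indicator d) := hInt.indicator hAm
  have hI1 : Integrable (fun t => (Icc (R - β) R).indicator (fun _ => (1:ℝ)) t + A.indicator d t) :=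
    (hc _ _ _).add hIA
  have hI2 : Integrable (fun t => (Icc (-R) (-R + β)).indicator (fun _ => (1:ℝ)) t
      + ((Icc (R - β) R).indicator (fun _ => (1:ℝ)) t + A.indicator d t)) := (hc _ _ _).add hI1
  have hfin := integral_mono_ae hIntp ((hc _ _ _).add hI2) hdom
  simp only [Pi.add_apply] at hfin
  rw [integral_add (hc _ _ _) hI2, integral_add (hc _ _ _) hI1, integral_add (hc _ _ _) hIA,
    hci _ _ _ (by linarith), hci _ _ _ (by linarith), hci _ _ _ (by linarith)] at hfin
  have hβR : 2 * β ≤ W / 4 := by linarith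
  linarith [hfin, hlayer]

/-! ### Derivatives along slopes, and almost maximal ones -/

/-- Dependent choice along a relation, with an invariant. -/
lemma exists_seq_rel {S : Type*} (Inv : ℕ → S → Prop) (Rel : ℕ → S → S → Prop)
    (h0 : ∃ s, Inv 0 s) (hs : ∀ n s, Inv n s → ∃ s', Inv (n + 1) s' ∧ Rel n s s') :
    ∃ F : ℕ → S, (∀ n, Inv n (F n)) ∧ ∀ n, Rel n (F n) (F (n + 1)) := by
  classical
  choose s0 hs0 using h0
  choose! g hg using hs
  let F : ℕ → S := fun n => Nat.rec s0 (fun n s => g n s) n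
  have hF : ∀ n, Inv n (F n) := by
    intro n
    induction n with
    | zero => exact hs0
    | succ n ih => exact (hg n _ ih).1
  exact ⟨F, hF, fun n => (hg n _ (hF n)).2⟩

/-- The direction `(m, 1)` of slope `m` (over the second axis). It has unit sup norm for
`|m| ≤ 1`. -/
def dir (m : ℝ) : ℝ × ℝ := (m, 1)

lemma norm_smul_dir_sub (s m m' : ℝ) : ‖s • dir m - s • dir m'‖ = |s| * |m - m'| := by
  simp [dir, Prod.norm_def, ← mul_sub]
  positivity

/-- A point `x` together with a slope `m` and a candidate `D` for the derivative of a function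
along `dir m` at `x`. -/
structure Tri where
  /-- the base point -/
  x : ℝ × ℝ
  /-- the slope -/
  m : ℝ
  /-- the directional derivative -/
  D : ℝ

/-- `p` records a genuine directional derivative of `f` at a point of `G`, the slope being at
most `η` in absolute value. -/
def IsTri (f : ℝ × ℝ → ℝ) (G : Set (ℝ × ℝ)) (η : ℝ) (p : Tri) : Prop :=
  |p.m| ≤ η ∧ p.x ∈ G ∧ HasDerivAt (fun s : ℝ => f (p.x + s • dir p.m)) p.D 0

/-- The increments of `f` from `x'` and from `p.x` along `dir p.m` differ by at most `B |s|`. -/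
def Near (f : ℝ × ℝ → ℝ) (p : Tri) (x' : ℝ × ℝ) (B : ℝ) : Prop :=
  ∀ s : ℝ, |f (x' + s • dir p.m) - f x' - (f (p.x + s • dir p.m) - f p.x)| ≤ B * |s|

/-- The quantity to be almost maximized: the derivative minus a penalty of the slope. -/
def Theta (P : ℝ → ℝ) (p : Tri) : ℝ := p.D - P p.m

/-- The admissible competitors of `p`: nearby triples which do not decrease `Theta P`, and from
whose base point `f` looks similar, along `dir p.m`, up to an error `1000 (σ' + √a)` with `σ' < σ`
and `a` the gain in `Theta P`. -/
def DD (f : ℝ × ℝ → ℝ) (G : Set (ℝ × ℝ)) (η : ℝ) (P : ℝ → ℝ) (p : Tri) (δ σ : ℝ) : Set Tri :=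
  {p' | IsTri f G η p' ∧ ‖p'.x - p.x‖ < δ ∧ Theta P p ≤ Theta P p' ∧
    ∃ σ' < σ, Near f p p'.x (1000 * (σ' + √(Theta P p' - Theta P p)))}

lemma IsTri.eps {f : ℝ × ℝ → ℝ} {G : Set (ℝ × ℝ)} {η : ℝ} {p : Tri} (hp : IsTri f G η p)
    {ε : ℝ} (hε : 0 < ε) : ∃ τ > 0, ∀ s : ℝ, |s| < τ →
      |f (p.x + s • dir p.m) - f p.x - p.D * s| ≤ ε * |s| := by
  have h := hp.2.2
  rw [hasDerivAt_iff_isLittleO_nhds_zero] at h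
  have h2 := h.def hε
  obtain ⟨τ, hτ, h3⟩ := Metric.eventually_nhds_iff.mp h2
  refine ⟨τ, hτ, fun s hs => ?_⟩
  have := h3 (y := s) (by simpa using hs)
  simpa [mul_comm] using this

/-- An increase of the gain from `a` to `a + b` leaves room for an additional error `b`. -/
lemma sqrt_gain {a b : ℝ} (ha : 0 ≤ a) (hb : 0 ≤ b) (hab : a + b ≤ 4) :
    1000 * √a + b ≤ 1000 * √(a + b) := by
  have e1 := Real.sq_sqrt ha
  have e2 := Real.sq_sqrt (show 0 ≤ a + b by linarith)
  have e3 : √a ≤ √(a + b) := Real.sqrt_le_sqrt (by linarith)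
  have e4 : √(a + b) ≤ 2 := by
    rw [Real.sqrt_le_left (by norm_num)]; linarith
  have e5 : b = (√(a + b) - √a) * (√(a + b) + √a) := by linarith
  have e6 : (√(a + b) - √a) * (√(a + b) + √a) ≤ (√(a + b) - √a) * 1000 :=
    mul_le_mul_of_nonneg_left (by linarith) (by linarith)
  linarith

section
variable {f : ℝ × ℝ → ℝ} {κ : ℝ}

lemma lip_dir (hf : ∀ x y, |f x - f y| ≤ κ * ‖x - y‖) (x : ℝ × ℝ) (s m m' : ℝ) :
    |f (x + s • dir m) - f (x + s • dir m')| ≤ κ * |m - m'| * |s| := by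
  refine (hf _ _).trans (le_of_eq ?_)
  rw [add_sub_add_left_eq_sub, norm_smul_dir_sub]; ring

lemma IsTri.abs_D_le (hf : ∀ x y, |f x - f y| ≤ κ * ‖x - y‖) (hκ : 0 ≤ κ)
    {G : Set (ℝ × ℝ)} {η : ℝ} (hη : η ≤ 1) {p : Tri} (hp : IsTri f G η p) : |p.D| ≤ κ := by
  have := hp.2.2.le_of_lipschitz (C := κ.toNNReal) (LipschitzWith.of_dist_le_mul fun s t => by
    rw [Real.dist_eq, Real.coe_toNNReal _ hκ, Real.dist_eq]
    refine (hf _ _).trans ?_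
    rw [add_sub_add_left_eq_sub, ← sub_smul, norm_smul, Real.norm_eq_abs]
    have : ‖dir p.m‖ ≤ 1 := by
      simp [dir, Prod.norm_def]; exact hp.1.trans hη
    have h2 : |s - t| * ‖dir p.m‖ ≤ |s - t| * 1 := by gcongr
    nlinarith)
  simpa [Real.coe_toNNReal _ hκ] using this

set_option maxHeartbeats 1000000 in
/-- Passing from `p₀` to an admissible competitor `p` and adding a nonnegative penalty `Q`
vanishing at `p` only shrinks the set of competitors, provided the new radius is small. -/
lemma nest (hf : ∀ x y, |f x - f y| ≤ κ * ‖x - y‖) (hκ : 0 ≤ κ) (hκ1 : κ ≤ 1)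
    {G : Set (ℝ × ℝ)} {η : ℝ} (hη : η ≤ 1 / 4) {P Q : ℝ → ℝ}
    (hP : ∀ m m', |m| ≤ η → |m'| ≤ η → |P m - P m'| ≤ |m - m'|) {p₀ p : Tri}
    (hp₀ : IsTri f G η p₀) {δ₀ σ₀ σ : ℝ} (hp : p ∈ DD f G η P p₀ δ₀ σ₀)
    (hQ : ∀ m, 0 ≤ Q m) (hQ0 : Q p.m = 0) (hσ : σ + 2 * |p.m - p₀.m| / 1000 < σ₀) :
    ∃ δ > 0, ∀ δ' ≤ δ, DD f G η (fun m => P m + Q m) p δ' σ ⊆ DD f G η P p₀ δ₀ σ₀ := by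
  obtain ⟨hpT, hpx, hpΘ, σ₁, hσ₁, hpN⟩ := hp
  set μ := |p.m - p₀.m| with hμ
  have hμ0 : 0 ≤ μ := abs_nonneg _
  set M := max σ₁ (σ + 2 * μ / 1000) with hM
  have hMlt : M < σ₀ := max_lt hσ₁ hσ
  set e := (σ₀ - M) / 2 with he
  have he0 : 0 < e := by rw [he]; linarith
  obtain ⟨τ₁, hτ₁, hd⟩ := hpT.eps (ε := 500 * e) (by positivity)
  obtain ⟨τ₂, hτ₂, hd₀⟩ := hp₀.eps (ε := 500 * e) (by positivity)
  set τ := min τ₁ τ₂ with hτ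
  have hτ0 : 0 < τ := lt_min hτ₁ hτ₂
  refine ⟨min (δ₀ - ‖p.x - p₀.x‖) (500 * e * τ), lt_min (by linarith) (by positivity), ?_⟩
  rintro δ' hδ' p' ⟨hT, hx, hΘ, σ₂, hσ₂, hN⟩
  have hδa : δ' ≤ δ₀ - ‖p.x - p₀.x‖ := hδ'.trans (min_le_left _ _)
  have hδb : δ' ≤ 500 * e * τ := hδ'.trans (min_le_right _ _)
  have hQp' := hQ p'.m
  have hΘ' : Theta P p ≤ Theta P p' := by
    simp only [Theta] at hΘ ⊢; rw [hQ0] at hΘ; linarith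
  set a := Theta P p' - Theta P p with ha
  set b := Theta P p - Theta P p₀ with hb
  have ha0 : 0 ≤ a := by rw [ha]; linarith
  have hb0 : 0 ≤ b := by rw [hb]; linarith
  have hab : Theta P p' - Theta P p₀ = a + b := by rw [ha, hb]; ring
  have hsa : √(Theta (fun m => P m + Q m) p' - Theta (fun m => P m + Q m) p) ≤ √a := by
    apply Real.sqrt_le_sqrt
    simp only [ha, Theta]; linarith
  refine ⟨hT, ?_, by linarith, M + e, by rw [he]; linarith, ?_⟩
  · calc ‖p'.x - p₀.x‖ ≤ ‖p'.x - p.x‖ + ‖p.x - p₀.x‖ := norm_sub_le_norm_sub_add_norm_sub _ _ _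
      _ < δ₀ := by linarith
  intro s
  rw [hab]
  have hs0 : 0 ≤ |s| := abs_nonneg s
  rcases le_or_gt τ |s| with hs | hs
  · have h1 := abs_le.mp (hf (p'.x + s • dir p₀.m) (p.x + s • dir p₀.m))
    have h2 := abs_le.mp (hf p'.x p.x)
    have h3 := abs_le.mp (hpN s)
    rw [add_sub_add_right_eq_sub] at h1
    have h4 : κ * ‖p'.x - p.x‖ ≤ 500 * e * |s| := by
      have : ‖p'.x - p.x‖ ≤ 500 * e * |s| := by
        refine hx.le.trans (hδb.trans ?_); gcongr
      exact (mul_le_of_le_one_left (norm_nonneg _) hκ1).trans this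
    have h5 : 1000 * (σ₁ + √b) * |s| + 1000 * e * |s| ≤ 1000 * (M + e + √(a + b)) * |s| := by
      have : √b ≤ √(a + b) := Real.sqrt_le_sqrt (by linarith)
      have h6 : σ₁ ≤ M := le_max_left _ _
      rw [← add_mul]
      exact mul_le_mul_of_nonneg_right (by linarith) hs0
    rw [abs_le]; constructor <;> linarith
  · have h1 := abs_le.mp (hN s)
    have h2 := abs_le.mp (hd s (hs.trans_le (min_le_left _ _)))
    have h3 := abs_le.mp (hd₀ s (hs.trans_le (min_le_right _ _)))
    have h4 := abs_le.mp (lip_dir hf p'.x s p₀.m p.m)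
    rw [abs_sub_comm, ← hμ] at h4
    have hDD : |p.D - p₀.D| ≤ b + μ := by
      have h7 := abs_le.mp (hP p.m p₀.m hpT.1 hp₀.1)
      have : p.D - p₀.D = b + (P p.m - P p₀.m) := by simp only [hb, Theta]; ring
      rw [this, abs_le]; constructor <;> linarith
    have h5 : |p.D * s - p₀.D * s| ≤ (b + μ) * |s| := by
      rw [← sub_mul, abs_mul]; gcongr
    have h5' := abs_le.mp h5
    have hab4 : a + b ≤ 4 := by
      rw [← hab]
      have k1 := abs_le.mp (hT.abs_D_le hf hκ (by linarith))
      have k2 := abs_le.mp (hp₀.abs_D_le hf hκ (by linarith))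
      have k3 := abs_le.mp (hP p'.m p₀.m hT.1 hp₀.1)
      have k4 := abs_sub p'.m p₀.m
      have k5 := hT.1
      have k6 := hp₀.1
      simp only [Theta]; linarith
    have hsq : 1000 * √a + b ≤ 1000 * √(a + b) := sqrt_gain ha0 hb0 hab4
    have hσM : σ + 2 * μ / 1000 ≤ M := le_max_right _ _
    have h6 : κ * μ * |s| ≤ μ * |s| := by
      have : κ * μ ≤ μ := mul_le_of_le_one_left hμ0 hκ1
      gcongr
    have h7 : 1000 * (σ₂ + √(Theta (fun m => P m + Q m) p' - Theta (fun m => P m + Q m) p)) * |s|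
        ≤ 1000 * (σ + √a) * |s| := by gcongr
    have h8 : 1000 * (σ + √a) * |s| + 2 * (μ * |s|) + b * |s| + 2 * (500 * e * |s|)
        ≤ 1000 * (M + e + √(a + b)) * |s| := by
      have h9 : 1000 * (σ + √a) + 2 * μ + b + 2 * (500 * e) ≤ 1000 * (M + e + √(a + b)) := by
        clear_value a b e μ M
        linarith only [hsq, hσM]
      refine le_trans (le_of_eq ?_) (mul_le_mul_of_nonneg_right h9 hs0)
      ring
    rw [add_mul] at h5'
    obtain ⟨h1a, h1b⟩ := h1
    obtain ⟨h2a, h2b⟩ := h2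
    obtain ⟨h3a, h3b⟩ := h3
    obtain ⟨h4a, h4b⟩ := h4
    obtain ⟨h5a, h5b⟩ := h5'
    rw [abs_le]
    constructor <;> linarith only [h1a, h1b, h2a, h2b, h3a, h3b, h4a, h4b, h5a, h5b, h6, h7, h8]

end

/-! ### Almost maximal triples -/

section

lemma approx_max {f : ℝ × ℝ → ℝ} {κ η : ℝ} {G : Set (ℝ × ℝ)}
    (hf : ∀ x y, |f x - f y| ≤ κ * ‖x - y‖) (hκ : 0 ≤ κ) (hη : η ≤ 1) {P : ℝ → ℝ}
    (hP : ∀ m m', |m| ≤ η → |m'| ≤ η → |P m - P m'| ≤ |m - m'|) {S : Set Tri}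
    (hS : ∀ p ∈ S, IsTri f G η p) (hne : S.Nonempty) {l : ℝ} (hl : 0 < l) :
    ∃ p ∈ S, ∀ p' ∈ S, Theta P p' ≤ Theta P p + l := by
  obtain ⟨q, hq⟩ := hne
  have hbdd : BddAbove (Theta P '' S) := by
    refine ⟨κ - P q.m + 2, ?_⟩
    rintro _ ⟨p, hp, rfl⟩
    have h1 := abs_le.mp ((hS p hp).abs_D_le hf hκ hη)
    have h2 := abs_le.mp (hP p.m q.m (hS p hp).1 (hS q hq).1)
    have h3 := abs_sub p.m q.m
    have h4 := (hS p hp).1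
    have h5 := (hS q hq).1
    simp only [Theta]; linarith
  obtain ⟨_, ⟨p, hp, rfl⟩, h⟩ := exists_lt_of_lt_csSup (⟨_, mem_image_of_mem _ hq⟩)
    (show sSup (Theta P '' S) - l < sSup (Theta P '' S) by linarith)
  exact ⟨p, hp, fun p' hp' => by linarith [le_csSup hbdd (mem_image_of_mem (Theta P) hp')]⟩

/-- One stage of the iterative optimization: the penalty `P`, the current almost maximizer `p`,
the set `S` of competitors in which it was chosen, and the ball `B(c, δ)` containing `p.x`. -/
structure St where
  /-- the penalty -/
  P : ℝ → ℝ
  /-- the almost maximizer -/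
  p : Tri
  /-- the set of competitors -/
  S : Set Tri
  /-- the centre of the localizing ball -/
  c : ℝ × ℝ
  /-- the radius of the localizing ball -/
  δ : ℝ

/-- The weight of the penalty added at stage `n`. -/
def tt (n : ℕ) : ℝ := (1 / 2) ^ (n + 2)

/-- The tolerance in the comparison condition at stage `n`. -/
def sg (n : ℕ) : ℝ := (1 / 4) ^ n

/-- The accuracy of the almost maximum at stage `n`. -/
def lam (η : ℝ) (n : ℕ) : ℝ := tt n * (η / 5 * sg n) ^ 2

lemma tt_pos (n : ℕ) : 0 < tt n := by unfold tt; positivity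
lemma sg_pos (n : ℕ) : 0 < sg n := by unfold sg; positivity
lemma lam_pos {η : ℝ} (hη : 0 < η) (n : ℕ) : 0 < lam η n := by
  have := tt_pos n; have := sg_pos n; unfold lam; positivity

/-- The properties of a stage preserved by the iteration. By `hstab` the class of competitors of
`p` for the penalty to be used next lies in `S`, if it is localized enough. -/
structure StInv (f : ℝ × ℝ → ℝ) (G : Set (ℝ × ℝ)) (η : ℝ) (n : ℕ) (s : St) : Prop where
  hP : ∀ m m', |m| ≤ η → |m'| ≤ η → |s.P m - s.P m'| ≤ (1 - (1 / 2) ^ (n + 1)) * |m - m'|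
  hS : ∀ p ∈ s.S, IsTri f G η p
  hp : s.p ∈ s.S
  hmax : ∀ p' ∈ s.S, Theta s.P p' ≤ Theta s.P s.p + lam η n
  hx : s.p.x ∈ ball s.c s.δ
  hstab : ∃ δ > 0, ∀ δ' ≤ δ, DD f G η (fun m => s.P m + tt n * (m - s.p.m) ^ 2) s.p δ' (sg n) ⊆ s.S
  h0 : n = 0 → s.P = (fun m => m ^ 2 / 2) ∧ s.S = {p | IsTri f G η p}

/-- The relation between consecutive stages. -/
structure StRel (f : ℝ × ℝ → ℝ) (G : Set (ℝ × ℝ)) (O : ℕ → Set (ℝ × ℝ)) (η : ℝ) (n : ℕ)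
    (s s' : St) : Prop where
  hP : s'.P = fun m => s.P m + tt n * (m - s.p.m) ^ 2
  hS : s'.S = DD f G η s'.P s.p s'.δ (sg n)
  hsub : s'.S ⊆ s.S
  hc : s'.c = s.p.x
  hO : closedBall s.p.x s'.δ ⊆ O n
  hball : closedBall s.p.x s'.δ ⊆ ball s.c s.δ
  hδ : s'.δ ≤ (1 / 2) ^ n
  hδ0 : 0 < s'.δ

lemma StInv.hP1 {f : ℝ × ℝ → ℝ} {G : Set (ℝ × ℝ)} {η : ℝ} {n : ℕ} {s : St}
    (h : StInv f G η n s) (m m' : ℝ) (hm : |m| ≤ η) (hm' : |m'| ≤ η) :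
    |s.P m - s.P m'| ≤ |m - m'| := by
  refine (h.hP m m' hm hm').trans ?_
  have : (0:ℝ) ≤ (1 / 2) ^ (n + 1) := by positivity
  nlinarith [abs_nonneg (m - m')]

variable {f : ℝ × ℝ → ℝ} {κ η : ℝ} {G : Set (ℝ × ℝ)} {O : ℕ → Set (ℝ × ℝ)}

/-- The new maximizer beats the old one for the new penalty, and the old one was almost maximal for
the old penalty, so the slopes cannot differ by much. -/
lemma stage_m (hη : 0 < η) {n : ℕ} {s s' : St} (h : StInv f G η n s)
    (h' : s'.p ∈ s'.S) (hr : StRel f G O η n s s') : |s'.p.m - s.p.m| ≤ η / 5 * sg n := by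
  have h1 := h.hmax _ (hr.hsub h')
  have h2 := h'
  rw [hr.hS] at h2
  have h3 := h2.2.2.1
  rw [hr.hP] at h3
  simp only [Theta] at h1 h3
  have h4 : tt n * (s'.p.m - s.p.m) ^ 2 ≤ tt n * (η / 5 * sg n) ^ 2 := by
    have : lam η n = tt n * (η / 5 * sg n) ^ 2 := rfl
    simp only [sub_self] at h3
    linarith
  have h5 := le_of_mul_le_mul_left h4 (tt_pos n)
  have := sg_pos n
  exact abs_le_of_sq_le_sq h5 (by positivity)

/-- The next stage exists: the penalty is increased, the new class of competitors is localized, and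
an almost maximizer is chosen in it. -/
lemma stage_step (hf : ∀ x y, |f x - f y| ≤ κ * ‖x - y‖) (hκ : 0 ≤ κ) (hκ1 : κ ≤ 1)
    (hη : 0 < η) (hη4 : η ≤ 1 / 4) (hO : ∀ n, IsOpen (O n)) (hG : ∀ n, G ⊆ O n) (n : ℕ) (s : St)
    (h : StInv f G η n s) : ∃ s', StInv f G η (n + 1) s' ∧ StRel f G O η n s s' := by
  obtain ⟨δ₁, hδ₁, hst⟩ := h.hstab
  have hpT := h.hS _ h.hp
  obtain ⟨δ₂, hδ₂, hb₂⟩ := Metric.nhds_basis_closedBall.mem_iff.mp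
    ((hO n).mem_nhds (hG n hpT.2.1))
  obtain ⟨δ₃, hδ₃, hb₃⟩ := Metric.nhds_basis_closedBall.mem_iff.mp
    (isOpen_ball.mem_nhds h.hx)
  set δ := min (min δ₁ δ₂) (min δ₃ ((1 / 2) ^ n)) with hδdef
  have hδ0 : 0 < δ := lt_min (lt_min hδ₁ hδ₂) (lt_min hδ₃ (by positivity))
  set P' : ℝ → ℝ := fun m => s.P m + tt n * (m - s.p.m) ^ 2 with hP'
  have hP'L : ∀ m m', |m| ≤ η → |m'| ≤ η →
      |P' m - P' m'| ≤ (1 - (1 / 2) ^ (n + 1 + 1)) * |m - m'| := by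
    intro m m' hm hm'
    have e1 : P' m - P' m' = (s.P m - s.P m') + tt n * ((m - m') * (m + m' - 2 * s.p.m)) := by
      simp only [hP']; ring
    have e2 : |m + m' - 2 * s.p.m| ≤ 1 := by
      have a1 := abs_le.mp hm
      have a2 := abs_le.mp hm'
      have a3 := abs_le.mp hpT.1
      rw [abs_le]; constructor <;> linarith
    have e3 : |tt n * ((m - m') * (m + m' - 2 * s.p.m))| ≤ tt n * |m - m'| := by
      rw [abs_mul, abs_of_pos (tt_pos n), abs_mul]
      exact mul_le_mul_of_nonneg_left (mul_le_of_le_one_right (abs_nonneg _) e2) (tt_pos n).le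
    rw [e1]
    refine (abs_add_le _ _).trans ((add_le_add (h.hP m m' hm hm') e3).trans (le_of_eq ?_))
    unfold tt; ring
  set S' := DD f G η P' s.p δ (sg n) with hS'
  have hself : s.p ∈ S' := by
    refine ⟨hpT, by simpa using hδ0, le_rfl, 0, sg_pos n, ?_⟩
    intro t; simp
  have hS'T : ∀ p ∈ S', IsTri f G η p := fun p hp => hp.1
  have hP'1 : ∀ m m', |m| ≤ η → |m'| ≤ η → |P' m - P' m'| ≤ |m - m'| := by
    intro m m' hm hm'
    refine (hP'L m m' hm hm').trans ?_
    have : (0:ℝ) ≤ (1 / 2) ^ (n + 1 + 1) := by positivity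
    nlinarith [abs_nonneg (m - m')]
  obtain ⟨q, hq, hqmax⟩ := approx_max hf hκ (by linarith) hP'1 hS'T ⟨_, hself⟩ (lam_pos hη (n + 1))
  have hrel : StRel f G O η n s ⟨P', q, S', s.p.x, δ⟩ :=
    { hP := rfl
      hS := rfl
      hsub := hst δ ((min_le_left _ _).trans (min_le_left _ _))
      hc := rfl
      hO := (closedBall_subset_closedBall ((min_le_left _ _).trans (min_le_right _ _))).trans hb₂
      hball := (closedBall_subset_closedBall ((min_le_right _ _).trans (min_le_left _ _))).trans hb₃
      hδ := (min_le_right _ _).trans (min_le_right _ _)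
      hδ0 := hδ0 }
  refine ⟨⟨P', q, S', s.p.x, δ⟩, ?_, hrel⟩
  have hm := stage_m hη h hq hrel
  refine ⟨hP'L, hS'T, hq, hqmax, ?_, ?_, by simp⟩
  · exact mem_ball_iff_norm.mpr hq.2.1
  · refine nest hf hκ hκ1 hη4 hP'1 hpT hq (Q := fun m => tt (n + 1) * (m - q.m) ^ 2) ?_ ?_ ?_
    · intro m; have := tt_pos (n + 1); positivity
    · simp
    · have : sg (n + 1) = sg n / 4 := by unfold sg; ring
      have := sg_pos n
      simp only at hm
      nlinarith

end

/-! ### The limit triple -/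

section

variable {f : ℝ × ℝ → ℝ} {κ η : ℝ} {G : Set (ℝ × ℝ)} {O : ℕ → Set (ℝ × ℝ)}

lemma near_of_mem_le {P : ℝ → ℝ} {p q : Tri} {δ σ l : ℝ} (hq : q ∈ DD f G η P p δ σ)
    (hl : Theta P q ≤ Theta P p + l) : Near f p q.x (1000 * (σ + √l)) := by
  obtain ⟨-, -, -, σ', hσ', hN⟩ := hq
  intro s
  refine (hN s).trans ?_
  have : √(Theta P q - Theta P p) ≤ √l := Real.sqrt_le_sqrt (by linarith)
  gcongr

/-- A limit of almost maximal triples is maximal in a strong sense: any triple `p'` near `p` whose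
derivative exceeds that of `p`, by `a ≥ ε` after subtracting a fixed quadratic function of the
slope, must look different from `p` in the sense of `Near` at level `500 √a`. -/
theorem optimal (hf : ∀ x y, |f x - f y| ≤ κ * ‖x - y‖) (hκ : 0 ≤ κ) (hη : 0 < η) (hη4 : η ≤ 1 / 4)
    (hκη : κ ≤ η ^ 2 / 100) (hO : ∀ n, IsOpen (O n)) (hG : G = ⋂ n, O n)
    (hne : ∃ p, IsTri f G η p ∧ p.m = 0) :
    ∃ p P1, IsTri f G η p ∧ |p.m| ≤ η / 2 ∧ |P1| ≤ 1 ∧ ∀ ε > 0, ∃ δ > 0, ∀ p', IsTri f G η p' →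
      ‖p'.x - p.x‖ < δ → ∀ a, a = p'.D - p.D - (P1 * (p'.m - p.m) + (p'.m - p.m) ^ 2) → ε ≤ a →
        ¬ Near f p p'.x (500 * √a) := by
  have hκ1 : κ ≤ 1 := by nlinarith
  have hGO : ∀ n, G ⊆ O n := fun n => hG ▸ iInter_subset _ n
  obtain ⟨q, hq, hq0⟩ := hne
  have hinit : ∃ s, StInv f G η 0 s := by
    have hP0 : ∀ m m' : ℝ, |m| ≤ η → |m'| ≤ η → |m ^ 2 / 2 - m' ^ 2 / 2| ≤ 1 / 2 * |m - m'| := by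
      intro m m' hm hm'
      have e1 : m ^ 2 / 2 - m' ^ 2 / 2 = (m + m') / 2 * (m - m') := by ring
      have e2 : |(m + m') / 2| ≤ 1 / 2 := by
        have a1 := abs_le.mp hm
        have a2 := abs_le.mp hm'
        rw [abs_le]; constructor <;> linarith
      rw [e1, abs_mul]; gcongr
    obtain ⟨p, hp, hmax⟩ := approx_max (P := fun m => m ^ 2 / 2) (S := {p | IsTri f G η p})
      (η := η) hf hκ (by linarith)
      (fun m m' hm hm' => (hP0 m m' hm hm').trans (by linarith [abs_nonneg (m - m')]))
      (fun p hp => hp) ⟨q, hq⟩ (lam_pos hη 0)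
    refine ⟨⟨fun m => m ^ 2 / 2, p, {p | IsTri f G η p}, p.x, 1⟩, ?_, fun p hp => hp, hp, hmax, ?_,
      ⟨1, one_pos, fun δ _ p' hp' => hp'.1⟩, by simp⟩
    · intro m m' hm hm'
      refine (hP0 m m' hm hm').trans (le_of_eq ?_)
      norm_num
    · simp
  obtain ⟨F, hF, hR⟩ := exists_seq_rel (StInv f G η) (StRel f G O η) hinit
    (stage_step hf hκ hκ1 hη hη4 hO hGO)
  set p : ℕ → Tri := fun n => (F n).p with hp
  set P : ℕ → ℝ → ℝ := fun n => (F n).P with hPdef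
  have hT : ∀ n, IsTri f G η (p n) := fun n => (hF n).hS _ (hF n).hp
  have hSanti : Antitone fun n => (F n).S := antitone_nat_of_succ_le fun n => (hR n).hsub
  have hmem : ∀ k n, k ≤ n → p n ∈ (F k).S := fun k n hkn => hSanti hkn (hF n).hp
  have hPsucc : ∀ n m, P (n + 1) m = P n m + tt n * (m - (p n).m) ^ 2 := fun n m => by
    simp only [hPdef, (hR n).hP]; rfl
  have hPdiag : ∀ n, Theta (P (n + 1)) (p n) = Theta (P n) (p n) := by
    intro n; simp [Theta, hPsucc]
  have hPmono : ∀ n p', Theta (P (n + 1)) p' ≤ Theta (P n) p' := by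
    intro n p'
    have := tt_pos n
    simp only [Theta, hPsucc]
    have : 0 ≤ tt n * (p'.m - (p n).m) ^ 2 := by positivity
    linarith
  have hDD : ∀ k n, k < n → p n ∈ DD f G η (P (k + 1)) (p k) (F (k + 1)).δ (sg k) := by
    intro k n hkn
    have h1 := hmem (k + 1) n hkn
    rwa [(hR k).hS] at h1
  have hΘle : ∀ k n, k < n → Theta (P (k + 1)) (p n) ≤ Theta (P (k + 1)) (p k) + lam η k := by
    intro k n hkn
    rw [hPdiag]
    exact (hPmono k _).trans ((hF k).hmax _ (hmem k n hkn.le))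
  -- convergence of the base points
  have hxdist : ∀ k n, k < n → ‖(p n).x - (p k).x‖ ≤ (1 / 2) ^ k := fun k n hkn =>
    (hDD k n hkn).2.1.le.trans (hR k).hδ
  have hxC : CauchySeq fun n => (p n).x := by
    refine cauchySeq_of_le_geometric (1 / 2) 1 (by norm_num) fun n => ?_
    rw [dist_eq_norm, norm_sub_rev, one_mul]
    exact hxdist n (n + 1) n.lt_succ_self
  obtain ⟨x, hx⟩ := cauchySeq_tendsto_of_complete hxC
  have hxcl : ∀ k, x ∈ closedBall (p k).x (F (k + 1)).δ := by
    intro k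
    refine isClosed_closedBall.mem_of_tendsto hx ?_
    filter_upwards [eventually_gt_atTop k] with n hn
    exact mem_closedBall_iff_norm.mpr (hDD k n hn).2.1.le
  have hxball : ∀ k, x ∈ ball (p k).x (F (k + 1)).δ := by
    intro k
    have h1 := (hR (k + 1)).hball (hxcl (k + 1))
    rwa [(hR k).hc] at h1
  have hxG : x ∈ G := by
    rw [hG]; exact mem_iInter.mpr fun n => (hR n).hO (hxcl n)
  -- convergence of the slopes
  have hmstep : ∀ n, |(p (n + 1)).m - (p n).m| ≤ η / 5 * sg n := fun n =>
    stage_m hη (hF n) (hF (n + 1)).hp (hR n)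
  have hmC : CauchySeq fun n => (p n).m := by
    refine cauchySeq_of_le_geometric (1 / 4) (η / 5) (by norm_num) fun n => ?_
    rw [Real.dist_eq, abs_sub_comm]
    exact hmstep n
  obtain ⟨m, hm⟩ := cauchySeq_tendsto_of_complete hmC
  have hmη : |m| ≤ η := le_of_tendsto hm.abs (Eventually.of_forall fun n => (hT n).1)
  have hmdist : Tendsto (fun n => |(p n).m - m|) atTop (𝓝 0) := by
    have := (hm.sub_const m).abs
    simpa using this
  -- the comparison with the limit point
  set B : ℕ → ℝ := fun k => 1000 * (sg k + √(lam η k)) with hB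
  have hsg0 : Tendsto sg atTop (𝓝 0) :=
    tendsto_pow_atTop_nhds_zero_of_lt_one (by norm_num) (by norm_num)
  have htt0 : Tendsto tt atTop (𝓝 0) :=
    (tendsto_add_atTop_iff_nat 2).mpr
      (tendsto_pow_atTop_nhds_zero_of_lt_one (r := (1 / 2 : ℝ)) (by norm_num) (by norm_num))
  have hlam0 : Tendsto (lam η) atTop (𝓝 0) := by
    have := htt0.mul ((hsg0.const_mul (η / 5)).pow 2)
    rw [zero_mul] at this
    exact this
  have hB0 : Tendsto B atTop (𝓝 0) := by
    have := (hsg0.add hlam0.sqrt).const_mul 1000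
    simpa [hB] using this
  have hcont : Continuous f := by
    refine (LipschitzWith.of_dist_le_mul (K := κ.toNNReal) fun a b => ?_).continuous
    rw [Real.dist_eq, Real.coe_toNNReal _ hκ, dist_eq_norm]; exact hf a b
  have hNx : ∀ k, Near f (p k) x (B k) := by
    intro k s
    have h1 : Tendsto (fun n => |f ((p n).x + s • dir (p k).m) - f (p n).x
        - (f ((p k).x + s • dir (p k).m) - f (p k).x)|) atTop
        (𝓝 |f (x + s • dir (p k).m) - f x - (f ((p k).x + s • dir (p k).m) - f (p k).x)|) := by
      refine Tendsto.abs (Tendsto.sub_const (Tendsto.sub ?_ ?_) _)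
      · exact (hcont.tendsto _).comp (hx.add_const _)
      · exact (hcont.tendsto _).comp hx
    refine le_of_tendsto h1 ?_
    filter_upwards [eventually_gt_atTop k] with n hn
    exact near_of_mem_le (hDD k n hn) (hΘle k n hn) s
  -- along the limit slope
  have hNm : ∀ k (s : ℝ), |f (x + s • dir m) - f x - (f ((p k).x + s • dir (p k).m) - f (p k).x)| ≤
      (B k + κ * |(p k).m - m|) * |s| := by
    intro k s
    have h1 := abs_le.mp (hNx k s)
    have h2 := abs_le.mp (lip_dir hf x s (p k).m m)
    rw [add_mul, abs_le]; constructor <;> linarith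
  set b : ℕ → ℝ := fun k => B k + κ * |(p k).m - m| + sg k with hb
  have hb0 : Tendsto b atTop (𝓝 0) := by
    have := (hB0.add (hmdist.const_mul κ)).add hsg0
    simpa [hb] using this
  have hNd : ∀ k, ∃ τ > 0, ∀ s : ℝ, |s| < τ → |f (x + s • dir m) - f x - (p k).D * s| ≤ b k * |s| := by
    intro k
    obtain ⟨τ, hτ, h⟩ := (hT k).eps (sg_pos k)
    refine ⟨τ, hτ, fun s hs => ?_⟩
    have h1 := abs_le.mp (h s hs)
    have h2 := abs_le.mp (hNm k s)
    simp only [hb]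
    rw [add_mul, abs_le]; constructor <;> linarith
  have hDd : ∀ k j, |(p k).D - (p j).D| ≤ b k + b j := by
    intro k j
    obtain ⟨τ, hτ, h⟩ := hNd k
    obtain ⟨τ', hτ', h'⟩ := hNd j
    set s := min τ τ' / 2
    have hs : 0 < s := half_pos (lt_min hτ hτ')
    have hs1 : |s| < τ := by
      rw [abs_of_pos hs]; have := min_le_left τ τ'; simp only [s]; linarith
    have hs2 : |s| < τ' := by
      rw [abs_of_pos hs]; have := min_le_right τ τ'; simp only [s]; linarith
    have h1 := abs_le.mp (h s hs1)
    have h2 := abs_le.mp (h' s hs2)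
    rw [abs_of_pos hs] at h1 h2
    have h3 : |((p k).D - (p j).D) * s| ≤ (b k + b j) * s := by
      rw [abs_le]; constructor <;> linarith
    rw [abs_mul, abs_of_pos hs] at h3
    exact le_of_mul_le_mul_right h3 hs
  have hDC : CauchySeq fun n => (p n).D := by
    rw [Metric.cauchySeq_iff]
    intro ε hε
    obtain ⟨N, hN⟩ := (hb0.eventually (gt_mem_nhds (half_pos hε))).exists_forall_of_atTop
    refine ⟨N, fun k hk j hj => ?_⟩
    rw [Real.dist_eq]
    linarith [hDd k j, hN k hk, hN j hj]
  obtain ⟨D, hD⟩ := cauchySeq_tendsto_of_complete hDC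
  have hDdist : Tendsto (fun n => |(p n).D - D|) atTop (𝓝 0) := by
    have := (hD.sub_const D).abs
    simpa using this
  have hderiv : HasDerivAt (fun s : ℝ => f (x + s • dir m)) D 0 := by
    rw [hasDerivAt_iff_isLittleO_nhds_zero, Asymptotics.isLittleO_iff]
    intro ε hε
    obtain ⟨k, hk⟩ := ((hb0.add hDdist).eventually (gt_mem_nhds (by simpa using hε))).exists
    obtain ⟨τ, hτ, h⟩ := hNd k
    filter_upwards [Metric.ball_mem_nhds (0:ℝ) hτ] with s hs
    have h1 := abs_le.mp (h s (by simpa using hs))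
    have h2 : |((p k).D - D) * s| ≤ |(p k).D - D| * |s| := by rw [abs_mul]
    have h2' := abs_le.mp h2
    have h3 : (b k + |(p k).D - D|) * |s| ≤ ε * |s| := by gcongr
    simp only [zero_add, zero_smul, add_zero, smul_eq_mul, Real.norm_eq_abs]
    rw [abs_le]; constructor <;> linarith
  have hTx : IsTri f G η ⟨x, m, D⟩ := ⟨hmη, hxG, hderiv⟩
  -- the limit penalty
  have hsumt : Summable tt := by
    have := (summable_geometric_of_lt_one (r := (1 / 2 : ℝ)) (by norm_num) (by norm_num))
    exact (summable_nat_add_iff 2).mpr this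
  have htsum : ∑' n, tt n = 1 / 2 := by
    have h1 := tsum_geometric_of_lt_one (r := (1 / 2 : ℝ)) (by norm_num) (by norm_num)
    have h2 : ∀ n, tt n = (1 / 2) ^ n * (1 / 4) := fun n => by unfold tt; ring
    simp_rw [h2]; rw [tsum_mul_right, h1]; norm_num
  have hPfin : ∀ n m', P n m' = m' ^ 2 / 2 + ∑ j ∈ Finset.range n, tt j * (m' - (p j).m) ^ 2 := by
    intro n m'
    induction n with
    | zero => simp [hPdef, ((hF 0).h0 rfl).1]
    | succ n ih => rw [hPsucc, ih, Finset.sum_range_succ]; ring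
  have hs1 : Summable fun j => tt j * (p j).m := by
    refine Summable.of_norm_bounded hsumt fun j => ?_
    rw [Real.norm_eq_abs, abs_mul, abs_of_pos (tt_pos j)]
    exact mul_le_of_le_one_right (tt_pos j).le ((hT j).1.trans (by linarith))
  have hs2 : Summable fun j => tt j * (p j).m ^ 2 := by
    refine Summable.of_norm_bounded hsumt fun j => ?_
    rw [Real.norm_eq_abs, abs_mul, abs_of_pos (tt_pos j), abs_pow]
    exact mul_le_of_le_one_right (tt_pos j).le
      (pow_le_one₀ (abs_nonneg _) ((hT j).1.trans (by linarith)))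
  set M1 := ∑' j, tt j * (p j).m with hM1
  set M2 := ∑' j, tt j * (p j).m ^ 2 with hM2
  set Q : ℝ → ℝ := fun m' => m' ^ 2 - 2 * M1 * m' + M2 with hQ
  have hQsum : ∀ m', HasSum (fun j => tt j * (m' - (p j).m) ^ 2) (Q m' - m' ^ 2 / 2) := by
    intro m'
    have h1 := ((hsumt.hasSum.mul_left (m' ^ 2)).sub (hs1.hasSum.mul_left (2 * m'))).add hs2.hasSum
    rw [htsum] at h1
    have e1 : (fun j => tt j * (m' - (p j).m) ^ 2) =
        fun j => m' ^ 2 * tt j - 2 * m' * (tt j * (p j).m) + tt j * (p j).m ^ 2 := by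
      funext j; ring
    have e2 : Q m' - m' ^ 2 / 2 = m' ^ 2 * (1 / 2) - 2 * m' * M1 + M2 := by
      simp only [hQ]; ring
    rw [e1, e2]
    exact h1
  have hPQ : ∀ m', Tendsto (fun n => P n m') atTop (𝓝 (Q m')) := by
    intro m'
    have h1 := ((hQsum m').tendsto_sum_nat).const_add (m' ^ 2 / 2)
    rw [add_sub_cancel] at h1
    exact h1.congr fun n => (hPfin n m').symm
  have hPleQ : ∀ n m', P n m' ≤ Q m' := by
    intro n m'
    rw [hPfin]
    have h1 : ∑ j ∈ Finset.range n, tt j * (m' - (p j).m) ^ 2 ≤ Q m' - m' ^ 2 / 2 := by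
      rw [← (hQsum m').tsum_eq]
      refine (hQsum m').summable.sum_le_tsum _ fun j _ => ?_
      have := tt_pos j; positivity
    linarith
  have hM1b : |M1| ≤ η / 2 := by
    have h1 : ∀ j, |tt j * (p j).m| ≤ η * tt j := fun j => by
      rw [abs_mul, abs_of_pos (tt_pos j), mul_comm]
      exact mul_le_mul_of_nonneg_right (hT j).1 (tt_pos j).le
    have h2 := tsum_of_norm_bounded (f := fun j => tt j * (p j).m) (hsumt.hasSum.mul_left η)
      (fun j => by rw [Real.norm_eq_abs]; exact h1 j)
    rw [htsum, Real.norm_eq_abs] at h2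
    linarith
  -- the values increase to the value of the limit
  have hmono : Monotone fun n => Theta (P n) (p n) := by
    refine monotone_nat_of_le_succ fun n => ?_
    rw [← hPdiag]
    exact (hDD n (n + 1) n.lt_succ_self).2.2.1
  have hPm : Tendsto (fun n => P n (p n).m) atTop (𝓝 (Q m)) := by
    have h1 : Tendsto (fun n => P n (p n).m - P n m) atTop (𝓝 0) :=
      squeeze_zero_norm (fun n => (hF n).hP1 _ _ (hT n).1 hmη) hmdist
    simpa using h1.add (hPQ m)
  have hΘlim : Tendsto (fun n => Theta (P n) (p n)) atTop (𝓝 (D - Q m)) := hD.sub hPm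
  have hΘup : ∀ n, Theta (P n) (p n) ≤ D - Q m := fun n => hmono.ge_of_tendsto hΘlim n
  refine ⟨⟨x, m, D⟩, 2 * m - 2 * M1, hTx, ?_, ?_, ?_⟩
  · -- the slope of the limit is small since the penalty is
    have h1 : Theta (P 0) q ≤ Theta (P 0) (p 0) + lam η 0 := (hF 0).hmax q (by
      rw [((hF 0).h0 rfl).2]; exact hq)
    have h2 := hΘup 0
    have h3 := abs_le.mp (hq.abs_D_le hf hκ (by linarith))
    have h4 := abs_le.mp (hTx.abs_D_le hf hκ (by linarith))
    have h5 := hPleQ 0 m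
    rw [hPfin] at h5
    have h6 : Theta (P 0) q = q.D := by simp [Theta, hPfin, hq0]
    have h7 : lam η 0 = η ^ 2 / 100 := by unfold lam tt sg; ring
    simp only [Finset.range_zero, Finset.sum_empty, add_zero] at h5
    simp only at h4
    have : m ^ 2 ≤ (η / 2) ^ 2 := by nlinarith
    exact abs_le_of_sq_le_sq this (by positivity)
  · have h1 := abs_le.mp hM1b
    have h2 := abs_le.mp hmη
    rw [abs_le]; constructor <;> linarith
  · intro ε hε
    have hev : ∀ᶠ n in atTop, 2 * κ * |(p n).m - m| + B n < 500 * √ε := by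
      have h1 := (hmdist.const_mul (2 * κ)).add hB0
      refine h1.eventually (gt_mem_nhds ?_)
      have := Real.sqrt_pos.mpr hε
      simpa using this
    obtain ⟨n, hn1, hn2⟩ := (hev.and ((tendsto_add_atTop_iff_nat 1).mpr hlam0 |>.eventually
      (gt_mem_nhds hε))).exists
    have hxn := mem_ball_iff_norm.mp (hxball n)
    refine ⟨(F (n + 1)).δ - ‖x - (p n).x‖, by linarith, ?_⟩
    rintro p' hT' hx' a ha haε hN
    simp only at ha hx'
    have haQ : a = (p'.D - Q p'.m) - (D - Q m) := by rw [ha]; simp only [hQ]; ring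
    have hge : D - Q m + a ≤ Theta (P (n + 1)) p' := by
      have := hPleQ (n + 1) p'.m
      simp only [Theta]; linarith
    have han : a ≤ Theta (P (n + 1)) p' - Theta (P (n + 1)) (p n) := by
      rw [hPdiag]; linarith [hΘup n]
    have hmemS : p' ∈ (F (n + 1)).S := by
      rw [(hR n).hS]
      refine ⟨hT', ?_, by linarith, 0, sg_pos n, fun s => ?_⟩
      · calc ‖p'.x - (p n).x‖ ≤ ‖p'.x - x‖ + ‖x - (p n).x‖ :=
              norm_sub_le_norm_sub_add_norm_sub _ _ _
          _ < _ := by linarith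
      · have h1 := abs_le.mp (hN s)
        have h2 := abs_le.mp (hNx n s)
        have h3 := abs_le.mp (lip_dir hf x s (p n).m m)
        have h4 := abs_le.mp (lip_dir hf p'.x s (p n).m m)
        simp only at h1
        have h5 : √ε ≤ √a := Real.sqrt_le_sqrt haε
        have h6 : √a ≤ √(Theta (P (n + 1)) p' - Theta (P (n + 1)) (p n)) := Real.sqrt_le_sqrt han
        have h7 : (500 * √a + 2 * κ * |(p n).m - m| + B n) * |s| ≤
            1000 * (0 + √(Theta (P (n + 1)) p' - Theta (P (n + 1)) (p n))) * |s| := by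
          refine mul_le_mul_of_nonneg_right ?_ (abs_nonneg s)
          linarith
        rw [add_mul, add_mul] at h7
        have h8 : 2 * κ * |(p n).m - m| * |s| = 2 * (κ * |(p n).m - m| * |s|) := by ring
        rw [h8] at h7
        obtain ⟨h1a, h1b⟩ := h1
        obtain ⟨h2a, h2b⟩ := h2
        obtain ⟨h3a, h3b⟩ := h3
        obtain ⟨h4a, h4b⟩ := h4
        refine le_trans ?_ h7
        rw [abs_le]
        constructor <;> linarith only [h1a, h1b, h2a, h2b, h3a, h3b, h4a, h4b]
    have h9 := (hF (n + 1)).hmax p' hmemS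
    have h10 := hΘup (n + 1)
    linarith

end

/-! ### Broken lines as competitors -/

/-- The part of `τ` in `[-R, 0]`. -/
def cm (R τ : ℝ) : ℝ := max (-R) (min τ 0)

/-- The part of `τ` in `[0, R]`. -/
def cp (R τ : ℝ) : ℝ := min R (max τ 0)

lemma cm_cp_lip {R : ℝ} (hR : 0 < R) (τ τ' : ℝ) :
    |cm R τ - cm R τ'| + |cp R τ - cp R τ'| ≤ |τ - τ'| := by
  wlog h : τ' ≤ τ generalizing τ τ'
  · have := this τ' τ (le_of_not_ge h)
    rwa [abs_sub_comm, abs_sub_comm (cp R τ), abs_sub_comm τ]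
  have h1 : cm R τ' ≤ cm R τ := max_le_max le_rfl (min_le_min h le_rfl)
  have h2 : cp R τ' ≤ cp R τ := min_le_min le_rfl (max_le_max h le_rfl)
  rw [abs_of_nonneg (by linarith), abs_of_nonneg (by linarith), abs_of_nonneg (by linarith)]
  simp only [cm, cp, max_def, min_def]
  split_ifs <;> linarith

lemma cm_nonneg_arg {R τ : ℝ} (hR : 0 < R) (h : 0 ≤ τ) : cm R τ = 0 := by
  simp [cm, min_eq_right h, hR.le]

lemma cm_mid {R τ : ℝ} (h : -R ≤ τ) (h' : τ ≤ 0) : cm R τ = τ := by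
  simp [cm, min_eq_left h', h]

lemma cm_low {R τ : ℝ} (hR : 0 < R) (h : τ ≤ -R) : cm R τ = -R := by
  rw [cm, min_eq_left (by linarith), max_eq_left h]

lemma cp_nonpos_arg {R τ : ℝ} (hR : 0 < R) (h : τ ≤ 0) : cp R τ = 0 := by
  simp [cp, max_eq_right h, hR.le]

lemma cp_mid {R τ : ℝ} (h : 0 ≤ τ) (h' : τ ≤ R) : cp R τ = τ := by
  simp [cp, max_eq_left h, h']

lemma cp_high {R τ : ℝ} (hR : 0 < R) (h : R ≤ τ) : cp R τ = R := by
  rw [cp, max_eq_left (by linarith), min_eq_left h]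

lemma abs_comb_le {a b c d M s : ℝ} (ha : |a| ≤ M) (hb : |b| ≤ M) (h : |c| + |d| ≤ s) :
    |a * c + b * d| ≤ M * s := by
  have hM : 0 ≤ M := (abs_nonneg _).trans ha
  calc |a * c + b * d| ≤ |a| * |c| + |b| * |d| := by
        rw [← abs_mul, ← abs_mul]; exact abs_add_le _ _
    _ ≤ M * |c| + M * |d| := by gcongr
    _ = M * (|c| + |d|) := by ring
    _ ≤ M * s := by gcongr

/-- The increment of a function `φ` from an interior point, where it has the value `φ₀`, to a point
outside `[-R, R]`, compared with the increment to an end `e`: beyond the ends the path is parallel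
to a line on which `f` is known to be almost linear. Here `F`, `Fe` are values of `f`
and `φs`, `φe` values of `φ`, at the parameters `T` and `e`. -/
lemma out_est {ρ R s A T e t₀ F Fe φs φe φ₀ fx D : ℝ} (hρ : 0 < ρ) (hρ24 : ρ ≤ 1 / 24)
    (hs2 : ρ ^ 2 * R ≤ |s|) (k1 : |t₀ + T| ≤ 2 * R + |s|) (k2 : |t₀ + e| ≤ 2 * R)
    (k3 : |F - (fx + D * (t₀ + T))| ≤ ρ ^ 3 / 10 * (R + |t₀ + T|))
    (k4 : |Fe - (fx + D * (t₀ + e))| ≤ ρ ^ 3 / 10 * (R + |t₀ + e|))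
    (k5 : φs - φe = F - Fe - D * (T - e)) (h3 : |φe - φ₀| ≤ A * |s|) :
    |φs - φ₀| ≤ (A + ρ) * |s| := by
  have hs0 := abs_nonneg s
  have hρ3 : 0 < ρ ^ 3 / 10 := by positivity
  have k6 := mul_le_mul_of_nonneg_left k1 hρ3.le
  have k7 := mul_le_mul_of_nonneg_left k2 hρ3.le
  have k8 := mul_le_mul_of_nonneg_left hs2 hρ.le
  have k9 : ρ ^ 3 * |s| ≤ ρ * |s| := by
    refine mul_le_mul_of_nonneg_right ?_ hs0
    exact pow_le_of_le_one hρ.le (by linarith) (by norm_num)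
  have k3' := abs_le.mp k3
  have k4' := abs_le.mp k4
  have h3' := abs_le.mp h3
  rw [add_mul, abs_le]; constructor <;> linarith

set_option maxHeartbeats 1000000 in
/-- If the linear function with derivative `D` along `dir m` and first partial derivative `P₁`
fails to approximate `f` at the nearby rational point `y`, then on a broken line through `y` made
of two segments of rational slopes, both ends of which almost lie on the line through `x` with
slope `m`, there is a point at which the derivative of `f` is too large. -/
lemma competitor {f : ℝ × ℝ → ℝ} {κ η : ℝ} {G : Set (ℝ × ℝ)}
    (hf : ∀ x y, |f x - f y| ≤ κ * ‖x - y‖) (hκ1 : κ ≤ 1 / 100) (hη4 : η ≤ 1 / 4)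
    (hG : ∀ c μ : ℚ, |(μ : ℝ)| ≤ η → ∀ s : ℝ, ((c : ℝ) + μ * s, s) ∈ G)
    {x : ℝ × ℝ} {m D P₁ : ℝ} (hm : |m| ≤ η / 2) (hP₁ : |P₁| ≤ 1) (hD : |D| ≤ κ)
    {ρ : ℝ} (hρ : 0 < ρ) (hρη : ρ ≤ η / 6) {s₁ : ℝ}
    (hder : ∀ s : ℝ, |s| < s₁ → |f (x + s • dir m) - f x - D * s| ≤ ρ ^ 3 / 10 * |s|)
    (y₁ y₂ : ℚ) {R : ℝ} (hR : 0 < R) (hRs : 8 * R ≤ ρ * s₁)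
    (hy1 : |(y₁ : ℝ) - x.1| ≤ ρ * R) (hy2 : |(y₂ : ℝ) - x.2| ≤ ρ * R)
    (hbad : 100 * ρ ^ 2 * R < |f ((y₁ : ℝ), (y₂ : ℝ)) - f x
      - (D * (y₂ - x.2) + P₁ * ((y₁ - x.1) - m * (y₂ - x.2)))|) :
    ∃ p' a, IsTri f G η p' ∧ ‖p'.x - x‖ ≤ 2 * R ∧
      a = p'.D - D - (P₁ * (p'.m - m) + (p'.m - m) ^ 2) ∧ 10 * ρ ^ 2 ≤ a ∧
      Near f ⟨x, m, D⟩ p'.x (500 * √a) := by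
  have hη0 : 0 < η := by linarith
  have hρ24 : ρ ≤ 1 / 24 := by linarith
  have hρ2 : ρ ^ 2 ≤ ρ / 24 := by nlinarith
  have hρ3 : ρ ^ 3 ≤ ρ ^ 2 / 24 := by nlinarith [sq_nonneg ρ]
  have hρ20 : 0 < ρ ^ 2 := by positivity
  have hρ30 : 0 < ρ ^ 3 := by positivity
  set t₀ : ℝ := y₂ - x.2 with ht₀
  set σ : ℝ := (y₁ - x.1) - m * t₀ with hσ
  have hσR : |σ / R| ≤ 2 * ρ := by
    rw [abs_div, abs_of_pos hR, div_le_iff₀ hR]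
    have h1 : |m * t₀| ≤ 1 * (ρ * R) := by
      rw [abs_mul]; gcongr; linarith
    have := abs_sub (y₁ - x.1) (m * t₀)
    linarith
  -- `σ` is the horizontal offset of `y` from the line through `x` of slope `m`; slopes close to
  -- `m ± σ / R` bring the broken line back to that line at the parameters `∓R`.
  obtain ⟨m₁, hm₁a, hm₁b⟩ := exists_rat_btwn (show m + σ / R < m + σ / R + ρ ^ 3 / 10 by linarith)
  obtain ⟨m₂, hm₂a, hm₂b⟩ := exists_rat_btwn (show m - σ / R < m - σ / R + ρ ^ 3 / 10 by linarith)
  have hσR' := abs_le.mp hσR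
  have hd1 : |(m₁ : ℝ) - m| ≤ 3 * ρ := by rw [abs_le]; constructor <;> linarith
  have hd2 : |(m₂ : ℝ) - m| ≤ 3 * ρ := by rw [abs_le]; constructor <;> linarith
  have hm' := abs_le.mp hm
  have hm1η : |(m₁ : ℝ)| ≤ η := by
    have := abs_le.mp hd1; rw [abs_le]; constructor <;> linarith
  have hm2η : |(m₂ : ℝ)| ≤ η := by
    have := abs_le.mp hd2; rw [abs_le]; constructor <;> linarith
  -- the penalty as a function of the slope
  set Q : ℝ → ℝ := fun μ => P₁ * (μ - m) + (μ - m) ^ 2 with hQ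
  have hQb : ∀ μ, |μ - m| ≤ 3 * ρ → |Q μ| ≤ 4 * ρ := by
    intro μ hμ
    have h1 : |P₁ * (μ - m)| ≤ 1 * (3 * ρ) := by rw [abs_mul]; gcongr
    have h2 : |(μ - m) ^ 2| ≤ (3 * ρ) ^ 2 := by rw [abs_pow]; gcongr
    have h3 := abs_add_le (P₁ * (μ - m)) ((μ - m) ^ 2)
    simp only [hQ]; linarith
  have hQ1 := hQb _ hd1
  have hQ2 := hQb _ hd2
  -- the path and the drift
  set pth : ℝ → ℝ × ℝ := fun τ => (y₁ + m * τ + ((m₁ - m) * cm R τ + (m₂ - m) * cp R τ), y₂ + τ)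
    with hpth
  set dr : ℝ → ℝ := fun τ => D * τ + (Q m₁ * cm R τ + Q m₂ * cp R τ) with hdr
  set φ : ℝ → ℝ := fun τ => f (pth τ) - dr τ with hφ
  have hη1 : η ≤ 1 := by linarith
  have hpthd : ∀ τ s, ‖pth (τ + s) - (pth τ + s • dir m)‖ ≤ 3 * ρ * |s| := by
    intro τ s
    have h1 := abs_comb_le hd1 hd2 (cm_cp_lip hR (τ + s) τ)
    rw [add_sub_cancel_left] at h1
    have h2 : pth (τ + s) - (pth τ + s • dir m) = ((m₁ - m) * (cm R (τ + s) - cm R τ)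
        + (m₂ - m) * (cp R (τ + s) - cp R τ), 0) := by
      simp only [hpth, dir]; ext <;> simp <;> ring
    rw [h2, Prod.norm_def]
    simp only [Real.norm_eq_abs, norm_zero]
    exact max_le h1 (by positivity)
  have hdrd : ∀ τ s, |dr (τ + s) - dr τ - D * s| ≤ 4 * ρ * |s| := by
    intro τ s
    have h1 := abs_comb_le hQ1 hQ2 (cm_cp_lip hR (τ + s) τ)
    rw [add_sub_cancel_left] at h1
    have h2 : dr (τ + s) - dr τ - D * s = Q m₁ * (cm R (τ + s) - cm R τ)
        + Q m₂ * (cp R (τ + s) - cp R τ) := by simp only [hdr]; ring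
    rw [h2]; exact h1
  -- increments of `f` along `dir m` versus increments of `φ`
  have hinc : ∀ τ s, |f (pth τ + s • dir m) - f (pth τ) - D * s - (φ (τ + s) - φ τ)|
      ≤ 5 * ρ * |s| := by
    intro τ s
    have h1 := abs_le.mp (hdrd τ s)
    have h2 := hf (pth (τ + s)) (pth τ + s • dir m)
    have h3 : κ * ‖pth (τ + s) - (pth τ + s • dir m)‖ ≤ 1 * ρ * |s| := by
      calc _ ≤ 1 / 100 * (3 * ρ * |s|) := by
            gcongr; exact hpthd τ s
        _ ≤ _ := by nlinarith [mul_nonneg hρ.le (abs_nonneg s)]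
    have h4 := abs_le.mp (h2.trans h3)
    have h5 : φ (τ + s) - φ τ = f (pth (τ + s)) - f (pth τ) - (dr (τ + s) - dr τ) := by
      simp only [hφ]; ring
    rw [h5, abs_le]; constructor <;> linarith
  have hndir : ∀ s : ℝ, ‖s • dir m‖ ≤ |s| := by
    intro s
    rw [norm_smul, Real.norm_eq_abs]
    refine mul_le_of_le_one_right (abs_nonneg s) ?_
    simp [dir, Prod.norm_def]; linarith
  have hφlip : ∀ τ s, |φ (τ + s) - φ τ| ≤ |s| := by
    intro τ s
    have h1 := abs_le.mp (hinc τ s)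
    have h2 := hf (pth τ + s • dir m) (pth τ)
    rw [add_sub_cancel_left] at h2
    have h3 : κ * ‖s • dir m‖ ≤ 1 / 100 * |s| := by gcongr; exact hndir s
    have h4 := abs_le.mp (h2.trans h3)
    have h5 : |D * s| ≤ 1 / 100 * |s| := by rw [abs_mul]; gcongr; linarith
    have h6 := abs_le.mp h5
    have h7 : 5 * ρ * |s| ≤ 5 / 24 * |s| := by gcongr; linarith
    have := abs_nonneg s
    rw [abs_le]; constructor <;> linarith
  -- outside `(-R, R)` the path nearly follows the line through `x` with slope `m`
  have ht₀R : |t₀| ≤ R := by nlinarith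
  have ht₀' := abs_le.mp ht₀R
  have hbase : ∀ τ, R ≤ |τ| → ‖pth τ - (x + (t₀ + τ) • dir m)‖ ≤ ρ ^ 3 / 10 * R := by
    intro τ hτ
    have hσR2 : σ / R * R = σ := div_mul_cancel₀ _ hR.ne'
    have key : ∀ e : ℝ, |e| ≤ ρ ^ 3 / 10 * R →
        pth τ - (x + (t₀ + τ) • dir m) = (e, 0) →
        ‖pth τ - (x + (t₀ + τ) • dir m)‖ ≤ ρ ^ 3 / 10 * R := by
      intro e he h
      rw [h, Prod.norm_def]
      simp only [Real.norm_eq_abs, norm_zero]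
      exact max_le he (by positivity)
    rcases le_abs.mp hτ with h | h
    · refine key (σ + (m₂ - m) * R) ?_ ?_
      · have e1 : σ + (m₂ - m) * R = (m₂ - (m - σ / R)) * R := by
          rw [← hσR2]; field_simp; ring
        rw [e1, abs_mul, abs_of_pos hR, abs_of_pos (by linarith)]
        gcongr; linarith
      · simp only [hpth, dir, cm_nonneg_arg hR (by linarith : (0:ℝ) ≤ τ), cp_high hR h]
        ext
        · simp [hσ]; ring
        · simp [ht₀]; ring
    · refine key (σ - (m₁ - m) * R) ?_ ?_
      · have e1 : σ - (m₁ - m) * R = -((m₁ - (m + σ / R)) * R) := by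
          rw [← hσR2]; field_simp; ring
        rw [e1, abs_neg, abs_mul, abs_of_pos hR, abs_of_pos (by linarith)]
        gcongr; linarith
      · simp only [hpth, dir, cp_nonpos_arg hR (by linarith : τ ≤ 0),
          cm_low hR (by linarith : τ ≤ -R)]
        ext
        · simp [hσ]; ring
        · simp [ht₀]; ring
  have hline : ∀ τ, R ≤ |τ| → |t₀ + τ| < s₁ →
      |f (pth τ) - (f x + D * (t₀ + τ))| ≤ ρ ^ 3 / 10 * (R + |t₀ + τ|) := by
    intro τ h h'
    have h1 := abs_le.mp (hder _ h')
    have h2 := hf (pth τ) (x + (t₀ + τ) • dir m)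
    have h3 : κ * ‖pth τ - (x + (t₀ + τ) • dir m)‖ ≤ 1 * (ρ ^ 3 / 10 * R) := by
      gcongr
      · linarith
      · exact hbase τ h
    have h4 := abs_le.mp (h2.trans h3)
    rw [abs_le]; constructor <;> linarith
  have hRs1 : 8 * R < s₁ := by
    have hs : 0 < s₁ := by
      by_contra hcon
      have : ρ * s₁ ≤ 0 := mul_nonpos_of_nonneg_of_nonpos hρ.le (not_lt.mp hcon)
      linarith
    nlinarith
  -- the values at the two ends
  have hQσ1 : |R * Q m₁ - P₁ * σ| ≤ 10 * ρ ^ 2 * R := by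
    have e1 : R * Q m₁ - P₁ * σ = R * (P₁ * (m₁ - (m + σ / R)) + (m₁ - m) ^ 2) := by
      simp only [hQ]; field_simp; ring
    rw [e1, abs_mul, abs_of_pos hR, mul_comm]
    gcongr
    have h1 : |P₁ * (m₁ - (m + σ / R))| ≤ 1 * (ρ ^ 3 / 10) := by
      rw [abs_mul, abs_of_pos (show (0:ℝ) < m₁ - (m + σ / R) by linarith)]
      gcongr; linarith
    have h2 : |((m₁ : ℝ) - m) ^ 2| ≤ (3 * ρ) ^ 2 := by rw [abs_pow]; gcongr
    have h3 := abs_add_le (P₁ * (m₁ - (m + σ / R))) (((m₁ : ℝ) - m) ^ 2)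
    linarith
  have hQσ2 : |R * Q m₂ + P₁ * σ| ≤ 10 * ρ ^ 2 * R := by
    have e1 : R * Q m₂ + P₁ * σ = R * (P₁ * (m₂ - (m - σ / R)) + (m₂ - m) ^ 2) := by
      simp only [hQ]; field_simp; ring
    rw [e1, abs_mul, abs_of_pos hR, mul_comm]
    gcongr
    have h1 : |P₁ * (m₂ - (m - σ / R))| ≤ 1 * (ρ ^ 3 / 10) := by
      rw [abs_mul, abs_of_pos (show (0:ℝ) < m₂ - (m - σ / R) by linarith)]
      gcongr; linarith
    have h2 : |((m₂ : ℝ) - m) ^ 2| ≤ (3 * ρ) ^ 2 := by rw [abs_pow]; gcongr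
    have h3 := abs_add_le (P₁ * (m₂ - (m - σ / R))) (((m₂ : ℝ) - m) ^ 2)
    linarith
  set V := f x + (D * t₀ + P₁ * σ) with hV
  have hρ3R : ρ ^ 3 * R ≤ ρ ^ 2 / 24 * R := by gcongr
  have hρ2R : 0 < ρ ^ 2 * R := by positivity
  have hendR : |φ R - V| ≤ 11 * ρ ^ 2 * R := by
    have h0 : |t₀ + R| ≤ 2 * R := by rw [abs_le]; constructor <;> linarith
    have h1 := (hline R (le_abs_self R) (by linarith)).trans
      (show ρ ^ 3 / 10 * (R + |t₀ + R|) ≤ ρ ^ 3 / 10 * (3 * R) by gcongr; linarith)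
    have h2 : φ R = f (pth R) - (D * R + R * Q m₂) := by
      simp only [hφ, hdr, cm_nonneg_arg hR hR.le, cp_high hR le_rfl]; ring
    have h1' := abs_le.mp h1
    have h3 := abs_le.mp hQσ2
    rw [h2, hV, abs_le]; constructor <;> linarith
  have hendL : |φ (-R) - V| ≤ 11 * ρ ^ 2 * R := by
    have h0 : |t₀ + -R| ≤ 2 * R := by rw [abs_le]; constructor <;> linarith
    have h1 := (hline (-R) (by rw [abs_neg]; exact le_abs_self R) (by linarith)).trans
      (show ρ ^ 3 / 10 * (R + |t₀ + -R|) ≤ ρ ^ 3 / 10 * (3 * R) by gcongr; linarith)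
    have h2 : φ (-R) = f (pth (-R)) - (D * -R - R * Q m₁) := by
      simp only [hφ, hdr, cp_nonpos_arg hR (by linarith : -R ≤ 0), cm_low hR le_rfl]; ring
    have h1' := abs_le.mp h1
    have h3 := abs_le.mp hQσ1
    rw [h2, hV, abs_le]; constructor <;> linarith
  have hmid : φ 0 = f ((y₁ : ℝ), (y₂ : ℝ)) := by
    simp [hφ, hpth, hdr, cm_nonneg_arg hR le_rfl, cp_nonpos_arg hR le_rfl]
  have hbad' : 100 * ρ ^ 2 * R < |φ 0 - V| := by
    rw [hmid, hV, ← sub_sub]; exact hbad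
  -- apply the one-dimensional lemma to the clamped function
  set ψ : ℝ → ℝ := fun τ => φ (max (-R) (min τ R)) with hψ
  have hclamp : ∀ τ, -R ≤ τ → τ ≤ R → max (-R) (min τ R) = τ := fun τ h h' => by
    rw [min_eq_left h', max_eq_right h]
  have hψeq : ∀ τ, -R ≤ τ → τ ≤ R → ψ τ = φ τ := fun τ h h' => by
    simp only [hψ, hclamp τ h h']
  have hψlip : LipschitzWith 1 ψ := by
    refine LipschitzWith.of_dist_le_mul fun a b => ?_
    rw [Real.dist_eq, Real.dist_eq, NNReal.coe_one, one_mul]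
    have h1 := hφlip (max (-R) (min b R)) (max (-R) (min a R) - max (-R) (min b R))
    rw [add_sub_cancel] at h1
    refine h1.trans ?_
    refine (abs_max_sub_max_le_max _ _ _ _).trans ?_
    simp only [sub_self, abs_zero, abs_nonneg, sup_of_le_right]
    refine (abs_min_sub_min_le_max _ _ _ _).trans ?_
    simp
  have hψcl : ∀ t, ψ t = ψ (max (-R) (min t R)) := by
    intro t
    have h1 : -R ≤ max (-R) (min t R) := le_max_left _ _
    have h2 : max (-R) (min t R) ≤ R := max_le (by linarith) (min_le_right _ _)
    rw [hψeq _ h1 h2]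
  have hgp : ∃ t a, -R + ρ ^ 2 * R < t ∧ t < R - ρ ^ 2 * R ∧ t ≠ 0 ∧ 80 * ρ ^ 2 / 8 ≤ a ∧
      HasDerivAt ψ a t ∧ ∀ s, |ψ (t + s) - ψ t| ≤ 120 * √a * |s| := by
    have hR' := abs_le.mp hendR
    have hL' := abs_le.mp hendL
    have e0 := hψeq 0 (by linarith) hR.le
    have eR := hψeq R (by linarith) le_rfl
    have eL := hψeq (-R) le_rfl (by linarith)
    have hend : -(80 * ρ ^ 2 * R) ≤ ψ R - ψ (-R) := by rw [eR, eL]; linarith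
    rcases lt_abs.mp hbad' with h | h
    · refine good_point ψ R (80 * ρ ^ 2) (ρ ^ 2 * R) hR (by positivity) hρ2R.le (by linarith)
        hψlip hψcl (-R) 0 (by linarith) ?_ hend
      rw [e0, eL]; linarith
    · refine good_point ψ R (80 * ρ ^ 2) (ρ ^ 2 * R) hR (by positivity) hρ2R.le (by linarith)
        hψlip hψcl 0 R (by linarith) ?_ hend
      rw [e0, eR]; linarith
  obtain ⟨t, a, htL, htR, ht0, ha, hder', hmax⟩ := hgp
  have ha10 : 10 * ρ ^ 2 ≤ a := by linarith
  have hsqa : 3 * ρ ≤ √a := by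
    apply Real.le_sqrt_of_sq_le; linarith
  have htin1 : -R < t := by linarith
  have htin2 : t < R := by linarith
  have hxx : ‖pth t - x‖ ≤ 2 * R := by
    have h1 := abs_comb_le (a := (m₁ : ℝ) - m) (b := (m₂ : ℝ) - m) hd1 hd2 (cm_cp_lip hR t 0)
    rw [cm_nonneg_arg hR le_rfl, cp_nonpos_arg hR le_rfl] at h1
    simp only [sub_zero] at h1
    have htR' : |t| ≤ R := abs_le.mpr ⟨htin1.le, htin2.le⟩
    have h2 : |m * t| ≤ 1 / 2 * R := by rw [abs_mul]; gcongr; linarith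
    have h3 : 3 * ρ * |t| ≤ 3 * (1 / 24) * R := by gcongr
    have h1' := abs_le.mp (h1.trans h3)
    have h2' := abs_le.mp h2
    have h4 := abs_le.mp hy1
    have h5 : ρ * R ≤ 1 / 24 * R := by gcongr
    rw [Prod.norm_def]
    refine max_le ?_ ?_
    · simp only [hpth, Prod.fst_sub, Real.norm_eq_abs]
      rw [abs_le]; constructor <;> linarith
    · simp only [hpth, Prod.snd_sub, Real.norm_eq_abs]
      have h6 := abs_le.mp htR'
      rw [abs_le]; constructor <;> linarith
  -- closeness of `f` at the new point and at `x`
  have hNear : Near f ⟨x, m, D⟩ (pth t) (500 * √a) := by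
    intro s
    simp only
    have hs0 := abs_nonneg s
    rcases lt_or_ge |s| (s₁ / 2) with hs | hs
    · have h1 := abs_le.mp (hinc t s)
      have h2 := abs_le.mp (hder s (by linarith only [hs, hRs1, hR]))
      have hφs : |φ (t + s) - φ t| ≤ (120 * √a + ρ) * |s| := by
        have h3 := hmax s
        rw [hψeq t htin1.le htin2.le] at h3
        have hout : ∀ e : ℝ, |e| = R → ψ (t + s) = φ e → R ≤ |t + s| → ρ ^ 2 * R ≤ |s| →
            dr (t + s) - dr e = D * (t + s - e) →
            |φ (t + s) - φ t| ≤ (120 * √a + ρ) * |s| := by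
          intro e heR hψe hR1 hs2 hdre
          have htR' : |t| ≤ R := abs_le.mpr ⟨htin1.le, htin2.le⟩
          have k0 : |t + s| ≤ R + |s| := (abs_add_le _ _).trans (by linarith only [htR'])
          have k1 : |t₀ + (t + s)| ≤ 2 * R + |s| :=
            (abs_add_le _ _).trans (by linarith only [k0, ht₀R])
          have k2 : |t₀ + e| ≤ 2 * R := (abs_add_le _ _).trans (by linarith only [heR, ht₀R])
          have k3 := hline (t + s) hR1 (by linarith only [k1, hs, hRs1, hR])
          have k4 := hline e heR.ge (by linarith only [k2, hRs1, hR])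
          have k5 : φ (t + s) - φ e = f (pth (t + s)) - f (pth e) - D * (t + s - e) := by
            simp only [hφ, ← hdre]; ring
          rw [hψe] at h3
          exact out_est hρ hρ24 hs2 k1 k2 k3 k4 k5 h3
        rcases lt_or_ge (t + s) (-R) with hlow | hlow
        · refine hout (-R) (by rw [abs_neg, abs_of_pos hR]) ?_ ?_ ?_ ?_
          · simp only [hψ]
            rw [min_eq_left (by linarith only [hlow, hR]), max_eq_left hlow.le]
          · rw [le_abs]; right; linarith only [hlow]
          · linarith only [hlow, htL, neg_abs_le s]
          · simp only [hdr, cp_nonpos_arg hR (by linarith only [hlow, hR] : t + s ≤ 0), cm_low hR hlow.le,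
              cp_nonpos_arg hR (by linarith only [hR] : -R ≤ 0), cm_low hR le_rfl]; ring
        rcases lt_or_ge R (t + s) with hhigh | hhigh
        · refine hout R (abs_of_pos hR) ?_ ?_ ?_ ?_
          · simp only [hψ]
            rw [min_eq_right hhigh.le, max_eq_right (by linarith only [hR])]
          · rw [le_abs]; left; linarith only [hhigh]
          · linarith only [hhigh, htR, le_abs_self s]
          · simp only [hdr, cm_nonneg_arg hR (by linarith only [hhigh, hR] : 0 ≤ t + s), cp_high hR hhigh.le,
              cm_nonneg_arg hR hR.le, cp_high hR le_rfl]; ring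
        rw [hψeq _ hlow hhigh] at h3
        exact h3.trans (mul_le_mul_of_nonneg_right (by linarith only [hρ]) hs0)
      have h4 := abs_le.mp hφs
      have h5 : ρ ^ 3 / 10 * |s| ≤ ρ * |s| :=
        mul_le_mul_of_nonneg_right (by linarith only [hρ3, hρ2, hρ]) hs0
      have h6 : (120 * √a + ρ) * |s| + 5 * ρ * |s| + ρ * |s| ≤ 500 * √a * |s| := by
        rw [← add_mul, ← add_mul]
        exact mul_le_mul_of_nonneg_right (by linarith only [hsqa, hρ]) hs0
      rw [abs_le]; constructor <;> linarith only [h1.1, h1.2, h2.1, h2.2, h4.1, h4.2, h5, h6]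
    · have h1 := hf (pth t + s • dir m) (x + s • dir m)
      rw [add_sub_add_right_eq_sub] at h1
      have h2 := hf (pth t) x
      have h3 : κ * ‖pth t - x‖ ≤ 1 * (2 * R) :=
        mul_le_mul (by linarith only [hκ1]) hxx (norm_nonneg _) zero_le_one
      have h1' := abs_le.mp (h1.trans h3)
      have h2' := abs_le.mp (h2.trans h3)
      have h4 : ρ * (s₁ / 2) ≤ ρ * |s| := mul_le_mul_of_nonneg_left hs hρ.le
      have h5 : ρ * |s| ≤ 500 * √a * |s| :=
        mul_le_mul_of_nonneg_right (by linarith only [hsqa, hρ]) hs0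
      rw [abs_le]
      constructor <;> linarith only [h1'.1, h1'.2, h2'.1, h2'.2, h4, h5, hRs]
  -- the slope of the segment containing the new point
  have fin : ∀ mi : ℚ, |(mi : ℝ)| ≤ η →
      (∀ᶠ s in 𝓝 (0:ℝ), pth (t + s) = pth t + s • dir mi ∧ dr (t + s) = dr t + (D + Q mi) * s) →
      pth t = ((y₁ : ℝ) + mi * t, (y₂ : ℝ) + t) →
      ∃ p' a, IsTri f G η p' ∧ ‖p'.x - x‖ ≤ 2 * R ∧
      a = p'.D - D - (P₁ * (p'.m - m) + (p'.m - m) ^ 2) ∧ 10 * ρ ^ 2 ≤ a ∧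
      Near f ⟨x, m, D⟩ p'.x (500 * √a) := by
    intro mi hmi hev hpt
    refine ⟨⟨pth t, mi, a + (D + Q mi)⟩, a, ⟨hmi, ?_, ?_⟩, hxx, ?_, ha10, hNear⟩
    · simp only [hpt]
      have h1 := hG (y₁ - mi * y₂) mi hmi ((y₂ : ℝ) + t)
      push_cast at h1
      have h2 : (y₁ : ℝ) - mi * y₂ + mi * (y₂ + t) = y₁ + mi * t := by ring
      rwa [h2] at h1
    · simp only
      have h1 : HasDerivAt (fun s : ℝ => ψ (t + s)) a 0 := by
        have := HasDerivAt.comp_const_add (x := (0:ℝ)) t (f := ψ) (f' := a) (by simpa using hder')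
        exact this
      have h2 : HasDerivAt (fun s : ℝ => ψ (t + s) + (dr t + (D + Q mi) * s)) (a + (D + Q mi)) 0 := by
        have h3 : HasDerivAt (fun s : ℝ => dr t + (D + Q mi) * s) (D + Q mi) 0 := by
          simpa using ((hasDerivAt_id (0:ℝ)).const_mul (D + Q mi)).const_add (dr t)
        exact h1.add h3
      refine h2.congr_of_eventuallyEq ?_
      have e1 : ∀ᶠ s in 𝓝 (0:ℝ), -R < t + s ∧ t + s < R := by
        have hc : Tendsto (fun s : ℝ => t + s) (𝓝 0) (𝓝 t) := by
          have : Continuous fun s : ℝ => t + s := by fun_prop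
          simpa using this.tendsto 0
        exact (hc.eventually (lt_mem_nhds htin1)).and (hc.eventually (gt_mem_nhds htin2))
      filter_upwards [hev, e1] with s hs hs2
      rw [hψeq _ hs2.1.le hs2.2.le, ← hs.1, ← hs.2]
      simp only [hφ]; ring
    · simp only [hQ]; ring
  have hc : Tendsto (fun s : ℝ => t + s) (𝓝 0) (𝓝 t) := by
    have : Continuous fun s : ℝ => t + s := by fun_prop
    simpa using this.tendsto 0
  rcases lt_or_gt_of_ne ht0 with h | h
  · refine fin m₁ hm1η ?_ ?_
    · filter_upwards [hc.eventually (lt_mem_nhds htin1), hc.eventually (gt_mem_nhds h)] with s h1 h2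
      constructor
      · simp only [hpth, dir, cm_mid h1.le h2.le, cm_mid htin1.le h.le, cp_nonpos_arg hR h2.le,
          cp_nonpos_arg hR h.le]
        ext <;> simp <;> ring
      · simp only [hdr, cm_mid h1.le h2.le, cm_mid htin1.le h.le, cp_nonpos_arg hR h2.le,
          cp_nonpos_arg hR h.le]; ring
    · simp only [hpth, cm_mid htin1.le h.le, cp_nonpos_arg hR h.le]
      ext <;> simp; ring
  · refine fin m₂ hm2η ?_ ?_
    · filter_upwards [hc.eventually (gt_mem_nhds htin2), hc.eventually (lt_mem_nhds h)] with s h1 h2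
      constructor
      · simp only [hpth, dir, cp_mid h2.le h1.le, cp_mid h.le htin2.le, cm_nonneg_arg hR h2.le,
          cm_nonneg_arg hR h.le]
        ext <;> simp <;> ring
      · simp only [hdr, cp_mid h2.le h1.le, cp_mid h.le htin2.le, cm_nonneg_arg hR h2.le,
          cm_nonneg_arg hR h.le]; ring
    · simp only [hpth, cp_mid h.le htin2.le, cm_nonneg_arg hR h.le]
      ext <;> simp; ring

/-! ### The universal differentiability set -/

lemma exists_rat_point {U : Set (ℝ × ℝ)} (hU : IsOpen U) (hne : U.Nonempty) :
    ∃ a b : ℚ, ((a : ℝ), (b : ℝ)) ∈ U := by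
  have hd : DenseRange (Prod.map ((↑) : ℚ → ℝ) ((↑) : ℚ → ℝ)) :=
    Rat.denseRange_cast.prodMap Rat.denseRange_cast
  obtain ⟨⟨a, b⟩, h⟩ := hd.exists_mem_open hU hne
  exact ⟨a, b, h⟩

/-- A Lipschitz function with a small constant has a point of differentiability in every
`G_δ` set containing the lines `x₁ = c + μ x₂` with `c, μ` rational and `|μ| ≤ η`. -/
theorem uds_core {f : ℝ × ℝ → ℝ} {κ η : ℝ} {O : ℕ → Set (ℝ × ℝ)} {G : Set (ℝ × ℝ)}
    (hf : ∀ x y, |f x - f y| ≤ κ * ‖x - y‖) (hκ : 0 ≤ κ) (hη : 0 < η) (hη4 : η ≤ 1 / 4)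
    (hκη : κ ≤ η ^ 2 / 100) (hO : ∀ n, IsOpen (O n)) (hGO : G = ⋂ n, O n)
    (hG : ∀ c μ : ℚ, |(μ : ℝ)| ≤ η → ∀ s : ℝ, ((c : ℝ) + μ * s, s) ∈ G) :
    ∃ x ∈ G, DifferentiableAt ℝ f x := by
  have hκ1 : κ ≤ 1 / 100 := by nlinarith
  have hcont : Continuous f := by
    refine (LipschitzWith.of_dist_le_mul (K := κ.toNNReal) fun x y => ?_).continuous
    rw [Real.dist_eq, Real.coe_toNNReal _ hκ, dist_eq_norm]
    exact hf x y
  have hne : ∃ p, IsTri f G η p ∧ p.m = 0 := by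
    have hl : LipschitzWith κ.toNNReal (fun s : ℝ => f (0, s)) := by
      refine LipschitzWith.of_dist_le_mul fun s t => ?_
      rw [Real.dist_eq, Real.coe_toNNReal _ hκ, Real.dist_eq]
      refine (hf _ _).trans (le_of_eq ?_)
      simp [Prod.norm_def]
    obtain ⟨t, ht⟩ := hl.ae_differentiableAt_real.exists
    refine ⟨⟨(0, t), 0, deriv (fun s : ℝ => f (0, s)) t⟩, ⟨by simpa using hη.le, ?_, ?_⟩, rfl⟩
    · simpa using hG 0 0 (by simpa using hη.le) t
    · have h1 := ht.hasDerivAt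
      have h2 : HasDerivAt (fun s : ℝ => (fun s : ℝ => f (0, s)) (t + s))
          (deriv (fun s : ℝ => f (0, s)) t) 0 := by
        refine HasDerivAt.comp_const_add (x := (0:ℝ)) t (by rwa [add_zero])
      simpa [dir] using h2
  obtain ⟨p, P₁, hT, hm, hP₁, hopt⟩ := optimal hf hκ hη hη4 hκη hO hGO hne
  have hD := hT.abs_D_le hf hκ (by linarith)
  refine ⟨p.x, hT.2.1, ?_⟩
  set L : ℝ × ℝ →L[ℝ] ℝ := P₁ • ContinuousLinearMap.fst ℝ ℝ ℝ
    + (p.D - P₁ * p.m) • ContinuousLinearMap.snd ℝ ℝ ℝ with hL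
  have hLapp : ∀ z, L z = p.D * z.2 + P₁ * (z.1 - p.m * z.2) := by
    intro z; simp [hL]; ring
  suffices h : HasFDerivAt f L p.x from h.differentiableAt
  rw [hasFDerivAt_iff_isLittleO, Asymptotics.isLittleO_iff]
  intro ε hε
  by_contra hcon
  have hfreq : ∃ᶠ y in 𝓝 p.x, ε * ‖y - p.x‖ < |f y - f p.x - L (y - p.x)| := by
    rw [Filter.not_eventually] at hcon
    exact hcon.mono fun y hy => by simpa using hy
  set ρ := min (ε / 100) (η / 6) with hρdef
  have hρ : 0 < ρ := lt_min (by linarith) (by linarith)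
  have hρε : ρ ≤ ε / 100 := min_le_left _ _
  have hρη : ρ ≤ η / 6 := min_le_right _ _
  obtain ⟨s₁, hs₁, hder⟩ : ∃ s₁ > 0, ∀ s : ℝ, |s| < s₁ →
      |f (p.x + s • dir p.m) - f p.x - p.D * s| ≤ ρ ^ 3 / 10 * |s| := by
    have h1 := hT.2.2
    rw [hasDerivAt_iff_isLittleO, Asymptotics.isLittleO_iff] at h1
    obtain ⟨s₁, hs₁, h2⟩ := Metric.eventually_nhds_iff.mp (h1 (show 0 < ρ ^ 3 / 10 by positivity))
    refine ⟨s₁, hs₁, fun s hs => ?_⟩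
    have := h2 (y := s) (by simpa using hs)
    simpa [mul_comm] using this
  obtain ⟨δ, hδ, hδp⟩ := hopt (10 * ρ ^ 2) (by positivity)
  set r₀ := min (ρ * δ / 4) (ρ ^ 2 * s₁ / 16) with hr₀
  have hr₀0 : 0 < r₀ := lt_min (by positivity) (by positivity)
  -- the set of bad points is open, so it contains rational points
  have hLc : Continuous fun y => |f y - f p.x - L (y - p.x)| := by fun_prop
  have hopen : IsOpen ({y : ℝ × ℝ | ε * ‖y - p.x‖ < |f y - f p.x - L (y - p.x)|} ∩ ball p.x r₀) :=
    (isOpen_lt (by fun_prop) hLc).inter isOpen_ball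
  obtain ⟨y₁, y₂, hy, hyr⟩ := exists_rat_point hopen
    (hfreq.and_eventually (ball_mem_nhds _ hr₀0)).exists
  rw [mem_ball, dist_eq_norm] at hyr
  simp only [mem_ofPred_eq] at hy
  set r := ‖((y₁ : ℝ), (y₂ : ℝ)) - p.x‖ with hr
  have hr0 : 0 < r := by
    rw [hr, norm_pos_iff]
    intro h0
    rw [hr, h0, sub_eq_zero.mp h0] at hy
    simp at hy
  have hrδ := hyr.trans_le (min_le_left _ _)
  have hrs := hyr.trans_le (min_le_right _ _)
  have hρr : ρ * (r / ρ) = r := mul_div_cancel₀ _ hρ.ne'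
  have hR2 : 2 * (r / ρ) < δ := by
    rw [← mul_div_assoc, div_lt_iff₀ hρ]; linarith
  obtain ⟨p', a, hT', hx', ha, ha10, hnear⟩ := competitor (x := p.x) (m := p.m) (D := p.D) (P₁ := P₁)
    hf hκ1 hη4 hG hm hP₁ hD hρ hρη hder y₁ y₂ (R := r / ρ) (by positivity)
    (by rw [← mul_div_assoc, div_le_iff₀ hρ]; nlinarith)
    (by rw [hρr]; exact norm_fst_le (((y₁ : ℝ), (y₂ : ℝ)) - p.x))
    (by rw [hρr]; exact norm_snd_le (((y₁ : ℝ), (y₂ : ℝ)) - p.x))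
    (by
      have e1 : 100 * ρ ^ 2 * (r / ρ) = 100 * ρ * r := by field_simp
      have e2 : 100 * ρ * r ≤ ε * r := mul_le_mul_of_nonneg_right (by linarith) hr0.le
      rw [hLapp] at hy
      rw [e1]; exact e2.trans_lt hy)
  exact hδp p' hT' (hx'.trans_lt hR2) a ha ha10 hnear

/-- The planar `G_δ` sets containing the lines of rational position and small rational slope are
universal differentiability sets. -/
theorem uds_prod {η : ℝ} {O : ℕ → Set (ℝ × ℝ)} (hη : 0 < η) (hη4 : η ≤ 1 / 4)
    (hO : ∀ n, IsOpen (O n))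
    (hG : ∀ c μ : ℚ, |(μ : ℝ)| ≤ η → ∀ s : ℝ, ((c : ℝ) + μ * s, s) ∈ ⋂ n, O n)
    {f : ℝ × ℝ → ℝ} {K : NNReal} (hf : LipschitzWith K f) :
    ∃ x ∈ ⋂ n, O n, DifferentiableAt ℝ f x := by
  -- multiplication by `c` makes the Lipschitz constant at most `η ^ 2 / 100`
  set c : ℝ := η ^ 2 / 100 / (K + 1) with hc
  have hK : (0:ℝ) < K + 1 := by positivity
  have hc0 : 0 < c := by positivity
  have hcK : c * (K + 1) = η ^ 2 / 100 := div_mul_cancel₀ _ hK.ne'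
  obtain ⟨x, hx, hd⟩ := uds_core (f := fun x => c * f x) (κ := c * K) (η := η) (O := O) (fun x y => by
      rw [← mul_sub, abs_mul, abs_of_pos hc0, mul_assoc]
      have := hf.dist_le_mul x y
      rw [Real.dist_eq, dist_eq_norm] at this
      gcongr) (by positivity) hη hη4 (by nlinarith) hO rfl hG
  refine ⟨x, hx, ?_⟩
  have := hd.const_mul c⁻¹
  simpa [hc0.ne'] using this

/-! ### Tame functions and the one-dimensional profiles -/

/-- `f` is bounded and Lipschitz with constant `C`, and its second differences are at most
`C ‖z‖ ^ 2`. -/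
structure Tame {E : Type*} [NormedAddCommGroup E] (C : ℝ) (f : E → ℝ) : Prop where
  bdd : ∀ x, |f x| ≤ C
  lip : ∀ x y, |f x - f y| ≤ C * ‖x - y‖
  snd : ∀ x z, |f (x + z) + f (x - z) - 2 * f x| ≤ C * ‖z‖ ^ 2

section
variable {E : Type*} [NormedAddCommGroup E] {C C' : ℝ} {f g : E → ℝ}

lemma Tame.nonneg (hf : Tame C f) : 0 ≤ C := (abs_nonneg _).trans (hf.bdd 0)

lemma Tame.mono (hf : Tame C f) (h : C ≤ C') : Tame C' f where
  bdd x := (hf.bdd x).trans h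
  lip x y := (hf.lip x y).trans (by gcongr)
  snd x z := (hf.snd x z).trans (by gcongr)

lemma Tame.congr (hf : Tame C f) (h : ∀ x, f x = g x) : Tame C g := by
  rwa [← funext h]

lemma Tame.const (c : ℝ) : Tame |c| (fun _ : E => c) where
  bdd _ := le_rfl
  lip x y := by simp; positivity
  snd x z := by
    have : c + c - 2 * c = 0 := by ring
    rw [this, abs_zero]; positivity

lemma Tame.add (hf : Tame C f) (hg : Tame C' g) : Tame (C + C') (fun x => f x + g x) where
  bdd x := (abs_add_le _ _).trans (add_le_add (hf.bdd x) (hg.bdd x))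
  lip x y := by
    have h : f x + g x - (f y + g y) = (f x - f y) + (g x - g y) := by ring
    rw [h, add_mul]
    exact (abs_add_le _ _).trans (add_le_add (hf.lip x y) (hg.lip x y))
  snd x z := by
    have h : f (x + z) + g (x + z) + (f (x - z) + g (x - z)) - 2 * (f x + g x)
      = (f (x + z) + f (x - z) - 2 * f x) + (g (x + z) + g (x - z) - 2 * g x) := by ring
    rw [h, add_mul]
    exact (abs_add_le _ _).trans (add_le_add (hf.snd x z) (hg.snd x z))

lemma abs_mul_le {a b A B : ℝ} (ha : |a| ≤ A) (hb : |b| ≤ B) : |a * b| ≤ A * B := by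
  rw [abs_mul]
  exact mul_le_mul ha hb (abs_nonneg _) ((abs_nonneg _).trans ha)

lemma Tame.mul (hf : Tame C f) (hg : Tame C' g) : Tame (4 * (C * C')) (fun x => f x * g x) where
  bdd x := (abs_mul_le (hf.bdd x) (hg.bdd x)).trans (by
    have := mul_nonneg hf.nonneg hg.nonneg; linarith)
  lip x y := by
    have h : f x * g x - f y * g y = f x * (g x - g y) + (f x - f y) * g y := by ring
    have h1 := abs_mul_le (hf.bdd x) (hg.lip x y)
    have h2 := abs_mul_le (hf.lip x y) (hg.bdd y)
    have h3 : 0 ≤ C * C' * ‖x - y‖ := mul_nonneg (mul_nonneg hf.nonneg hg.nonneg) (norm_nonneg _)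
    rw [h]
    exact (abs_add_le _ _).trans (by linarith)
  snd x z := by
    have h : f (x + z) * g (x + z) + f (x - z) * g (x - z) - 2 * (f x * g x)
      = f x * (g (x + z) + g (x - z) - 2 * g x) + (f (x + z) + f (x - z) - 2 * f x) * g x
        + ((f (x + z) - f x) * (g (x + z) - g x) + (f (x - z) - f x) * (g (x - z) - g x)) := by ring
    have h1 := abs_mul_le (hf.bdd x) (hg.snd x z)
    have h2 := abs_mul_le (hf.snd x z) (hg.bdd x)
    have h3 := abs_mul_le (hf.lip (x + z) x) (hg.lip (x + z) x)
    have h4 := abs_mul_le (hf.lip (x - z) x) (hg.lip (x - z) x)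
    rw [add_sub_cancel_left] at h3
    rw [sub_sub_cancel_left, norm_neg] at h4
    rw [h]
    refine (abs_add_le _ _).trans ((add_le_add (abs_add_le _ _) (abs_add_le _ _)).trans ?_)
    linarith

end

/-- Tameness of a function of one real variable with bounded Lipschitz derivative. -/
lemma tame_of_deriv {f f' : ℝ → ℝ} {K : ℝ} (hb : ∀ x, |f x| ≤ K)
    (hd : ∀ x, HasDerivAt f (f' x) x) (hb' : ∀ x, |f' x| ≤ K)
    (hl' : ∀ x y, |f' x - f' y| ≤ K * |x - y|) :
    Tame (2 * K) f ∧ ∀ x y, |f y - f x - f' x * (y - x)| ≤ K * |y - x| ^ 2 := by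
  have hK : 0 ≤ K := (abs_nonneg _).trans (hb 0)
  have tay : ∀ x y, |f y - f x - f' x * (y - x)| ≤ K * |y - x| ^ 2 := by
    intro x y
    have h := Convex.norm_image_sub_le_of_norm_hasDerivWithin_le (𝕜 := ℝ)
      (f := fun t => f t - f' x * t) (f' := fun t => f' t - f' x) (s := uIcc x y) (x := x) (y := y)
      (C := K * |y - x|)
      (fun t _ => ((hd t).sub (by simpa using (hasDerivAt_id t).const_mul (f' x))).hasDerivWithinAt)
      (fun t ht => by
        refine (hl' t x).trans ?_
        have := abs_sub_left_of_mem_uIcc ht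
        gcongr) (convex_uIcc _ _) left_mem_uIcc right_mem_uIcc
    rw [Real.norm_eq_abs, Real.norm_eq_abs] at h
    have e : f y - f x - f' x * (y - x) = f y - f' x * y - (f x - f' x * x) := by ring
    rw [e]; linarith
  refine ⟨⟨fun x => (hb x).trans (by linarith), fun x y => ?_, fun x z => ?_⟩, tay⟩
  · have h := Convex.norm_image_sub_le_of_norm_hasDerivWithin_le (𝕜 := ℝ)
      (f := f) (f' := f') (s := univ) (x := y) (y := x) (C := K)
      (fun t _ => (hd t).hasDerivWithinAt) (fun t _ => hb' t) convex_univ (mem_univ _) (mem_univ _)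
    rw [Real.norm_eq_abs] at h
    have := mul_nonneg hK (norm_nonneg (x - y))
    linarith
  · have h1 := tay x (x + z)
    have h2 := tay x (x - z)
    rw [add_sub_cancel_left] at h1
    rw [sub_sub_cancel_left, abs_neg] at h2
    have e : f (x + z) + f (x - z) - 2 * f x
      = (f (x + z) - f x - f' x * z) + (f (x - z) - f x - f' x * -z) := by ring
    rw [e, Real.norm_eq_abs]
    exact (abs_add_le _ _).trans (by linarith)

/-- The bump `1 / (1 + s ^ 2)`. -/
def chi (s : ℝ) : ℝ := 1 / (1 + s ^ 2)

/-- The odd profile `s / (1 + s ^ 2)`. -/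
def bet (s : ℝ) : ℝ := s / (1 + s ^ 2)

/-- The profile `-s / (1 + s ^ 2) ^ 2`, the derivative of `chi / 2`. -/
def psi (s : ℝ) : ℝ := -bet s * chi s

lemma chi_pos (s : ℝ) : 0 < chi s := by unfold chi; positivity

lemma chi_le_one (s : ℝ) : chi s ≤ 1 := by
  unfold chi; rw [div_le_one (by positivity)]; nlinarith

lemma abs_chi_le (s : ℝ) : |chi s| ≤ 1 := by
  rw [abs_of_pos (chi_pos s)]; exact chi_le_one s

lemma abs_bet_le (s : ℝ) : |bet s| ≤ 1 / 2 := by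
  unfold bet
  rw [abs_div, abs_of_pos (show (0:ℝ) < 1 + s ^ 2 by positivity), div_le_iff₀ (by positivity)]
  nlinarith [sq_nonneg (|s| - 1), sq_abs s]

lemma hasDerivAt_chi (s : ℝ) : HasDerivAt chi (2 * psi s) s := by
  have h : HasDerivAt (fun s : ℝ => 1 + s ^ 2) (2 * s) s := by
    simpa using (hasDerivAt_pow 2 s).const_add 1
  have h2 := (hasDerivAt_const s (1:ℝ)).div h (by positivity)
  refine h2.congr_deriv ?_
  unfold psi bet chi; field_simp; ring

lemma hasDerivAt_bet (s : ℝ) : HasDerivAt bet (2 * chi s * chi s - chi s) s := by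
  have h : HasDerivAt (fun s : ℝ => 1 + s ^ 2) (2 * s) s := by
    simpa using (hasDerivAt_pow 2 s).const_add 1
  have h2 := (hasDerivAt_id s).div h (by positivity)
  refine h2.congr_deriv ?_
  unfold chi; simp only [id]; field_simp; ring

lemma abs_psi_le (s : ℝ) : |psi s| ≤ 1 / 2 := by
  have := abs_mul_le (by rw [abs_neg]; exact abs_bet_le s : |-bet s| ≤ 1 / 2) (abs_chi_le s)
  simpa [psi] using this

lemma lip_of_deriv {f f' : ℝ → ℝ} {K : ℝ} (hd : ∀ x, HasDerivAt f (f' x) x)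
    (hb' : ∀ x, |f' x| ≤ K) (x y : ℝ) : |f x - f y| ≤ K * |x - y| :=
  Convex.norm_image_sub_le_of_norm_hasDerivWithin_le (𝕜 := ℝ)
      (f := f) (f' := f') (s := univ) (x := y) (y := x) (C := K)
      (fun t _ => (hd t).hasDerivWithinAt) (fun t _ => hb' t) convex_univ (mem_univ _) (mem_univ _)

lemma chi_lip (x y : ℝ) : |chi x - chi y| ≤ 1 * |x - y| :=
  lip_of_deriv hasDerivAt_chi (fun s => by
    rw [abs_mul, abs_two]; have := abs_psi_le s; linarith) x y

lemma abs_dbet_le (s : ℝ) : |2 * chi s * chi s - chi s| ≤ 1 := by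
  have h1 := chi_pos s
  have h2 := chi_le_one s
  rw [abs_le]; constructor <;> nlinarith

lemma bet_lip (x y : ℝ) : |bet x - bet y| ≤ 1 * |x - y| :=
  lip_of_deriv hasDerivAt_bet abs_dbet_le x y

lemma psi_lip (x y : ℝ) : |psi x - psi y| ≤ 2 * |x - y| := by
  have e : psi x - psi y = (-bet x) * (chi x - chi y) + (bet y - bet x) * chi y := by
    unfold psi; ring
  have h1 := abs_mul_le (by rw [abs_neg]; exact abs_bet_le x : |-bet x| ≤ 1 / 2) (chi_lip x y)
  have h2 := abs_mul_le (by rw [abs_sub_comm]; exact bet_lip x y : |bet y - bet x| ≤ 1 * |x - y|)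
    (abs_chi_le y)
  rw [e]; exact (abs_add_le _ _).trans (by linarith [abs_nonneg (x - y)])

lemma tame_chi : Tame 8 chi := by
  refine ((tame_of_deriv (K := 4) (fun x => (abs_chi_le x).trans (by norm_num)) hasDerivAt_chi
    (fun x => ?_) fun x y => ?_).1).mono (by norm_num)
  · rw [abs_mul, abs_two]; linarith [abs_psi_le x]
  · rw [← mul_sub, abs_mul, abs_two]; linarith [psi_lip x y]

/-- The Taylor expansion of `chi / 2`, the derivative of which is `psi`. -/
lemma taylor_chi (x y : ℝ) : |chi y / 2 - chi x / 2 - psi x * (y - x)| ≤ 4 * |y - x| ^ 2 := by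
  have h := (tame_of_deriv (K := 4) (fun x => (abs_chi_le x).trans (by norm_num)) hasDerivAt_chi
    (fun x => by rw [abs_mul, abs_two]; linarith [abs_psi_le x]) fun x y => by
      rw [← mul_sub, abs_mul, abs_two]; linarith [psi_lip x y]).2 x y
  have e : chi y / 2 - chi x / 2 - psi x * (y - x)
    = (chi y - chi x - 2 * psi x * (y - x)) / 2 := by ring
  rw [e, abs_div, abs_two]
  linarith [abs_nonneg (chi y - chi x - 2 * psi x * (y - x))]

lemma tame_bet : Tame 10 bet := by
  refine ((tame_of_deriv (K := 5) (fun x => (abs_bet_le x).trans (by norm_num)) hasDerivAt_bet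
    (fun x => (abs_dbet_le x).trans (by norm_num)) fun x y => ?_).1).mono (by norm_num)
  have e : 2 * chi x * chi x - chi x - (2 * chi y * chi y - chi y)
    = (2 * (chi x + chi y) - 1) * (chi x - chi y) := by ring
  rw [e]
  refine abs_mul_le ?_ (by simpa using chi_lip x y)
  have a := chi_pos x
  have b := chi_pos y
  have c := chi_le_one x
  have d := chi_le_one y
  rw [abs_le]; constructor <;> linarith

lemma tame_psi : Tame 320 psi := by
  have h1 : Tame 10 (fun x => -bet x) := ⟨fun x => by rw [abs_neg]; exact tame_bet.bdd x,
    fun x y => by rw [neg_sub_neg, abs_sub_comm]; exact tame_bet.lip x y,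
    fun x z => by
      have e : -bet (x + z) + -bet (x - z) - 2 * -bet x
        = -(bet (x + z) + bet (x - z) - 2 * bet x) := by ring
      rw [e, abs_neg]; exact tame_bet.snd x z⟩
  exact (h1.mul tame_chi).mono (by norm_num)

lemma hasDerivAt_arctan' (x : ℝ) : HasDerivAt Real.arctan (chi x) x := Real.hasDerivAt_arctan x

lemma abs_arctan_le (x : ℝ) : |Real.arctan x| ≤ 2 := by
  have h1 := Real.arctan_lt_pi_div_two x
  have h2 := Real.neg_pi_div_two_lt_arctan x
  have h3 := Real.pi_lt_four
  rw [abs_le]; constructor <;> linarith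

lemma arctan_lip (x y : ℝ) : |Real.arctan x - Real.arctan y| ≤ 1 * |x - y| :=
  lip_of_deriv hasDerivAt_arctan' abs_chi_le x y

lemma tame_arctan : Tame 4 Real.arctan ∧
    ∀ x y, |Real.arctan y - Real.arctan x - chi x * (y - x)| ≤ 2 * |y - x| ^ 2 := by
  have := tame_of_deriv (K := 2) abs_arctan_le hasDerivAt_arctan'
    (fun x => (abs_chi_le x).trans (by norm_num))
    (fun x y => (chi_lip x y).trans (by linarith [abs_nonneg (x - y)]))
  exact ⟨this.1.mono (by norm_num), this.2⟩

/-- The normalized signed distance `(x₁ - c - m x₂) / δ` to the line `x₁ = c + m x₂`. -/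
def sd (c m δ : ℝ) (x : ℝ × ℝ) : ℝ := (x.1 - c - m * x.2) / δ

lemma sd_sub (c m δ : ℝ) (x y : ℝ × ℝ) :
    sd c m δ x - sd c m δ y = ((x.1 - y.1) - m * (x.2 - y.2)) / δ := by unfold sd; ring

lemma abs_lin_le {m : ℝ} (hm : |m| ≤ 1) (z : ℝ × ℝ) : |z.1 - m * z.2| ≤ 2 * ‖z‖ := by
  have h1 := norm_fst_le z
  have h2 := norm_snd_le z
  rw [Real.norm_eq_abs] at h1 h2
  have h3 := abs_mul_le hm h2
  have := abs_sub z.1 (m * z.2)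
  linarith

lemma abs_sd_sub_le {c m δ : ℝ} (hm : |m| ≤ 1) (hδ : 0 < δ) (x y : ℝ × ℝ) :
    |sd c m δ x - sd c m δ y| ≤ 2 * ‖x - y‖ / δ := by
  rw [sd_sub, abs_div, abs_of_pos hδ]
  gcongr
  exact abs_lin_le hm (x - y)

lemma Tame.comp_sd {C : ℝ} {f : ℝ → ℝ} (hf : Tame C f) {c m δ : ℝ} (hm : |m| ≤ 1) (hδ : 0 < δ) :
    ∃ C', Tame C' (fun x => f (sd c m δ x)) := by
  have hC := hf.nonneg
  refine ⟨C * (1 + 2 / δ + 4 / δ ^ 2), ⟨fun x => (hf.bdd _).trans ?_, fun x y => (hf.lip _ _).trans ?_,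
    fun x z => ?_⟩⟩
  · refine le_mul_of_one_le_right hC ?_
    have : 0 ≤ 2 / δ + 4 / δ ^ 2 := by positivity
    linarith
  · have h1 := abs_sd_sub_le (c := c) hm hδ x y
    rw [mul_assoc, Real.norm_eq_abs]
    refine mul_le_mul_of_nonneg_left (h1.trans ?_) hC
    have : 0 ≤ (1 + 4 / δ ^ 2) * ‖x - y‖ := by positivity
    have e : 2 * ‖x - y‖ / δ = 2 / δ * ‖x - y‖ := by ring
    rw [e]; linarith
  · set l := (z.1 - m * z.2) / δ with hl
    have e1 : sd c m δ (x + z) = sd c m δ x + l := by simp [sd, hl]; ring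
    have e2 : sd c m δ (x - z) = sd c m δ x - l := by simp [sd, hl]; ring
    simp only [e1, e2]
    refine (hf.snd _ _).trans ?_
    rw [mul_assoc]
    refine mul_le_mul_of_nonneg_left ?_ hC
    have h1 : ‖l‖ ≤ 2 / δ * ‖z‖ := by
      rw [hl, Real.norm_eq_abs, abs_div, abs_of_pos hδ, div_mul_eq_mul_div]
      gcongr
      exact abs_lin_le hm z
    calc ‖l‖ ^ 2 ≤ (2 / δ * ‖z‖) ^ 2 := by gcongr
      _ = 4 / δ ^ 2 * ‖z‖ ^ 2 := by ring
      _ ≤ (1 + 2 / δ + 4 / δ ^ 2) * ‖z‖ ^ 2 := by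
        gcongr
        have : 0 ≤ 2 / δ := by positivity
        linarith

/-! ### Pointwise inequalities for the gradient and its dual -/

lemma one_sub_sq_bounds {p : ℝ} (hp : |p| < 1) : 0 < 1 - p ^ 2 ∧ 1 - p ^ 2 ≤ 1 ∧
    (1 - p ^ 2) ^ 2 ≤ 4 * (1 - |p|) ∧ 1 - p ^ 2 ≤ 2 * (1 - |p|) := by
  have h0 := abs_nonneg p
  rw [← sq_abs p]
  refine ⟨by nlinarith, by nlinarith, ?_, by nlinarith⟩
  have : (1 - |p| ^ 2) ^ 2 = (1 - |p|) * ((1 - |p|) * (1 + |p|) ^ 2) := by ring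
  rw [this, mul_comm 4]
  refine mul_le_mul_of_nonneg_left ?_ (by linarith)
  nlinarith

/-- The gradient stays admissible: with `p = A m + B` and `w = (1 - p ^ 2) ^ 2 / 8`, the new value at
`u` is the convex combination `(1 - χ) (A u + B) + χ (p + τ w (u - m))`. -/
lemma grad_step {A B m χ τ : ℝ} (hV : ∀ u, |u| ≤ 1 → |A * u + B| < 1) (hm : |m| ≤ 1 / 4)
    (hχ0 : 0 ≤ χ) (hχ1 : χ ≤ 1) (hτ : |τ| ≤ 1 / 2) (u : ℝ) (hu : |u| ≤ 1) :
    |(A + χ * (τ * (1 / 8 * (1 - (A * m + B) ^ 2) ^ 2) - A)) * u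
      + (B - m * (χ * (τ * (1 / 8 * (1 - (A * m + B) ^ 2) ^ 2) - A)))| < 1 := by
  set p := A * m + B with hp
  have hp1 : |p| < 1 := hV m (by linarith)
  obtain ⟨hq0, hq1, hq2, -⟩ := one_sub_sq_bounds hp1
  have hvu := hV u hu
  have e : (A + χ * (τ * (1 / 8 * (1 - p ^ 2) ^ 2) - A)) * u
      + (B - m * (χ * (τ * (1 / 8 * (1 - p ^ 2) ^ 2) - A)))
      = (1 - χ) * (A * u + B) + χ * (p + τ * (1 / 8 * (1 - p ^ 2) ^ 2) * (u - m)) := by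
    rw [hp]; ring
  have hx : |u - m| ≤ 5 / 4 := (abs_sub _ _).trans (by linarith)
  have ht : |p + τ * (1 / 8 * (1 - p ^ 2) ^ 2) * (u - m)| < 1 := by
    have h1 : |τ * (1 / 8 * (1 - p ^ 2) ^ 2) * (u - m)| ≤ 1 / 2 * (1 / 8 * (4 * (1 - |p|))) * (5 / 4) := by
      refine abs_mul_le (abs_mul_le hτ ?_) hx
      rw [abs_of_nonneg (by positivity)]; linarith
    exact (abs_add_le _ _).trans_lt (by linarith)
  rw [e]
  rw [abs_lt] at hvu ht ⊢
  have h1χ : 0 ≤ 1 - χ := by linarith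
  have := (convex_Ioo (-1 : ℝ) 1) hvu ht h1χ hχ0 (by ring)
  simpa using this

/-- The Bregman estimate for `v ↦ 1 / (1 - v ^ 2)` at `p`, the increment being at most
`(1 - p ^ 2) ^ 2 / 16`; the weight `(1 - p ^ 2) ^ 2` cancels the derivative's singularity. -/
lemma bregman {p τ x : ℝ} (hp : |p| < 1) (hτ : |τ| ≤ 1 / 2) (hx : |x| ≤ 1) :
    |p + τ * (1 / 8 * (1 - p ^ 2) ^ 2) * x| < 1 ∧
    1 / (1 - (p + τ * (1 / 8 * (1 - p ^ 2) ^ 2) * x) ^ 2)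
      ≤ 1 / (1 - p ^ 2) + 2 * (1 / 8) * p * τ * x + x ^ 2 := by
  obtain ⟨hq0, hq1, hq2, -⟩ := one_sub_sq_bounds hp
  set q := 1 - p ^ 2 with hq
  set z := 1 / 8 * (τ * x) with hz
  have hzx : z ^ 2 ≤ x ^ 2 / 256 := by
    have : (τ * x) ^ 2 ≤ (1 / 2 * |x|) ^ 2 := by
      rw [← sq_abs (τ * x)]
      exact pow_le_pow_left₀ (abs_nonneg _) (abs_mul_le hτ le_rfl) 2
    rw [mul_pow (1 / 2) |x|, sq_abs] at this
    rw [hz, mul_pow]; linarith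
  have hz1 : |z| ≤ 1 / 16 := by
    rw [hz]
    have := abs_mul_le (abs_mul_le (le_refl |(1/8:ℝ)|) hτ) hx
    rw [← mul_assoc]
    refine this.trans ?_
    rw [abs_of_pos (by norm_num)]; norm_num
  have hy : τ * (1 / 8 * q ^ 2) * x = q ^ 2 * z := by rw [hz]; ring
  have hlin : 2 * (1 / 8) * p * τ * x = 2 * p * z := by rw [hz]; ring
  rw [hy, hlin]
  have hzz := abs_le.mp hz1
  have hpp := abs_lt.mp hp
  have hqq : q ^ 2 ≤ q := by nlinarith
  have hpz : |p * z| ≤ 1 / 16 := by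
    have := abs_mul_le hp.le hz1; linarith
  have hpz' := abs_le.mp hpz
  constructor
  · have h1 : |q ^ 2 * z| ≤ 4 * (1 - |p|) * (1 / 16) :=
      abs_mul_le (by rw [abs_of_nonneg (by positivity)]; exact hq2) hz1
    exact (abs_add_le _ _).trans_lt (by linarith)
  · set w := 1 - (p + q ^ 2 * z) ^ 2 with hw
    have hw' : w = q - 2 * (p * z) * q ^ 2 - q ^ 4 * z ^ 2 := by rw [hw, hq]; ring
    have hz2 : z ^ 2 ≤ 1 / 256 := by nlinarith
    have hwq : q / 2 ≤ w := by
      have h1 : 2 * (p * z) * q ^ 2 ≤ 1 / 8 * q ^ 2 :=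
        mul_le_mul_of_nonneg_right (by linarith) (by positivity)
      have h4 : q ^ 4 ≤ q := by nlinarith [sq_nonneg q]
      have h2 : q ^ 4 * z ^ 2 ≤ q * (1 / 256) :=
        mul_le_mul h4 hz2 (sq_nonneg z) hq0.le
      rw [hw']; linarith
    have hw0 : 0 < w := by linarith
    have key : 1 / q + 2 * p * z + x ^ 2 - 1 / w
        = (x ^ 2 * w - q ^ 2 * z ^ 2 * (q + 4 * p ^ 2 + 2 * p * (q ^ 2 * z))) / w := by
      rw [eq_div_iff hw0.ne']
      have h1 : (1 / q + 2 * p * z + x ^ 2 - 1 / w) * w = (w / q - 1) + 2 * p * z * w + x ^ 2 * w := by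
        field_simp
        ring
      have h2 : w / q = 1 - 2 * (p * z) * q - q ^ 3 * z ^ 2 := by
        rw [hw']; field_simp
      rw [h1, h2, hw']; ring
    have hbr : q + 4 * p ^ 2 + 2 * p * (q ^ 2 * z) ≤ 6 := by
      have h1 : 2 * p * (q ^ 2 * z) = q ^ 2 * (2 * (p * z)) := by ring
      have h2 : q ^ 2 * (2 * (p * z)) ≤ 1 * (1 / 8) := by
        refine (mul_le_mul_of_nonneg_left (show 2 * (p * z) ≤ 1 / 8 by linarith)
          (by positivity)).trans ?_
        have : q ^ 2 ≤ 1 := by linarith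
        linarith
      have h3 : p ^ 2 ≤ 1 := by linarith [hq]
      rw [h1]; linarith
    have hfin : q ^ 2 * z ^ 2 * (q + 4 * p ^ 2 + 2 * p * (q ^ 2 * z)) ≤ x ^ 2 * w := by
      have h1 : q ^ 2 * z ^ 2 * (q + 4 * p ^ 2 + 2 * p * (q ^ 2 * z)) ≤ q ^ 2 * z ^ 2 * 6 :=
        mul_le_mul_of_nonneg_left hbr (by positivity)
      have h2 : q ^ 2 * z ^ 2 ≤ q * (x ^ 2 / 256) := mul_le_mul hqq hzx (sq_nonneg z) hq0.le
      have h3 : x ^ 2 * (q / 2) ≤ x ^ 2 * w := mul_le_mul_of_nonneg_left hwq (sq_nonneg x)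
      have h4 : 0 ≤ q * x ^ 2 := by positivity
      linarith
    have : 0 ≤ 1 / q + 2 * p * z + x ^ 2 - 1 / w := by
      rw [key]; exact div_nonneg (by linarith) hw0.le
    linarith

/-- Convexity of `v ↦ 1 / (1 - v ^ 2)` on `(-1, 1)`. -/
lemma convex_inv {a b χ : ℝ} (ha : |a| < 1) (hb : |b| < 1) (h0 : 0 ≤ χ) (h1 : χ ≤ 1) :
    1 / (1 - ((1 - χ) * a + χ * b) ^ 2) ≤ (1 - χ) * (1 / (1 - a ^ 2)) + χ * (1 / (1 - b ^ 2)) := by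
  have ha0 := (one_sub_sq_bounds ha).1
  have hb0 := (one_sub_sq_bounds hb).1
  have hsq : ((1 - χ) * a + χ * b) ^ 2 ≤ (1 - χ) * a ^ 2 + χ * b ^ 2 := by
    have : (1 - χ) * a ^ 2 + χ * b ^ 2 - ((1 - χ) * a + χ * b) ^ 2 = χ * (1 - χ) * (a - b) ^ 2 := by
      ring
    have : 0 ≤ χ * (1 - χ) * (a - b) ^ 2 :=
      mul_nonneg (mul_nonneg h0 (by linarith)) (sq_nonneg _)
    linarith
  have hc := (convexOn_zpow (𝕜 := ℝ) (-1)).2 (show (1 - a ^ 2) ∈ Ioi (0:ℝ) from ha0)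
    (show (1 - b ^ 2) ∈ Ioi (0:ℝ) from hb0) (show 0 ≤ 1 - χ by linarith) h0 (by ring)
  simp only [smul_eq_mul, zpow_neg_one] at hc
  simp only [one_div]
  refine le_trans (inv_anti₀ ?_ ?_) hc
  · rcases le_total χ (1 / 2) with h | h <;> nlinarith
  · linarith

/-- The domination of `1 / (1 - (A u + B) ^ 2)` by the affine function is preserved, by convexity
for the convex combination described in `grad_step` and by the Bregman estimate for its second part.
The term `4 η ^ 2 - u ^ 2`, being strictly concave, gives room for the error `(u - m) ^ 2`: passing to
its tangent at `m` gains exactly this much. -/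
lemma dual_step {A B Ah Bh m χ τ η : ℝ} (hV : ∀ u, |u| ≤ 1 → |A * u + B| < 1) (hη : 0 < η)
    (hη4 : η ≤ 1 / 4) (hm : |m| ≤ η)
    (hχ0 : 0 ≤ χ) (hχ1 : χ ≤ 1) (hτ : |τ| ≤ 1 / 2)
    (hW : ∀ u, |u| ≤ 2 * η → 1 / (1 - (A * u + B) ^ 2) + (4 * η ^ 2 - u ^ 2) ≤ Ah * u + Bh)
    (u : ℝ) (hu : |u| ≤ 2 * η) :
    1 / (1 - ((A + χ * (τ * (1 / 8 * (1 - (A * m + B) ^ 2) ^ 2) - A)) * u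
      + (B - m * (χ * (τ * (1 / 8 * (1 - (A * m + B) ^ 2) ^ 2) - A)))) ^ 2) + (4 * η ^ 2 - u ^ 2)
    ≤ (Ah + χ * (τ * (2 * (1 / 8) * (A * m + B)) - (2 * m + Ah))) * u
      + (Bh - m * (χ * (τ * (2 * (1 / 8) * (A * m + B)) - (2 * m + Ah)))) := by
  set p := A * m + B with hp
  have hp1 : |p| < 1 := hV m (by linarith)
  have hx : |u - m| ≤ 1 := (abs_sub _ _).trans (by linarith)
  obtain ⟨hb1, hb2⟩ := bregman hp1 hτ hx
  have e : (A + χ * (τ * (1 / 8 * (1 - p ^ 2) ^ 2) - A)) * u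
      + (B - m * (χ * (τ * (1 / 8 * (1 - p ^ 2) ^ 2) - A)))
      = (1 - χ) * (A * u + B) + χ * (p + τ * (1 / 8 * (1 - p ^ 2) ^ 2) * (u - m)) := by
    rw [hp]; ring
  have e2 : (Ah + χ * (τ * (2 * (1 / 8) * p) - (2 * m + Ah))) * u
      + (Bh - m * (χ * (τ * (2 * (1 / 8) * p) - (2 * m + Ah))))
      = (1 - χ) * (Ah * u + Bh) + χ * ((Ah * m + Bh)
        + (2 * (1 / 8) * p * τ - 2 * m) * (u - m)) := by ring
  have h1 := convex_inv (hV u (by linarith)) hb1 hχ0 hχ1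
  have h2 := mul_le_mul_of_nonneg_left (hW u hu) (show 0 ≤ 1 - χ by linarith)
  have h3 := hW m (by linarith)
  rw [← hp] at h3
  have h4 : 1 / (1 - (p + τ * (1 / 8 * (1 - p ^ 2) ^ 2) * (u - m)) ^ 2) + (4 * η ^ 2 - u ^ 2)
      ≤ (Ah * m + Bh) + (2 * (1 / 8) * p * τ - 2 * m) * (u - m) := by
    have : (u - m) ^ 2 = u ^ 2 - m ^ 2 - 2 * m * (u - m) := by ring
    linarith
  have h5 := mul_le_mul_of_nonneg_left h4 hχ0
  rw [e, e2]
  linarith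

/-- A linear function nonnegative on `[-2η, 2η]` does not drop by more than a factor `6` between
a point of `[-η, η]` and a point of `[-3η/2, 3η/2]`. -/
lemma affine_lower {a b η m u N : ℝ} (hη : 0 < η) (h : ∀ u, |u| ≤ 2 * η → 0 ≤ a * u + b)
    (hm : |m| ≤ η) (hu : |u| ≤ 3 / 2 * η) (hN : N ≤ a * m + b) (hN0 : 0 ≤ N) :
    N / 6 ≤ a * u + b := by
  have h1 := h (2 * η) (by rw [abs_of_pos (by linarith)])
  have h2 := h (-(2 * η)) (by rw [abs_neg, abs_of_pos (by linarith)])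
  have hm' := abs_le.mp hm
  have hu' := abs_le.mp hu
  rcases le_total m u with hmu | hmu
  · have e : (2 * η - m) * (a * u + b) = (2 * η - u) * (a * m + b) + (u - m) * (a * (2 * η) + b) := by
      ring
    have h3 : (η / 2) * N ≤ (2 * η - u) * (a * m + b) :=
      mul_le_mul (by linarith) hN hN0 (by linarith)
    have h4 : 0 ≤ (u - m) * (a * (2 * η) + b) := mul_nonneg (by linarith) h1
    have h5 : 0 ≤ a * u + b := h u (by linarith)
    have h6 : (2 * η - m) * (a * u + b) ≤ 3 * η * (a * u + b) :=
      mul_le_mul_of_nonneg_right (by linarith) h5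
    have h7 : η * (N / 6) ≤ η * (a * u + b) := by linarith
    exact le_of_mul_le_mul_left h7 hη
  · have e : (2 * η + m) * (a * u + b)
        = (2 * η + u) * (a * m + b) + (m - u) * (a * (-(2 * η)) + b) := by ring
    have h3 : (η / 2) * N ≤ (2 * η + u) * (a * m + b) :=
      mul_le_mul (by linarith) hN hN0 (by linarith)
    have h4 : 0 ≤ (m - u) * (a * (-(2 * η)) + b) := mul_nonneg (by linarith) h2
    have h5 : 0 ≤ a * u + b := h u (by linarith)
    have h6 : (2 * η + m) * (a * u + b) ≤ 3 * η * (a * u + b) :=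
      mul_le_mul_of_nonneg_right (by linarith) h5
    have h7 : η * (N / 6) ≤ η * (a * u + b) := by linarith
    exact le_of_mul_le_mul_left h7 hη

/-! ### The primitives added in one step -/

/-- `(A, B)` is an approximate gradient of `g`, with error `e` of first order. -/
def Apx (e C : ℝ) (g A B : ℝ × ℝ → ℝ) : Prop :=
  ∀ x y : ℝ × ℝ, |g y - g x - (A x * (y.1 - x.1) + B x * (y.2 - x.2))|
    ≤ e * ‖y - x‖ + C * ‖y - x‖ ^ 2

/-- The amount by which a step changes the first component of the approximate gradient. -/
def inc (c m δ : ℝ) (w z : ℝ × ℝ → ℝ) (x : ℝ × ℝ) : ℝ :=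
  psi (sd c m δ x) * w x - chi (sd c m δ x) * z x

/-- The amount by which a step changes the function; up to first order terms of size `δ`, its
gradient is `inc c m δ w z • (1, -m)`. -/
def prim (c m δ : ℝ) (w z : ℝ × ℝ → ℝ) (x : ℝ × ℝ) : ℝ :=
  δ * (chi (sd c m δ x) / 2 * w x - Real.arctan (sd c m δ x) * z x)

section
variable {c m δ Λ : ℝ} {w z : ℝ × ℝ → ℝ}

lemma Apx.mono {e C e' C' : ℝ} {g A B : ℝ × ℝ → ℝ} (h : Apx e C g A B) (he : e ≤ e')
    (hC : C ≤ C') : Apx e' C' g A B := fun x y => (h x y).trans (by gcongr)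

lemma abs_prim_le (hδ : 0 < δ) (hw : Tame Λ w) (hz : Tame Λ z) (x : ℝ × ℝ) :
    |prim c m δ w z x| ≤ δ * (3 * Λ) := by
  have h1 := abs_mul_le (by
    rw [abs_div, abs_two]; linarith [abs_chi_le (sd c m δ x)] : |chi (sd c m δ x) / 2| ≤ 1 / 2)
    (hw.bdd x)
  have h2 := abs_mul_le (abs_arctan_le (sd c m δ x)) (hz.bdd x)
  have h3 := hw.nonneg
  rw [prim, abs_mul, abs_of_pos hδ]
  refine mul_le_mul_of_nonneg_left ((abs_sub _ _).trans ?_) hδ.le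
  linarith

/-- The approximate gradient after a step; the first order error grows only by `3 δ Λ`. -/
lemma apx_upd {e C : ℝ} {g A B : ℝ × ℝ → ℝ} (h : Apx e C g A B) (hm : |m| ≤ 1) (hδ : 0 < δ)
    (hw : Tame Λ w) (hz : Tame Λ z) :
    Apx (e + δ * (3 * Λ)) (C + 24 * Λ / δ) (fun x => g x + prim c m δ w z x)
      (fun x => A x + inc c m δ w z x) (fun x => B x - m * inc c m δ w z x) := by
  intro x y
  have h0 := h x y
  have hΛ := hw.nonneg
  set a := sd c m δ x with ha
  set b := sd c m δ y with hb
  set r := ‖y - x‖ with hr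
  have hr0 : 0 ≤ r := norm_nonneg _
  have hba : δ * (b - a) = (y.1 - x.1) - m * (y.2 - x.2) := by
    rw [ha, hb, sd_sub]; field_simp
  have hba2 : |b - a| ≤ 2 * r / δ := abs_sd_sub_le hm hδ y x
  have hsq : |b - a| ^ 2 ≤ 4 * r ^ 2 / δ ^ 2 := by
    calc |b - a| ^ 2 ≤ (2 * r / δ) ^ 2 := by gcongr
      _ = _ := by ring
  have e1 : g y + prim c m δ w z y - (g x + prim c m δ w z x)
      - ((A x + inc c m δ w z x) * (y.1 - x.1) + (B x - m * inc c m δ w z x) * (y.2 - x.2))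
      = (g y - g x - (A x * (y.1 - x.1) + B x * (y.2 - x.2)))
      + δ * ((chi b / 2 * (w y - w x) - Real.arctan b * (z y - z x))
        + ((chi b / 2 - chi a / 2 - psi a * (b - a)) * w x
          - (Real.arctan b - Real.arctan a - chi a * (b - a)) * z x)) := by
    have : inc c m δ w z x * (y.1 - x.1) - m * inc c m δ w z x * (y.2 - x.2)
        = inc c m δ w z x * (δ * (b - a)) := by rw [hba]; ring
    have e2 : ∀ X Y : ℝ, X - Y = 0 → X = Y := fun _ _ => sub_eq_zero.mp
    apply e2
    have e3 : g y + prim c m δ w z y - (g x + prim c m δ w z x)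
      - ((A x + inc c m δ w z x) * (y.1 - x.1) + (B x - m * inc c m δ w z x) * (y.2 - x.2))
      = (g y - g x - (A x * (y.1 - x.1) + B x * (y.2 - x.2))) + (prim c m δ w z y
        - prim c m δ w z x - (inc c m δ w z x * (δ * (b - a)))) := by rw [← this]; ring
    rw [e3]
    simp only [prim, inc, ← ha, ← hb]
    ring
  simp only [e1]
  have k1 := abs_mul_le (by rw [abs_div, abs_two]; linarith [abs_chi_le b] : |chi b / 2| ≤ 1 / 2)
    (hw.lip y x)
  have k2 := abs_mul_le (abs_arctan_le b) (hz.lip y x)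
  have k3 := abs_mul_le ((taylor_chi a b).trans (mul_le_mul_of_nonneg_left hsq (by norm_num)))
    (hw.bdd x)
  have k4 := abs_mul_le ((tame_arctan.2 a b).trans (mul_le_mul_of_nonneg_left hsq (by norm_num)))
    (hz.bdd x)
  have k5 : |(chi b / 2 * (w y - w x) - Real.arctan b * (z y - z x))
        + ((chi b / 2 - chi a / 2 - psi a * (b - a)) * w x
          - (Real.arctan b - Real.arctan a - chi a * (b - a)) * z x)|
      ≤ 3 * Λ * r + 24 * Λ * (r ^ 2 / δ ^ 2) := by
    refine (abs_add_le _ _).trans ((add_le_add (abs_sub _ _) (abs_sub _ _)).trans ?_)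
    have : 0 ≤ Λ * r := by positivity
    rw [← hr] at k1 k2
    have e4 : 4 * r ^ 2 / δ ^ 2 = 4 * (r ^ 2 / δ ^ 2) := by ring
    rw [e4] at k3 k4
    linarith only [k1, k2, k3, k4, this]
  have k6 := mul_le_mul_of_nonneg_left k5 hδ.le
  have e5 : δ * (3 * Λ * r + 24 * Λ * (r ^ 2 / δ ^ 2)) = δ * (3 * Λ) * r + 24 * Λ / δ * r ^ 2 := by
    field_simp
  rw [e5] at k6
  refine (abs_add_le _ _).trans ?_
  rw [abs_mul δ, abs_of_pos hδ]
  linarith only [h0, k6]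

lemma tame_inc (hm : |m| ≤ 1) (hδ : 0 < δ) (hw : Tame Λ w) (hz : Tame Λ z) :
    ∃ C, Tame C (inc c m δ w z) := by
  obtain ⟨C1, h1⟩ := tame_psi.comp_sd (c := c) hm hδ
  obtain ⟨C2, h2⟩ := tame_chi.comp_sd (c := c) hm hδ
  have := (h1.mul hw).add ((Tame.const (-1)).mul (h2.mul hz))
  exact ⟨_, this.congr fun x => by rw [inc]; ring⟩

lemma tame_prim (hm : |m| ≤ 1) (hδ : 0 < δ) (hw : Tame Λ w) (hz : Tame Λ z) :
    ∃ C, Tame C (prim c m δ w z) := by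
  obtain ⟨C1, h1⟩ := tame_chi.comp_sd (c := c) hm hδ
  obtain ⟨C2, h2⟩ := tame_arctan.1.comp_sd (c := c) hm hδ
  have := (Tame.const δ).mul (((Tame.const (1 / 2)).mul (h1.mul hw)).add
    ((Tame.const (-1)).mul (h2.mul hz)))
  exact ⟨_, this.congr fun x => by rw [prim]; ring⟩

/-- The second difference at scale `δ` of the increment of the function, at points close to the
line `x₁ = c + m x₂`. -/
lemma snd_diff_prim (hδ : 0 < δ) (hw : Tame Λ w) (hz : Tame Λ z) {x v : ℝ × ℝ}
    (hw1 : |w x| ≤ 1) (hz1 : |z x| ≤ 1) (hv : ‖v‖ ≤ 1) {ε : ℝ} (hε : |sd c m δ x| ≤ ε) :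
    |prim c m δ w z (x + δ • v) + prim c m δ w z (x - δ • v) - 2 * prim c m δ w z x
      + δ * (w x * ((v.1 - m * v.2) ^ 2 / (1 + (v.1 - m * v.2) ^ 2)))| ≤ δ * (6 * ε + 5 * Λ * δ) := by
  set l := v.1 - m * v.2 with hl
  set a := sd c m δ x with ha
  have e1 : sd c m δ (x + δ • v) = a + l := by
    simp [ha, sd, hl]; field_simp; ring
  have e2 : sd c m δ (x - δ • v) = a - l := by
    simp [ha, sd, hl]; field_simp; ring
  have hδv : ‖δ • v‖ ≤ δ := by
    rw [norm_smul, Real.norm_eq_abs, abs_of_pos hδ]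
    exact mul_le_of_le_one_right hδ.le hv
  have hΛ := hw.nonneg
  have lipp : ∀ {f : ℝ × ℝ → ℝ}, Tame Λ f → |f (x + δ • v) - f x| ≤ Λ * δ := fun hf => by
    have := hf.lip (x + δ • v) x
    rw [add_sub_cancel_left] at this
    exact this.trans (by gcongr)
  have lipm : ∀ {f : ℝ × ℝ → ℝ}, Tame Λ f → |f (x - δ • v) - f x| ≤ Λ * δ := fun hf => by
    have := hf.lip (x - δ • v) x
    rw [sub_sub_cancel_left, norm_neg] at this
    exact this.trans (by gcongr)
  have hchi : l ^ 2 / (1 + l ^ 2) = 1 - chi l := by unfold chi; field_simp; ring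
  have hchi' : chi (-l) = chi l := by simp [chi]
  have hchi0 : chi 0 = 1 := by simp [chi]
  have e3 : prim c m δ w z (x + δ • v) + prim c m δ w z (x - δ • v) - 2 * prim c m δ w z x
      + δ * (w x * (l ^ 2 / (1 + l ^ 2))) = δ * ((w x * ((chi (a + l) / 2 - chi l / 2)
        + (chi (a - l) / 2 - chi (-l) / 2) - (chi a - chi 0)))
        + (chi (a + l) / 2 * (w (x + δ • v) - w x) + chi (a - l) / 2 * (w (x - δ • v) - w x))
        - (z x * ((Real.arctan (a + l) - Real.arctan l)
        + (Real.arctan (a - l) - Real.arctan (-l)) - 2 * (Real.arctan a - Real.arctan 0)))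
        - (Real.arctan (a + l) * (z (x + δ • v) - z x)
          + Real.arctan (a - l) * (z (x - δ • v) - z x))) := by
    rw [hchi, hchi', hchi0, Real.arctan_neg, Real.arctan_zero]
    simp only [prim, e1, e2, ← ha]
    ring
  have hc : ∀ s t : ℝ, |s - t| ≤ ε → |chi s / 2 - chi t / 2| ≤ ε / 2 := fun s t h => by
    rw [← sub_div, abs_div, abs_two]
    linarith [chi_lip s t]
  have hat : ∀ s t : ℝ, |s - t| ≤ ε → |Real.arctan s - Real.arctan t| ≤ ε := fun s t h =>
    (arctan_lip s t).trans (by linarith)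
  have s1 : |a + l - l| ≤ ε := by rwa [add_sub_cancel_right]
  have s2 : |a - l - -l| ≤ ε := by rwa [sub_neg_eq_add, sub_add_cancel]
  have s3 : |a - 0| ≤ ε := by rwa [sub_zero]
  have c1 := abs_le.mp (hc _ _ s1)
  have c2 := abs_le.mp (hc _ _ s2)
  have c3 := abs_le.mp (hc _ _ s3)
  have a1 := abs_le.mp (hat _ _ s1)
  have a2 := abs_le.mp (hat _ _ s2)
  have a3 := abs_le.mp (hat _ _ s3)
  have t1 := abs_mul_le hw1 (show |(chi (a + l) / 2 - chi l / 2)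
        + (chi (a - l) / 2 - chi (-l) / 2) - (chi a - chi 0)| ≤ 2 * ε by
    rw [abs_le]; constructor <;> linarith only [c1.1, c1.2, c2.1, c2.2, c3.1, c3.2])
  have t2 := abs_mul_le hz1 (show |(Real.arctan (a + l) - Real.arctan l)
        + (Real.arctan (a - l) - Real.arctan (-l)) - 2 * (Real.arctan a - Real.arctan 0)| ≤ 4 * ε by
    rw [abs_le]; constructor <;> linarith only [a1.1, a1.2, a2.1, a2.2, a3.1, a3.2])
  have hh : ∀ s, |chi s / 2| ≤ 1 / 2 := fun s => by
    rw [abs_div, abs_two]; linarith [abs_chi_le s]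
  have t3 := abs_mul_le (hh (a + l)) (lipp hw)
  have t4 := abs_mul_le (hh (a - l)) (lipm hw)
  have t5 := abs_mul_le (abs_arctan_le (a + l)) (lipp hz)
  have t6 := abs_mul_le (abs_arctan_le (a - l)) (lipm hz)
  rw [e3, abs_mul, abs_of_pos hδ]
  refine mul_le_mul_of_nonneg_left ?_ hδ.le
  refine (abs_sub _ _).trans ((add_le_add ((abs_sub _ _).trans (add_le_add
    ((abs_add_le _ _).trans (add_le_add t1 ((abs_add_le _ _).trans (add_le_add t3 t4)))) t2))
    ((abs_add_le _ _).trans (add_le_add t5 t6))).trans ?_)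
  linarith only

end

/-! ### The stages of the construction -/

/-- One stage of the construction: the function `g` with its approximate gradient `(A, B)`, the
auxiliary function `q` with its approximate gradient `(Ah, Bh)`, a smoothness constant `M` of all
of these, the width `δ` of the bump around the line treated last, and a bound `b` on everything
that is still going to be added to `g` and `q`. -/
structure Stage where
  (A B Ah Bh g q : ℝ × ℝ → ℝ)
  (M δ b : ℝ)

/-- The approximate derivative of `g` in direction `(m, 1)`. -/
def Stage.p (S : Stage) (m : ℝ) (x : ℝ × ℝ) : ℝ := S.A x * m + S.B x

/-- The curvature prescribed for `g` along a line of slope `m`. -/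
def Stage.w1 (S : Stage) (m : ℝ) (x : ℝ × ℝ) : ℝ := 1 / 8 * (1 - S.p m x ^ 2) ^ 2

/-- The curvature prescribed for `q` along a line of slope `m`. -/
def Stage.w2 (S : Stage) (m : ℝ) (x : ℝ × ℝ) : ℝ := 2 * (1 / 8) * S.p m x

/-- The amount subtracted from `Ah` on the line: up to the curvature term, the slope of the dual
affine function becomes `-2 m`, the derivative of `4 η ^ 2 - u ^ 2` at `m`. -/
def Stage.z2 (S : Stage) (m : ℝ) (x : ℝ × ℝ) : ℝ := 2 * m + S.Ah x

/-- What is true of the `k`-th stage. By `dual`, the affine function with coefficients `Ah x`,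
`Bh x` lies above `u ↦ 1 / (1 - (A x * u + B x) ^ 2)`, so that `q` grows fast wherever the
derivative of `g` is close to its maximum. -/
structure Inv (η : ℝ) (k : ℕ) (S : Stage) : Prop where
  grad : ∀ x u, |u| ≤ 1 → |S.A x * u + S.B x| < 1
  dual : ∀ x u, |u| ≤ 2 * η →
    1 / (1 - (S.A x * u + S.B x) ^ 2) + (4 * η ^ 2 - u ^ 2) ≤ S.Ah x * u + S.Bh x
  one_le : 1 ≤ S.M
  tA : Tame S.M S.A
  tB : Tame S.M S.B
  tAh : Tame S.M S.Ah
  tBh : Tame S.M S.Bh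
  tg : Tame S.M S.g
  ag : Apx (2 - 2 * (1 / 2) ^ k) S.M S.g S.A S.B
  aq : Apx (2 - 2 * (1 / 2) ^ k) S.M S.q S.Ah S.Bh
  b_pos : 0 < S.b

/-- The relation between two consecutive stages, the line treated being `x₁ = c + m x₂`. -/
structure Rel (c m : ℝ) (k : ℕ) (S S' : Stage) : Prop where
  δ_pos : 0 < S'.δ
  δ_le : S'.δ ≤ (1 / 2) ^ k
  p_eq : ∀ x, S'.p m x = S.p m x
  g_sub : ∀ x, |S'.g x - S.g x| ≤ S.b
  q_sub : ∀ x, |S'.q x - S.q x| ≤ S.b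
  snd : ∀ x v : ℝ × ℝ, ‖v‖ ≤ 1 → |sd c m S'.δ x| ≤ (1 / 2) ^ k →
    |S'.g (x + S'.δ • v) + S'.g (x - S'.δ • v) - 2 * S'.g x
      + S'.δ * (S.w1 m x * ((v.1 - m * v.2) ^ 2 / (1 + (v.1 - m * v.2) ^ 2)))|
      ≤ S'.δ * (7 * (1 / 2) ^ k)
  b_half : S'.b ≤ S.b / 2
  b_le_δ : S'.b ≤ (1 / 2) ^ k * S'.δ
  b_le_M : S'.b ≤ (1 / 2) ^ k / S'.M

lemma Inv.p_lt {η : ℝ} {k : ℕ} {S : Stage} (h : Inv η k S) {m : ℝ} (hm : |m| ≤ 1) (x : ℝ × ℝ) :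
    |S.p m x| < 1 := h.grad x m hm

lemma Inv.abs_add_lt {η : ℝ} {k : ℕ} {S : Stage} (h : Inv η k S) (x : ℝ × ℝ) :
    |S.A x| + |S.B x| < 1 := by
  have h1 := abs_lt.mp (h.grad x 1 (by simp))
  have h2 := abs_lt.mp (h.grad x (-1) (by simp))
  rcases abs_cases (S.A x) with ⟨e, _⟩ | ⟨e, _⟩ <;> rcases abs_cases (S.B x) with ⟨e', _⟩ | ⟨e', _⟩ <;>
    rw [e, e'] <;> linarith

lemma Inv.lip {η : ℝ} {k : ℕ} {S : Stage} (h : Inv η k S) (x y : ℝ × ℝ) :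
    |S.g y - S.g x| ≤ 3 * ‖y - x‖ + S.M * ‖y - x‖ ^ 2 := by
  have h1 := norm_fst_le (y - x)
  have h2 := norm_snd_le (y - x)
  rw [Real.norm_eq_abs] at h1 h2
  have h3 := abs_mul_le (le_refl |S.A x|) h1
  have h4 := abs_mul_le (le_refl |S.B x|) h2
  have h5 := h.abs_add_lt x
  have h6 := h.ag x y
  have h7 : (0:ℝ) ≤ (1 / 2) ^ k := by positivity
  simp only [Prod.fst_sub, Prod.snd_sub] at h3 h4
  set r := ‖y - x‖
  have hr : 0 ≤ r := norm_nonneg _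
  have e : S.g y - S.g x = (S.g y - S.g x - (S.A x * (y.1 - x.1) + S.B x * (y.2 - x.2)))
    + (S.A x * (y.1 - x.1) + S.B x * (y.2 - x.2)) := by ring
  rw [e]
  refine (abs_add_le _ _).trans ((add_le_add h6 ((abs_add_le _ _).trans (add_le_add h3 h4))).trans ?_)
  nlinarith [mul_nonneg h7 hr]

lemma exists_tame6 {f1 f2 f3 f4 f5 f6 : ℝ × ℝ → ℝ} (h1 : ∃ C, Tame C f1) (h2 : ∃ C, Tame C f2)
    (h3 : ∃ C, Tame C f3) (h4 : ∃ C, Tame C f4) (h5 : ∃ C, Tame C f5) (h6 : ∃ C, Tame C f6)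
    (D : ℝ) :
    ∃ C, D ≤ C ∧ Tame C f1 ∧ Tame C f2 ∧ Tame C f3 ∧ Tame C f4 ∧ Tame C f5 ∧ Tame C f6 := by
  obtain ⟨C1, h1⟩ := h1
  obtain ⟨C2, h2⟩ := h2
  obtain ⟨C3, h3⟩ := h3
  obtain ⟨C4, h4⟩ := h4
  obtain ⟨C5, h5⟩ := h5
  obtain ⟨C6, h6⟩ := h6
  have n1 := h1.nonneg
  have n2 := h2.nonneg
  have n3 := h3.nonneg
  have n4 := h4.nonneg
  have n5 := h5.nonneg
  have n6 := h6.nonneg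
  have n7 := abs_nonneg D
  have n8 := le_abs_self D
  exact ⟨C1 + C2 + C3 + C4 + C5 + C6 + |D|, by linarith, h1.mono (by linarith),
    h2.mono (by linarith), h3.mono (by linarith), h4.mono (by linarith), h5.mono (by linarith),
    h6.mono (by linarith)⟩

/-- One step of the construction, treating the line `x₁ = c + m x₂`: a bump is added around the line
which is narrow enough for the current stage to look affine across it. -/
lemma exists_step {η c m : ℝ} (hη : 0 < η) (hη4 : η ≤ 1 / 4) (hm : |m| ≤ η) {k : ℕ} {S : Stage}
    (h : Inv η k S) : ∃ S', Inv η (k + 1) S' ∧ Rel c m k S S' := by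
  have hm1 : |m| ≤ 1 := by linarith
  have hm4 : |m| ≤ 1 / 4 := by linarith
  have hM := h.one_le
  have hb := h.b_pos
  have tp : ∃ C, Tame C (S.p m) :=
    ⟨_, ((h.tA.mul (Tame.const m)).add h.tB).congr fun x => rfl⟩
  obtain ⟨Cp, tp⟩ := tp
  have tw1 : ∃ C, Tame C (S.w1 m) := by
    have t := (Tame.const 1).add ((Tame.const (-1)).mul (tp.mul tp))
    exact ⟨_, ((Tame.const (1 / 8)).mul (t.mul t)).congr fun x => by rw [Stage.w1]; ring⟩
  have tw2 : ∃ C, Tame C (S.w2 m) :=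
    ⟨_, ((Tame.const (2 * (1 / 8))).mul tp).congr fun x => by rw [Stage.w2]⟩
  have tz2 : ∃ C, Tame C (S.z2 m) :=
    ⟨_, ((Tame.const (2 * m)).add h.tAh).congr fun x => by rw [Stage.z2]⟩
  obtain ⟨Λ, hΛ, tw1, tz1, tw2, tz2, -, -⟩ :=
    exists_tame6 tw1 ⟨_, h.tA⟩ tw2 tz2 ⟨_, h.tA⟩ ⟨_, h.tA⟩ S.M
  have hΛ1 : 1 ≤ Λ := hM.trans hΛ
  set ε : ℝ := (1 / 2) ^ k with hε
  have hε0 : 0 < ε := by positivity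
  have hε1 : ε ≤ 1 := pow_le_one₀ (by norm_num) (by norm_num)
  -- `10 Λ δ = min b ε`, so that both functions added are bounded by `b` and the first order errors
  -- by `ε`
  set δ : ℝ := min S.b ε / (10 * Λ) with hδ
  have hmin : 0 < min S.b ε := lt_min hb hε0
  have hδ0 : 0 < δ := by positivity
  have hδΛ : δ * (10 * Λ) = min S.b ε := by rw [hδ]; field_simp
  have hδb : δ * (10 * Λ) ≤ S.b := hδΛ.le.trans (min_le_left _ _)
  have hδε : δ * (10 * Λ) ≤ ε := hδΛ.le.trans (min_le_right _ _)
  have hδΛ0 : 0 < δ * Λ := by positivity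
  have hδΛ1 : δ ≤ δ * Λ := le_mul_of_one_le_right hδ0.le hΛ1
  obtain ⟨M', hM', tA, tB, tAh, tBh, tg, -⟩ := exists_tame6
    (f1 := fun x => S.A x + inc c m δ (S.w1 m) S.A x)
    (f2 := fun x => S.B x - m * inc c m δ (S.w1 m) S.A x)
    (f3 := fun x => S.Ah x + inc c m δ (S.w2 m) (S.z2 m) x)
    (f4 := fun x => S.Bh x - m * inc c m δ (S.w2 m) (S.z2 m) x)
    (f5 := fun x => S.g x + prim c m δ (S.w1 m) S.A x)
    (f6 := S.A)
    (by obtain ⟨C, hC⟩ := tame_inc (c := c) hm1 hδ0 tw1 tz1; exact ⟨_, h.tA.add hC⟩)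
    (by
      obtain ⟨C, hC⟩ := tame_inc (c := c) hm1 hδ0 tw1 tz1
      exact ⟨_, (h.tB.add ((Tame.const (-m)).mul hC)).congr fun x => by ring⟩)
    (by obtain ⟨C, hC⟩ := tame_inc (c := c) hm1 hδ0 tw2 tz2; exact ⟨_, h.tAh.add hC⟩)
    (by
      obtain ⟨C, hC⟩ := tame_inc (c := c) hm1 hδ0 tw2 tz2
      exact ⟨_, (h.tBh.add ((Tame.const (-m)).mul hC)).congr fun x => by ring⟩)
    (by obtain ⟨C, hC⟩ := tame_prim (c := c) hm1 hδ0 tw1 tz1; exact ⟨_, h.tg.add hC⟩)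
    ⟨_, h.tA⟩
    (S.M + 24 * Λ / δ)
  have hq0 : 0 < 24 * Λ / δ := by positivity
  have hM'1 : 1 ≤ M' := by linarith
  have hpow : (1 / 2 : ℝ) ^ (k + 1) = ε / 2 := by rw [pow_succ]; ring
  have hinc : ∀ w z : ℝ × ℝ → ℝ, ∀ x, inc c m δ w z x
      = chi (sd c m δ x) * ((-bet (sd c m δ x)) * w x - z x) := fun w z x => by
    rw [inc, psi]; ring
  have hτ : ∀ s, |-bet s| ≤ 1 / 2 := fun s => by rw [abs_neg]; exact abs_bet_le s
  refine ⟨⟨fun x => S.A x + inc c m δ (S.w1 m) S.A x, fun x => S.B x - m * inc c m δ (S.w1 m) S.A x,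
    fun x => S.Ah x + inc c m δ (S.w2 m) (S.z2 m) x,
    fun x => S.Bh x - m * inc c m δ (S.w2 m) (S.z2 m) x,
    fun x => S.g x + prim c m δ (S.w1 m) S.A x, fun x => S.q x + prim c m δ (S.w2 m) (S.z2 m) x,
    M', δ, min (S.b / 2) (min (ε * δ) (ε / M'))⟩, ?_, ?_⟩
  · refine ⟨fun x u hu => ?_, fun x u hu => ?_, hM'1, tA, tB, tAh, tBh, tg, ?_, ?_, ?_⟩
    · simp only [hinc]
      exact grad_step (h.grad x) hm4 (chi_pos _).le (chi_le_one _) (hτ _) u hu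
    · simp only [hinc]
      exact dual_step (h.grad x) hη hη4 hm (chi_pos _).le (chi_le_one _) (hτ _) (h.dual x) u hu
    · exact (apx_upd h.ag hm1 hδ0 tw1 tz1).mono (by rw [hpow]; linarith) hM'
    · exact (apx_upd h.aq hm1 hδ0 tw2 tz2).mono (by rw [hpow]; linarith) hM'
    · simp only [lt_inf_iff]
      exact ⟨by positivity, by positivity, div_pos hε0 (by linarith)⟩
  · refine ⟨hδ0, by simp only; linarith, fun x => by simp only [Stage.p]; ring, fun x => ?_, fun x => ?_,
      fun x v hv hx => ?_, min_le_left _ _, (min_le_right _ _).trans (min_le_left _ _),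
      (min_le_right _ _).trans (min_le_right _ _)⟩
    · simp only [add_sub_cancel_left]
      exact (abs_prim_le hδ0 tw1 tz1 x).trans (by linarith)
    · simp only [add_sub_cancel_left]
      exact (abs_prim_le hδ0 tw2 tz2 x).trans (by linarith)
    · simp only at hx ⊢
      have hp := h.p_lt hm1 x
      obtain ⟨b1, b2, -, -⟩ := one_sub_sq_bounds hp
      have hw1 : |S.w1 m x| ≤ 1 := by
        rw [Stage.w1, abs_of_nonneg (by positivity)]
        have : (1 - S.p m x ^ 2) ^ 2 ≤ 1 := pow_le_one₀ b1.le b2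
        linarith
      have hz1 : |S.A x| ≤ 1 := by linarith [h.abs_add_lt x, abs_nonneg (S.B x)]
      have s1 := snd_diff_prim (c := c) (m := m) hδ0 tw1 tz1 hw1 hz1 hv hx
      have s2 := h.tg.snd x (δ • v)
      have s3 : S.M * ‖δ • v‖ ^ 2 ≤ δ * (Λ * δ) := by
        have : ‖δ • v‖ ≤ δ := by
          rw [norm_smul, Real.norm_eq_abs, abs_of_pos hδ0]
          exact mul_le_of_le_one_right hδ0.le hv
        calc S.M * ‖δ • v‖ ^ 2 ≤ Λ * δ ^ 2 := by gcongr
          _ = _ := by ring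
      have e : S.g (x + δ • v) + prim c m δ (S.w1 m) S.A (x + δ • v)
          + (S.g (x - δ • v) + prim c m δ (S.w1 m) S.A (x - δ • v))
          - 2 * (S.g x + prim c m δ (S.w1 m) S.A x)
          + δ * (S.w1 m x * ((v.1 - m * v.2) ^ 2 / (1 + (v.1 - m * v.2) ^ 2)))
          = (prim c m δ (S.w1 m) S.A (x + δ • v) + prim c m δ (S.w1 m) S.A (x - δ • v)
            - 2 * prim c m δ (S.w1 m) S.A x
            + δ * (S.w1 m x * ((v.1 - m * v.2) ^ 2 / (1 + (v.1 - m * v.2) ^ 2))))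
          + (S.g (x + δ • v) + S.g (x - δ • v) - 2 * S.g x) := by ring
      rw [e]
      refine (abs_add_le _ _).trans ((add_le_add s1 (s2.trans s3)).trans ?_)
      rw [← mul_add]
      refine mul_le_mul_of_nonneg_left ?_ hδ0.le
      rw [← hε]
      linarith only [hδε, hδΛ0]

/-- The construction starts with `g = 0`. -/
lemma exists_zero_stage {η : ℝ} (hη : 0 < η) : ∃ S, Inv η 0 S := by
  have hap : ∀ b : ℝ, |b| ≤ 1 + 4 * η ^ 2 → Tame (1 + 4 * η ^ 2) (fun _ : ℝ × ℝ => b) :=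
    fun b hb => (Tame.const b).mono hb
  have h0 := hap 0 (by rw [abs_zero]; positivity)
  refine ⟨⟨fun _ => 0, fun _ => 0, fun _ => 0, fun _ => 1 + 4 * η ^ 2, fun _ => 0,
    fun x => (1 + 4 * η ^ 2) * x.2, 1 + 4 * η ^ 2, 1, 1⟩, ?_⟩
  refine ⟨fun x u _ => by simp, fun x u _ => ?_, ?_, h0, h0, h0,
    hap _ (abs_of_pos (a := 1 + 4 * η ^ 2) (by positivity)).le, h0, fun x y => ?_, fun x y => ?_, one_pos⟩
  · norm_num
    nlinarith [sq_nonneg u]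
  · show 1 ≤ 1 + 4 * η ^ 2
    nlinarith
  · simp; positivity
  · have : (1 + 4 * η ^ 2) * y.2 - (1 + 4 * η ^ 2) * x.2
        - (0 * (y.1 - x.1) + (1 + 4 * η ^ 2) * (y.2 - x.2)) = 0 := by ring
    simp only [this, abs_zero]
    norm_num
    positivity

/-! ### The limit function and the set of points with a transversal derivative -/

/-- A full run of the construction; every line `x₁ = c + m x₂` with rational `c`, `m` and
`|m| ≤ η` is treated infinitely often. -/
structure Run (η : ℝ) where
  c : ℕ → ℚ
  m : ℕ → ℚ
  F : ℕ → Stage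
  hm : ∀ k, |(m k : ℝ)| ≤ η
  often : ∀ c' m' : ℚ, |(m' : ℝ)| ≤ η → ∀ n, ∃ k, n ≤ k ∧ c k = c' ∧ m k = m'
  inv : ∀ k, Inv η k (F k)
  rel : ∀ k, Rel (c k) (m k) k (F k) (F (k + 1))

lemma exists_run {η : ℝ} (hη : 0 < η) (hη4 : η ≤ 1 / 4) : Nonempty (Run η) := by
  let T := {t : ℚ × ℚ // |(t.2 : ℝ)| ≤ η}
  have : Nonempty T := ⟨⟨(0, 0), by simpa using hη.le⟩⟩
  obtain ⟨f, hf⟩ := exists_surjective_nat T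
  let t : ℕ → T := fun k => f k.unpair.1
  obtain ⟨F, h1, h2⟩ := exists_seq_rel (Inv η) (fun k => Rel ((t k).1.1) ((t k).1.2) k)
    (exists_zero_stage hη) (fun k S h => exists_step hη hη4 (t k).2 h)
  refine ⟨⟨fun k => (t k).1.1, fun k => (t k).1.2, F, fun k => (t k).2, ?_, h1, h2⟩⟩
  intro c' m' hm n
  obtain ⟨a, ha⟩ := hf ⟨(c', m'), hm⟩
  refine ⟨Nat.pair a n, Nat.right_le_pair a n, ?_, ?_⟩ <;> simp [t, ha]

lemma exists_limit {u b : ℕ → ℝ} (hb : ∀ n, b (n + 1) ≤ b n / 2)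
    (hu : ∀ n, |u (n + 1) - u n| ≤ b n) :
    ∃ L, Tendsto u atTop (𝓝 L) ∧ ∀ k, |L - u k| ≤ 2 * b k := by
  have hb' : ∀ k n, b (k + n) ≤ b k / 2 ^ n := by
    intro k n
    induction n with
    | zero => simp
    | succ n ih =>
      have := hb (k + n)
      rw [← add_assoc, pow_succ, ← div_div]
      linarith
  have hd : ∀ k n, dist (u (k + n)) (u (k + (n + 1))) ≤ 2 * b k / 2 / 2 ^ n := by
    intro k n
    rw [dist_comm, Real.dist_eq, mul_div_cancel_left₀ _ two_ne_zero, ← add_assoc]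
    exact (hu _).trans (hb' k n)
  have hc : CauchySeq u := by
    refine cauchySeq_of_le_geometric_two (C := 2 * b 0) fun n => ?_
    simpa using hd 0 n
  obtain ⟨L, hL⟩ := cauchySeq_tendsto_of_complete hc
  refine ⟨L, hL, fun k => ?_⟩
  have hL' : Tendsto (fun n => u (k + n)) atTop (𝓝 L) := by
    simpa only [add_comm k] using (tendsto_add_atTop_iff_nat k).2 hL
  have := dist_le_of_le_geometric_two_of_tendsto₀ (hd k) hL'
  rwa [dist_comm, Real.dist_eq, add_zero] at this

/-- A function on an interval that is bounded below to first order with a quadratic error obeys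
the same bound without error. -/
lemma subdivide {φ : ℝ → ℝ} {a b C M : ℝ} (hab : a ≤ b)
    (h : ∀ s t, a ≤ s → s ≤ t → t ≤ b → -C * (t - s) - M * (t - s) ^ 2 ≤ φ t - φ s) :
    -C * (b - a) ≤ φ b - φ a := by
  have key : ∀ N : ℕ, 0 < N → -C * (b - a) - M * (b - a) ^ 2 / N ≤ φ b - φ a := by
    intro N hN
    have hN' : (0:ℝ) < N := by exact_mod_cast hN
    set d := (b - a) / N with hd
    have hd0 : 0 ≤ d := div_nonneg (by linarith) hN'.le
    have hNd : N * d = b - a := by rw [hd]; field_simp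
    have ind : ∀ i : ℕ, i ≤ N → i * (-C * d - M * d ^ 2) ≤ φ (a + i * d) - φ a := by
      intro i
      induction i with
      | zero => simp
      | succ i ih =>
        intro hi
        have h1 := ih (by omega)
        have hi' : ((i + 1 : ℕ) : ℝ) * d ≤ N * d :=
          mul_le_mul_of_nonneg_right (by exact_mod_cast hi) hd0
        have hi0 : 0 ≤ (i:ℝ) * d := by positivity
        push_cast at hi' ⊢
        have h2 := h (a + i * d) (a + (i + 1) * d) (by linarith) (by linarith) (by linarith)
        have e : a + (i + 1) * d - (a + i * d) = d := by ring
        rw [e] at h2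
        linarith
    have h3 := ind N le_rfl
    rw [hNd, add_sub_cancel] at h3
    refine le_trans (le_of_eq ?_) h3
    rw [hd]; field_simp
  have hlim : Tendsto (fun N : ℕ => -C * (b - a) - M * (b - a) ^ 2 / (N : ℝ)) atTop
      (𝓝 (-C * (b - a) - 0)) :=
    tendsto_const_nhds.sub (tendsto_const_div_atTop_nhds_zero_nat _)
  rw [sub_zero] at hlim
  exact le_of_tendsto hlim (eventually_atTop.2 ⟨1, fun N hN => key N hN⟩)

/-- A Lipschitz estimate without quadratic error, which `subdivide` removes. -/
lemma Inv.lip3 {η : ℝ} {k : ℕ} {S : Stage} (h : Inv η k S) (x y : ℝ × ℝ) :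
    |S.g y - S.g x| ≤ 3 * ‖y - x‖ := by
  set r := ‖y - x‖ with hr
  have hl : ∀ s t : ℝ, s ≤ t → |S.g (x + t • (y - x)) - S.g (x + s • (y - x))|
      ≤ 3 * r * (t - s) + S.M * r ^ 2 * (t - s) ^ 2 := by
    intro s t hst
    have e : ‖x + t • (y - x) - (x + s • (y - x))‖ = (t - s) * r := by
      rw [add_sub_add_left_eq_sub, ← sub_smul, norm_smul, Real.norm_eq_abs,
        abs_of_nonneg (by linarith)]
    have := h.lip (x + s • (y - x)) (x + t • (y - x))
    rw [e] at this
    refine this.trans (le_of_eq (by ring))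
  have h1 := subdivide (φ := fun t => S.g (x + t • (y - x))) (a := 0) (b := 1) (C := 3 * r)
    (M := S.M * r ^ 2) zero_le_one (fun s t _ hst _ => by
      have := abs_le.mp (hl s t hst); linarith [this.1])
  have h2 := subdivide (φ := fun t => -S.g (x + t • (y - x))) (a := 0) (b := 1) (C := 3 * r)
    (M := S.M * r ^ 2) zero_le_one (fun s t _ hst _ => by
      have := abs_le.mp (hl s t hst); linarith [this.2])
  simp only [one_smul, zero_smul, add_zero, add_sub_cancel] at h1 h2
  rw [abs_le]; constructor <;> linarith

namespace Run
variable {η : ℝ} (R : Run η)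

lemma exists_h (x : ℝ × ℝ) : ∃ L, Tendsto (fun k => (R.F k).g x) atTop (𝓝 L) ∧
    ∀ k, |L - (R.F k).g x| ≤ 2 * (R.F k).b :=
  exists_limit (fun n => (R.rel n).b_half) (fun n => (R.rel n).g_sub x)

lemma exists_q (x : ℝ × ℝ) : ∃ L, Tendsto (fun k => (R.F k).q x) atTop (𝓝 L) ∧
    ∀ k, |L - (R.F k).q x| ≤ 2 * (R.F k).b :=
  exists_limit (fun n => (R.rel n).b_half) (fun n => (R.rel n).q_sub x)

/-- The limit of the functions `g`. -/
def h (x : ℝ × ℝ) : ℝ := (R.exists_h x).choose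

/-- The limit of the functions `q`. -/
def q (x : ℝ × ℝ) : ℝ := (R.exists_q x).choose

lemma tendsto_h (x : ℝ × ℝ) : Tendsto (fun k => (R.F k).g x) atTop (𝓝 (R.h x)) :=
  (R.exists_h x).choose_spec.1

lemma h_sub (k : ℕ) (x : ℝ × ℝ) : |R.h x - (R.F k).g x| ≤ 2 * (R.F k).b :=
  (R.exists_h x).choose_spec.2 k

lemma tendsto_q (x : ℝ × ℝ) : Tendsto (fun k => (R.F k).q x) atTop (𝓝 (R.q x)) :=
  (R.exists_q x).choose_spec.1

lemma q_sub (k : ℕ) (x : ℝ × ℝ) : |R.q x - (R.F k).q x| ≤ 2 * (R.F k).b :=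
  (R.exists_q x).choose_spec.2 k

lemma lip_h (x y : ℝ × ℝ) : |R.h y - R.h x| ≤ 3 * ‖y - x‖ :=
  le_of_tendsto ((R.tendsto_h y).sub (R.tendsto_h x)).abs
    (Eventually.of_forall fun k => (R.inv k).lip3 x y)

/-- The width of the bump added around the line in step `k`. -/
def δ (k : ℕ) : ℝ := (R.F (k + 1)).δ

/-- The derivative, in the direction of the line treated in step `k`, of the function `g` at that
stage. -/
def p (k : ℕ) (x : ℝ × ℝ) : ℝ := (R.F k).p (R.m k) x

/-- The strip around the line treated in step `k`; it is thin compared to `δ k`. -/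
def T (k : ℕ) : Set (ℝ × ℝ) := {x | |sd (R.c k) (R.m k) (R.δ k) x| < (1 / 2) ^ k}

/-- The points that lie close to some line of index at least `n`. -/
def O (n : ℕ) : Set (ℝ × ℝ) := ⋃ k, ⋃ (_ : n ≤ k), R.T k

/-- The points that lie close to infinitely many of the lines. -/
def E : Set (ℝ × ℝ) := ⋂ n, R.O n

/-- The points of `E` at which, in the directions of the lines close by, the derivatives of the
functions `g` become maximal. -/
def P : Set (ℝ × ℝ) :=
  R.E ∩ {x | ∀ j : ℕ, ∃ N, ∀ k, N ≤ k → x ∈ R.T k → 1 - R.p k x ^ 2 < 1 / ((j : ℝ) + 1)}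

lemma δ_pos (k : ℕ) : 0 < R.δ k := (R.rel k).δ_pos

lemma continuous_sd (c m δ : ℝ) : Continuous (sd c m δ) := by
  unfold sd; fun_prop

lemma isOpen_T (k : ℕ) : IsOpen (R.T k) :=
  isOpen_lt (continuous_sd _ _ _).abs continuous_const

lemma isOpen_O (n : ℕ) : IsOpen (R.O n) :=
  isOpen_iUnion fun k => isOpen_iUnion fun _ => R.isOpen_T k

lemma line_mem (c μ : ℚ) (hμ : |(μ:ℝ)| ≤ η) (s : ℝ) : ((c:ℝ) + μ * s, s) ∈ R.E := by
  refine mem_iInter.2 fun n => ?_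
  obtain ⟨k, hk, rfl, rfl⟩ := R.often c μ hμ n
  refine mem_iUnion₂.2 ⟨k, hk, ?_⟩
  simp only [T, mem_ofPred_eq, sd]
  norm_num

/-- `E` is a universal differentiability set. -/
lemma exists_diff (hη : 0 < η) (hη4 : η ≤ 1 / 4) {f : ℝ × ℝ → ℝ} {K : NNReal}
    (hf : LipschitzWith K f) : ∃ x ∈ R.E, DifferentiableAt ℝ f x :=
  uds_prod hη hη4 R.isOpen_O R.line_mem hf

lemma _root_.UDS.Tame.continuous {C : ℝ} {f : ℝ × ℝ → ℝ} (hf : Tame C f) : Continuous f :=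
  (LipschitzWith.of_dist_le_mul (K := ⟨C, hf.nonneg⟩) fun x y => by
    rw [Real.dist_eq, dist_eq_norm]; exact hf.lip x y).continuous

lemma continuous_p (k : ℕ) : Continuous (R.p k) :=
  ((R.inv k).tA.continuous.mul continuous_const).add (R.inv k).tB.continuous

lemma measurableSet_P : MeasurableSet R.P := by
  refine (MeasurableSet.iInter fun n => (R.isOpen_O n).measurableSet).inter ?_
  have e : {x | ∀ j : ℕ, ∃ N, ∀ k, N ≤ k → x ∈ R.T k → 1 - R.p k x ^ 2 < 1 / ((j : ℝ) + 1)}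
      = ⋂ j : ℕ, ⋃ N : ℕ, ⋂ k : ℕ, ⋂ (_ : N ≤ k),
        ((R.T k)ᶜ ∪ {x | 1 - R.p k x ^ 2 < 1 / ((j : ℝ) + 1)}) := by
    ext x
    simp [imp_iff_not_or]
  rw [e]
  refine MeasurableSet.iInter fun j => MeasurableSet.iUnion fun N => MeasurableSet.iInter fun k =>
    MeasurableSet.iInter fun _ => (R.isOpen_T k).measurableSet.compl.union ?_
  exact (isOpen_lt (continuous_const.sub ((R.continuous_p k).pow 2))
    continuous_const).measurableSet

/-- The second difference of `h` at scale `δ k` at points of the `k`-th strip. -/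
lemma snd_h {k : ℕ} {x v : ℝ × ℝ} (hx : x ∈ R.T k) (hv : ‖v‖ ≤ 1) :
    |R.h (x + R.δ k • v) + R.h (x - R.δ k • v) - 2 * R.h x + R.δ k * (1 / 8 * (1 - R.p k x ^ 2) ^ 2
      * ((v.1 - R.m k * v.2) ^ 2 / (1 + (v.1 - R.m k * v.2) ^ 2)))| ≤ R.δ k * (15 * (1 / 2) ^ k) := by
  have h1 := (R.rel k).snd x v hv (le_of_lt hx)
  have h2 := (R.rel k).b_le_δ
  have h3 := abs_le.mp (R.h_sub (k + 1) (x + R.δ k • v))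
  have h4 := abs_le.mp (R.h_sub (k + 1) (x - R.δ k • v))
  have h5 := abs_le.mp (R.h_sub (k + 1) x)
  have h6 := abs_le.mp h1
  simp only [Stage.w1] at h6
  simp only [δ, p] at *
  rw [abs_le]
  constructor
  · linarith only [h6.1, h3.1, h4.1, h5.2, h2]
  · linarith only [h6.2, h3.2, h4.2, h5.1, h2]

lemma tendsto_δ : Tendsto R.δ atTop (𝓝 0) :=
  squeeze_zero (fun k => (R.δ_pos k).le) (fun k => (R.rel k).δ_le)
    (tendsto_pow_atTop_nhds_zero_of_lt_one (by norm_num) (by norm_num))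

/-- Where `h` has a directional derivative transversal to the lines, its derivative along them is
extremal. -/
lemma mem_P {x v : ℝ × ℝ} (hx : x ∈ R.E) (hv : ‖v‖ ≤ 1) {ζ : ℝ} (hζ : 0 < ζ)
    (hvζ : ∀ k, ζ ≤ |v.1 - R.m k * v.2|) {L : ℝ}
    (hL : Tendsto (fun t : ℝ => (R.h (x + t • v) - R.h x) / t) (𝓝[≠] (0:ℝ)) (𝓝 L)) : x ∈ R.P := by
  refine ⟨hx, fun j => ?_⟩
  have hp : Tendsto R.δ atTop (𝓝[≠] 0) :=
    tendsto_nhdsWithin_iff.2 ⟨R.tendsto_δ, Eventually.of_forall fun k => (R.δ_pos k).ne'⟩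
  have hn : Tendsto (fun k => -R.δ k) atTop (𝓝[≠] 0) :=
    tendsto_nhdsWithin_iff.2 ⟨by simpa using R.tendsto_δ.neg,
      Eventually.of_forall fun k => neg_ne_zero.2 (R.δ_pos k).ne'⟩
  -- the difference quotients at `δ k` and at `-δ k` have the same limit
  have h1 := (hL.comp hp).sub (hL.comp hn)
  rw [sub_self] at h1
  have h2 : Tendsto (fun k : ℕ => 15 * (1 / 2 : ℝ) ^ k) atTop (𝓝 (15 * 0)) :=
    (tendsto_pow_atTop_nhds_zero_of_lt_one (by norm_num) (by norm_num)).const_mul _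
  rw [mul_zero] at h2
  have h3 := h2.sub h1
  rw [sub_zero] at h3
  set κ := ζ ^ 2 / (1 + ζ ^ 2) with hκ
  have hκ0 : 0 < κ := by positivity
  set ε : ℝ := 1 / ((j : ℝ) + 1) with hε
  have hε0 : 0 < ε := by positivity
  obtain ⟨N, hN⟩ := eventually_atTop.1 (h3.eventually_lt_const
    (show (0:ℝ) < 1 / 8 * ε ^ 2 * κ by positivity))
  refine ⟨N, fun k hk hxk => ?_⟩
  have h4 := hN k hk
  have h5 := (abs_le.mp (R.snd_h hxk hv)).2
  have hδ := R.δ_pos k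
  simp only [Function.comp] at h4
  set l := v.1 - R.m k * v.2
  have hl : κ ≤ l ^ 2 / (1 + l ^ 2) := by
    rw [hκ, div_le_div_iff₀ (by positivity) (by positivity)]
    have : ζ ^ 2 ≤ l ^ 2 := by rw [← sq_abs l]; gcongr; exact hvζ k
    nlinarith
  have e : (R.h (x + R.δ k • v) - R.h x) / R.δ k - (R.h (x + (-R.δ k) • v) - R.h x) / (-R.δ k)
      = (R.h (x + R.δ k • v) + R.h (x - R.δ k • v) - 2 * R.h x) / R.δ k := by
    rw [neg_smul, ← sub_eq_add_neg]; field_simp; ring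
  rw [e] at h4
  set D := R.h (x + R.δ k • v) + R.h (x - R.δ k • v) - 2 * R.h x
  have h6 : D / R.δ k + 1 / 8 * (1 - R.p k x ^ 2) ^ 2 * (l ^ 2 / (1 + l ^ 2)) ≤ 15 * (1 / 2) ^ k := by
    have : D / R.δ k + 1 / 8 * (1 - R.p k x ^ 2) ^ 2 * (l ^ 2 / (1 + l ^ 2))
      = (D + R.δ k * (1 / 8 * (1 - R.p k x ^ 2) ^ 2 * (l ^ 2 / (1 + l ^ 2)))) / R.δ k := by
      field_simp
    rw [this, div_le_iff₀ hδ]; linarith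
  have h7 : 1 / 8 * (1 - R.p k x ^ 2) ^ 2 * κ ≤ 1 / 8 * (1 - R.p k x ^ 2) ^ 2
      * (l ^ 2 / (1 + l ^ 2)) := by gcongr
  have h8 : (1 - R.p k x ^ 2) ^ 2 * κ < ε ^ 2 * κ := by linarith only [h4, h6, h7]
  exact lt_of_pow_lt_pow_left₀ 2 hε0.le (lt_of_mul_lt_mul_right h8 hκ0.le)

end Run

/-! ### Pure unrectifiability -/

/-- The dual affine function is at least `1 / (1 - p ^ 2)`, and in particular nonnegative. -/
lemma Inv.nonneg_dual {η : ℝ} {k : ℕ} {S : Stage} (hη : 0 < η) (hη4 : η ≤ 1 / 4) (h : Inv η k S)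
    (x : ℝ × ℝ) {u : ℝ} (hu : |u| ≤ 2 * η) : 1 / (1 - S.p u x ^ 2) ≤ S.Ah x * u + S.Bh x ∧
      0 ≤ S.Ah x * u + S.Bh x := by
  have h1 := h.dual x u hu
  have h2 := (one_sub_sq_bounds (h.grad x u (by linarith))).1
  have h3 : 0 < 1 / (1 - (S.A x * u + S.B x) ^ 2) := by positivity
  have h4 : u ^ 2 ≤ (2 * η) ^ 2 := by rw [← sq_abs u]; gcongr
  simp only [Stage.p]
  constructor <;> nlinarith

/-- The increase of `q` along a nearly vertical step. -/
lemma Inv.incr {η : ℝ} {k : ℕ} {S : Stage} (hη : 0 < η) (hη4 : η ≤ 1 / 4) (h : Inv η k S)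
    {x y : ℝ × ℝ} {m N ρ σ : ℝ} (hm : |m| ≤ η) (hN : N ≤ S.Ah x * m + S.Bh x) (hN0 : 0 ≤ N)
    (hσ : σ = 1 ∨ σ = -1) (hρ : 0 ≤ ρ) (h1 : |y.1 - x.1| ≤ 3 / 2 * η * |y.2 - x.2|)
    (h2 : ρ / 4 ≤ σ * (y.2 - x.2)) (h3 : ‖y - x‖ ≤ 2 * ρ) :
    ρ / 4 * (N / 6) - 4 * ρ - 4 * S.M * ρ ^ 2 ≤ σ * (S.q y - S.q x) := by
  have hσ1 : |σ| = 1 := by rcases hσ with rfl | rfl <;> simp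
  have hM := h.one_le
  have hk : (0:ℝ) < (1 / 2) ^ k := by positivity
  have ha : |S.q y - S.q x - (S.Ah x * (y.1 - x.1) + S.Bh x * (y.2 - x.2))|
      ≤ 4 * ρ + 4 * S.M * ρ ^ 2 := by
    refine (h.aq x y).trans ?_
    have e1 : (2 - 2 * (1 / 2) ^ k) * ‖y - x‖ ≤ 2 * (2 * ρ) :=
      mul_le_mul (by linarith) h3 (norm_nonneg _) (by norm_num)
    have e2 : S.M * ‖y - x‖ ^ 2 ≤ S.M * (2 * ρ) ^ 2 := by gcongr
    linarith
  have hb : |σ * (S.q y - S.q x - (S.Ah x * (y.1 - x.1) + S.Bh x * (y.2 - x.2)))|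
      ≤ 4 * ρ + 4 * S.M * ρ ^ 2 := by rwa [abs_mul, hσ1, one_mul]
  have hb' := (abs_le.mp hb).1
  suffices hs : ρ / 4 * (N / 6) ≤ σ * (S.Ah x * (y.1 - x.1) + S.Bh x * (y.2 - x.2)) by
    linarith
  set d1 := y.1 - x.1
  set d2 := y.2 - x.2
  by_cases hd : d2 = 0
  · rw [hd, abs_zero, mul_zero, abs_nonpos_iff] at h1
    rw [hd, mul_zero] at h2
    have : ρ = 0 := by linarith
    rw [hd, h1, this]; simp
  · have hu : |d1 / d2| ≤ 3 / 2 * η := by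
      rw [abs_div, div_le_iff₀ (abs_pos.2 hd)]; exact h1
    have h4 := affine_lower hη (fun u hu => (h.nonneg_dual hη hη4 x hu).2) hm hu hN hN0
    have e : σ * (S.Ah x * d1 + S.Bh x * d2) = (σ * d2) * (S.Ah x * (d1 / d2) + S.Bh x) := by
      field_simp
    rw [e]
    exact mul_le_mul h2 h4 (by positivity) (by linarith)

/-- A `C¹` curve is locally close to its tangents. -/
lemma chord {a b : ℝ} {γ γ' : ℝ → ℝ × ℝ} (hc : ContinuousOn γ' (Icc a b))
    (hd : ∀ t ∈ Icc a b, HasDerivWithinAt γ (γ' t) (Icc a b) t) {t0 : ℝ} (ht0 : t0 ∈ Icc a b)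
    {ε : ℝ} (hε : 0 < ε) : ∃ r > 0, ∀ s ∈ Icc a b ∩ ball t0 r, ∀ t ∈ Icc a b ∩ ball t0 r,
      ‖γ t - γ s - (t - s) • γ' t0‖ ≤ ε * |t - s| := by
  obtain ⟨r, hr, h⟩ := Metric.continuousWithinAt_iff.1 (hc t0 ht0) ε hε
  refine ⟨r, hr, fun s hs t ht => ?_⟩
  have key := Convex.norm_image_sub_le_of_norm_hasDerivWithin_le (𝕜 := ℝ)
    (f := fun t => γ t - t • γ' t0) (f' := fun t => γ' t - γ' t0) (s := Icc a b ∩ ball t0 r)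
    (C := ε) (x := s) (y := t) (fun z hz => ?_) (fun z hz => ?_)
    ((convex_Icc a b).inter (convex_ball t0 r)) hs ht
  · simp only [Real.norm_eq_abs] at key
    have e : γ t - γ s - (t - s) • γ' t0 = γ t - t • γ' t0 - (γ s - s • γ' t0) := by
      rw [sub_smul]; abel
    rw [e]; exact key
  · have := ((hd z hz.1).mono inter_subset_left).sub
      (((hasDerivAt_id z).smul_const (γ' t0)).hasDerivWithinAt (s := Icc a b ∩ ball t0 r))
    rw [one_smul] at this
    exact this
  · rw [← dist_eq_norm]; exact (h hz.1 hz.2).le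

namespace Run
variable {η : ℝ} (R : Run η)

/-- A curve crossing the lines transversally meets `E` in a null set. -/
lemma null_transversal {γ : ℝ → ℝ × ℝ} {J : Set ℝ} {κ : ℝ} (hκ : 0 < κ)
    (h : ∀ s ∈ J, ∀ t ∈ J, ∀ k, κ * |t - s|
      ≤ |((γ t).1 - (γ s).1) - R.m k * ((γ t).2 - (γ s).2)|) :
    volume (γ ⁻¹' R.E ∩ J) = 0 := by
  let V : ℕ → Set ℝ := fun k => γ ⁻¹' R.T k ∩ J
  have hV : ∀ k, volume (V k) ≤ ENNReal.ofReal (2 / κ * (1 / 2) ^ k) := by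
    intro k
    refine (Real.volume_le_diam _).trans (Metric.ediam_le fun s hs t ht => ?_)
    rw [edist_dist, dist_comm]
    refine ENNReal.ofReal_le_ofReal ?_
    have h1 := h s hs.2 t ht.2 k
    have h2 : |sd (R.c k) (R.m k) (R.δ k) (γ s)| < (1 / 2) ^ k := hs.1
    have h3 : |sd (R.c k) (R.m k) (R.δ k) (γ t)| < (1 / 2) ^ k := ht.1
    have h4 : |sd (R.c k) (R.m k) (R.δ k) (γ t) - sd (R.c k) (R.m k) (R.δ k) (γ s)|
        ≤ 2 * (1 / 2) ^ k := (abs_sub _ _).trans (by linarith)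
    have hδ := R.δ_pos k
    have hδ1 : R.δ k ≤ 1 := (R.rel k).δ_le.trans (pow_le_one₀ (by norm_num) (by norm_num))
    rw [sd_sub, abs_div, abs_of_pos hδ, div_le_iff₀ hδ] at h4
    have h5 : 2 * (1 / 2 : ℝ) ^ k * R.δ k ≤ 2 * (1 / 2) ^ k :=
      mul_le_of_le_one_right (by positivity) hδ1
    rw [Real.dist_eq, div_mul_eq_mul_div, le_div_iff₀ hκ]
    linarith
  have hsum : ∑' k, volume (V k) ≠ ⊤ := by
    have hs : Summable fun k : ℕ => 2 / κ * (1 / 2 : ℝ) ^ k :=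
      (summable_geometric_of_lt_one (by norm_num) (by norm_num)).mul_left _
    exact ne_top_of_le_ne_top hs.tsum_ofReal_ne_top (ENNReal.tsum_le_tsum hV)
  refine measure_mono_null (fun t ht => ?_) (measure_limsup_atTop_eq_zero hsum)
  rw [limsup_eq_iInf_iSup_of_nat]
  simp only [iInf_eq_iInter, iSup_eq_iUnion, mem_iInter]
  intro n
  obtain ⟨k, hk, hk'⟩ := mem_iUnion₂.1 (mem_iInter.1 ht.1 n)
  exact mem_iUnion₂.2 ⟨k, hk, hk', ht.2⟩

/-- A nearly vertical curve meets `P` in a null set: along the curve `σ * q` is monotone up to a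
linear term, hence differentiable almost everywhere, while its difference quotients are unbounded
at points of `P`. -/
lemma null_vertical (hη : 0 < η) (hη4 : η ≤ 1 / 4) {γ : ℝ → ℝ × ℝ} {u v σ : ℝ}
    (hσ : σ = 1 ∨ σ = -1)
    (h : ∀ s ∈ Ioo u v, ∀ t ∈ Ioo u v, s ≤ t →
      |(γ t).1 - (γ s).1| ≤ 3 / 2 * η * |(γ t).2 - (γ s).2| ∧
      (t - s) / 4 ≤ σ * ((γ t).2 - (γ s).2) ∧ ‖γ t - γ s‖ ≤ 2 * (t - s)) :
    volume (γ ⁻¹' R.P ∩ Ioo u v) = 0 := by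
  have mono : MonotoneOn (fun t => σ * R.q (γ t) + 4 * t) (Ioo u v) := by
    intro s hs t ht hst
    have hk : ∀ k, -4 * (t - s) ≤ σ * (R.F k).q (γ t) - σ * (R.F k).q (γ s) := by
      intro k
      refine subdivide (φ := fun t => σ * (R.F k).q (γ t)) (M := 4 * (R.F k).M) hst
        fun s' t' h1 h2 h3 => ?_
      obtain ⟨c1, c2, c3⟩ := h s' ⟨by linarith [hs.1], by linarith [ht.2]⟩ t'
        ⟨by linarith [hs.1], by linarith [ht.2]⟩ h2
      have h0 := ((R.inv k).nonneg_dual hη hη4 (γ s') (u := 0) (by simpa using hη.le)).2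
      have := (R.inv k).incr hη hη4 (m := 0) (by simpa using hη.le) h0 le_rfl hσ
        (sub_nonneg.2 h2) c1 c2 c3
      linarith
    have := ge_of_tendsto (((R.tendsto_q (γ t)).const_mul σ).sub
      ((R.tendsto_q (γ s)).const_mul σ)) (Eventually.of_forall hk)
    simp only
    linarith
  have hae := mono.ae_differentiableWithinAt measurableSet_Ioo
  rw [ae_restrict_iff' measurableSet_Ioo] at hae
  refine measure_mono_null (fun t ht => ?_) hae
  rintro hdt
  have hd := ((hdt ht.2).differentiableAt (Ioo_mem_nhds ht.2.1 ht.2.2)).hasDerivAt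
  set D := deriv (fun t => σ * R.q (γ t) + 4 * t) t
  have hslope := hd.tendsto_slope_zero
  -- at scale `ρ k` the quadratic error of stage `k + 1` is dominated by the linear one, and
  -- what the later stages add to `q` is at most of order `ρ k`
  let ρ : ℕ → ℝ := fun k => (1 / 2) ^ k / (R.F (k + 1)).M
  have hM : ∀ k, 1 ≤ (R.F (k + 1)).M := fun k => (R.inv (k + 1)).one_le
  have hρ0 : ∀ k, 0 < ρ k := fun k => div_pos (by positivity) (by linarith [hM k])
  have hρt : Tendsto ρ atTop (𝓝 0) :=
    squeeze_zero (fun k => (hρ0 k).le)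
      (fun k => div_le_self (by positivity) (hM k))
      (tendsto_pow_atTop_nhds_zero_of_lt_one (by norm_num) (by norm_num))
  have hρ : Tendsto ρ atTop (𝓝[≠] 0) :=
    tendsto_nhdsWithin_iff.2 ⟨hρt, Eventually.of_forall fun k => (hρ0 k).ne'⟩
  have h1 := (hslope.comp hρ).eventually_lt_const (lt_add_one D)
  have h2 : ∀ᶠ k in atTop, t + ρ k < v :=
    (tendsto_const_nhds.add hρt).eventually_lt_const (by simpa using ht.2.2)
  obtain ⟨j, hj⟩ := exists_nat_gt (24 * (D + 1 + 12))
  obtain ⟨N1, hN1⟩ := ht.1.2 j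
  obtain ⟨N2, hN2⟩ := eventually_atTop.1 (h1.and h2)
  obtain ⟨k, hk, hxk⟩ := mem_iUnion₂.1 (mem_iInter.1 ht.1.1 (max N1 N2))
  obtain ⟨h3, h4⟩ := hN2 k ((le_max_right _ _).trans hk)
  have h5 := hN1 k ((le_max_left _ _).trans hk) hxk
  have hρk := hρ0 k
  obtain ⟨c1, c2, c3⟩ := h t ht.2 (t + ρ k) ⟨by linarith [ht.2.1], h4⟩ (by linarith)
  rw [add_sub_cancel_left] at c2 c3
  have hmk := R.hm k
  have hdual := ((R.inv (k + 1)).nonneg_dual hη hη4 (γ t) (u := R.m k) (by linarith)).1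
  rw [(R.rel k).p_eq] at hdual
  have hj0 : (0:ℝ) ≤ j := j.cast_nonneg
  have hpp := (one_sub_sq_bounds ((R.inv k).p_lt (m := R.m k) (by linarith) (γ t))).1
  have hNj : (j:ℝ) + 1 ≤ 1 / (1 - (R.F k).p (R.m k) (γ t) ^ 2) := by
    rw [le_div_iff₀ hpp]
    have : 1 - (R.F k).p (R.m k) (γ t) ^ 2 < 1 / ((j:ℝ) + 1) := h5
    rw [lt_div_iff₀ (by positivity)] at this
    linarith
  have h6 := (R.inv (k + 1)).incr hη hη4 hmk (hNj.trans hdual) (by positivity) hσ hρk.le c1 c2 c3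
  have hMρ : (R.F (k + 1)).M * ρ k ^ 2 ≤ ρ k := by
    have e : (R.F (k + 1)).M * ρ k = (1 / 2) ^ k := by
      simp only [ρ]; field_simp [(by linarith [hM k] : (R.F (k + 1)).M ≠ 0)]
    have : (1 / 2 : ℝ) ^ k ≤ 1 := pow_le_one₀ (by norm_num) (by norm_num)
    nlinarith
  have hb : (R.F (k + 1)).b ≤ ρ k := (R.rel k).b_le_M
  have q1 := abs_le.mp (R.q_sub (k + 1) (γ t))
  have q2 := abs_le.mp (R.q_sub (k + 1) (γ (t + ρ k)))
  have h7 : σ * ((R.F (k + 1)).q (γ (t + ρ k)) - (R.F (k + 1)).q (γ t)) - 4 * ρ k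
      ≤ σ * R.q (γ (t + ρ k)) - σ * R.q (γ t) := by
    rcases hσ with rfl | rfl <;> linarith [q1.1, q1.2, q2.1, q2.2]
  simp only [Function.comp, smul_eq_mul] at h3
  rw [inv_mul_lt_iff₀ hρk] at h3
  have h8 : ρ k * (((j:ℝ) + 1) / 24 - 12) < ρ k * (D + 1) := by nlinarith
  have := lt_of_mul_lt_mul_left h8 hρk.le
  linarith

/-- `P` is purely unrectifiable. -/
lemma null_curve (hη : 0 < η) (hη4 : η ≤ 1 / 4) {a b : ℝ} {γ γ' : ℝ → ℝ × ℝ}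
    (hc : ContinuousOn γ' (Icc a b))
    (hd : ∀ t ∈ Icc a b, HasDerivWithinAt γ (γ' t) (Icc a b) t)
    (hn : ∀ t ∈ Icc a b, (γ' t).1 ^ 2 + (γ' t).2 ^ 2 = 1) :
    volume (γ ⁻¹' R.P ∩ Icc a b) = 0 := by
  refine measure_null_of_locally_null _ fun t0 ht0 => ?_
  suffices hs : ∃ r > 0, volume (γ ⁻¹' R.P ∩ (Icc a b ∩ ball t0 r)) = 0 by
    obtain ⟨r, hr, h⟩ := hs
    refine ⟨_, inter_mem_nhdsWithin _ (ball_mem_nhds t0 hr), ?_⟩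
    rwa [inter_assoc]
  have ht0' := ht0.2
  set g1 := (γ' t0).1 with hg1
  set g2 := (γ' t0).2 with hg2
  have hcomp : ∀ {ε : ℝ} {s t : ℝ}, ‖γ t - γ s - (t - s) • γ' t0‖ ≤ ε * |t - s| →
      |(γ t).1 - (γ s).1 - (t - s) * g1| ≤ ε * |t - s| ∧
      |(γ t).2 - (γ s).2 - (t - s) * g2| ≤ ε * |t - s| := by
    intro ε s t h
    exact ⟨(norm_fst_le _).trans h, (norm_snd_le _).trans h⟩
  -- either the tangent is transversal to all lines, or it is nearly vertical
  rcases lt_or_ge (η * |g2|) |g1| with hlt | hge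
  · obtain ⟨r, hr, h⟩ := chord hc hd ht0' (ε := (|g1| - η * |g2|) / 4) (by linarith)
    refine ⟨r, hr, measure_mono_null (inter_subset_inter_left _ (preimage_mono inter_subset_left))
      (R.null_transversal (κ := (|g1| - η * |g2|) / 2) (by linarith) fun s hs t ht k => ?_)⟩
    obtain ⟨e1, e2⟩ := hcomp (h s hs t ht)
    have e3 := abs_mul_le ((R.hm k).trans (by linarith : η ≤ 1)) e2
    have e4 := abs_mul_le (R.hm k) (le_refl |g2|)
    have e5 : |g1| - η * |g2| ≤ |g1 - R.m k * g2| := by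
      linarith [abs_sub_abs_le_abs_sub g1 (R.m k * g2)]
    have e6 := mul_le_mul_of_nonneg_left e5 (abs_nonneg (t - s))
    rw [← abs_mul] at e6
    have e7 : (t - s) * (g1 - R.m k * g2) = ((γ t).1 - (γ s).1 - R.m k * ((γ t).2 - (γ s).2))
      - ((γ t).1 - (γ s).1 - (t - s) * g1) + R.m k * ((γ t).2 - (γ s).2 - (t - s) * g2) := by ring
    have e8 := (abs_add_le _ _).trans (add_le_add_left (abs_sub ((γ t).1 - (γ s).1 - R.m k
      * ((γ t).2 - (γ s).2)) ((γ t).1 - (γ s).1 - (t - s) * g1))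
      |R.m k * ((γ t).2 - (γ s).2 - (t - s) * g2)|)
    rw [← e7] at e8
    linarith
  · have hsq := hn t0 ht0'
    rw [← hg1, ← hg2, ← sq_abs g1, ← sq_abs g2] at hsq
    have a1 := abs_nonneg g1
    have a2 := abs_nonneg g2
    have hg12 : |g1| ≤ 1 / 4 * |g2| := hge.trans (mul_le_mul_of_nonneg_right hη4 a2)
    have hg2l : 1 / 2 ≤ |g2| := by nlinarith
    have hg2u : |g2| ≤ 1 := by nlinarith
    obtain ⟨r, hr, h⟩ := chord hc hd ht0' (ε := η / 8) (by linarith)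
    obtain ⟨σ, hσ, hσ2⟩ : ∃ σ : ℝ, (σ = 1 ∨ σ = -1) ∧ σ * g2 = |g2| := by
      rcases abs_cases g2 with ⟨e, _⟩ | ⟨e, _⟩
      · exact ⟨1, Or.inl rfl, by rw [e, one_mul]⟩
      · exact ⟨-1, Or.inr rfl, by rw [e]; ring⟩
    have hσ1 : |σ| = 1 := by rcases hσ with rfl | rfl <;> simp
    have hJ : Ioo (max a (t0 - r)) (min b (t0 + r)) ⊆ Icc a b ∩ ball t0 r := by
      rintro t ⟨h1, h2⟩
      rw [max_lt_iff] at h1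
      rw [lt_min_iff] at h2
      rw [Real.ball_eq_Ioo]
      exact ⟨⟨h1.1.le, h2.1.le⟩, h1.2, h2.2⟩
    have key := R.null_vertical hη hη4 (γ := γ) (u := max a (t0 - r)) (v := min b (t0 + r)) hσ ?_
    · refine ⟨r, hr, measure_mono_null (t := (γ ⁻¹' R.P ∩ Ioo (max a (t0 - r)) (min b (t0 + r)))
        ∪ {a, b}) ?_ (measure_union_null key ((Set.toFinite _).measure_zero _))⟩
      rintro t ⟨hP, ⟨h1, h2⟩, h3⟩
      rw [Real.ball_eq_Ioo] at h3
      rcases eq_or_lt_of_le h1 with rfl | h1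
      · simp
      rcases eq_or_lt_of_le h2 with rfl | h2
      · simp
      exact Or.inl ⟨hP, max_lt h1 h3.1, lt_min h2 h3.2⟩
    · intro s hs t ht hst
      obtain ⟨e1, e2⟩ := hcomp (h s (hJ hs) t (hJ ht))
      have hts : 0 ≤ t - s := sub_nonneg.2 hst
      rw [abs_of_nonneg hts] at e1 e2
      set d1 := (γ t).1 - (γ s).1 with hd1
      set d2 := (γ t).2 - (γ s).2 with hd2
      have f1 : |d1| ≤ (t - s) * |g1| + η / 8 * (t - s) := by
        have := abs_sub_abs_le_abs_sub d1 ((t - s) * g1)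
        rw [abs_mul, abs_of_nonneg hts] at this
        linarith
      have f2 : |σ * (d2 - (t - s) * g2)| ≤ η / 8 * (t - s) := by rwa [abs_mul, hσ1, one_mul]
      have f3 : σ * (d2 - (t - s) * g2) = σ * d2 - (t - s) * |g2| := by rw [← hσ2]; ring
      rw [f3] at f2
      have f4 := abs_le.mp f2
      have f5 : |σ * d2| = |d2| := by rw [abs_mul, hσ1, one_mul]
      have f6 := le_abs_self (σ * d2)
      have g1' := mul_le_mul_of_nonneg_left hge hts
      have g2' := mul_le_mul_of_nonneg_left hg2l hts
      have g2'' := mul_le_mul_of_nonneg_left hg2u hts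
      have hηt : η * (t - s) ≤ 1 / 4 * (t - s) := mul_le_mul_of_nonneg_right hη4 hts
      have hσd : (t - s) / 4 ≤ σ * d2 := by linarith [f4.1]
      have f7 : |d2| ≤ 2 * (t - s) := by
        rw [← f5, abs_of_nonneg (by linarith)]; linarith [f4.2]
      refine ⟨?_, hσd, ?_⟩
      · rw [← f5, abs_of_nonneg (show 0 ≤ σ * d2 by linarith)]
        have f8 : 3 / 2 * η * ((t - s) * |g2| - η / 8 * (t - s)) ≤ 3 / 2 * η * (σ * d2) :=
          mul_le_mul_of_nonneg_left (by linarith [f4.1]) (by linarith)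
        have f9 : η * ((t - s) * (1 / 2)) ≤ η * ((t - s) * |g2|) :=
          mul_le_mul_of_nonneg_left g2' hη.le
        have f10 : η * (η * (t - s)) ≤ η * (1 / 4 * (t - s)) :=
          mul_le_mul_of_nonneg_left hηt hη.le
        have f11 : 0 ≤ η * (t - s) := by positivity
        linarith only [f1, g1', f8, f9, f10, f11]
      · rw [Prod.norm_def]
        refine max_le ?_ ?_
        · rw [Prod.fst_sub, Real.norm_eq_abs, ← hd1]
          have := mul_le_mul_of_nonneg_left hg12 hts
          linarith
        · rw [Prod.snd_sub, Real.norm_eq_abs, ← hd2]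
          exact f7

end Run

/-! ### Transfer to the Euclidean plane -/

/-- The coordinates of a point of the plane. -/
def toProd : E2 →L[ℝ] ℝ × ℝ :=
  (EuclideanSpace.proj (𝕜 := ℝ) (0 : Fin 2)).prod (EuclideanSpace.proj (𝕜 := ℝ) (1 : Fin 2))

/-- The point of the plane with given coordinates. -/
def ofProd : ℝ × ℝ →L[ℝ] E2 :=
  LinearMap.toContinuousLinearMap
    { toFun := fun p => !₂[p.1, p.2]
      map_add' := fun p q => by ext i; fin_cases i <;> simp
      map_smul' := fun r p => by ext i; fin_cases i <;> simp }

lemma toProd_apply (x : E2) : toProd x = (x 0, x 1) := rfl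

lemma toProd_ofProd (p : ℝ × ℝ) : toProd (ofProd p) = p := by
  rw [toProd_apply]; simp [ofProd]

lemma ofProd_toProd (x : E2) : ofProd (toProd x) = x := by
  ext i; fin_cases i <;> simp [ofProd, toProd_apply]

lemma sq_add_sq (x : E2) : x 0 ^ 2 + x 1 ^ 2 = ‖x‖ ^ 2 := by
  rw [EuclideanSpace.norm_sq_eq]; simp

lemma norm_toProd_le (x : E2) : ‖toProd x‖ ≤ ‖x‖ := by
  rw [toProd_apply, Prod.norm_def]
  have := sq_add_sq x
  refine max_le ?_ ?_ <;> rw [Real.norm_eq_abs] <;>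
    refine abs_le_of_sq_le_sq ?_ (norm_nonneg _) <;> nlinarith [sq_nonneg (x 0), sq_nonneg (x 1)]

/-- Differentiability does not depend on the choice of the norm of the plane. -/
lemma isUDS_preimage {E : Set (ℝ × ℝ)}
    (hE : ∀ (f : ℝ × ℝ → ℝ) (K : NNReal), LipschitzWith K f → ∃ x ∈ E, DifferentiableAt ℝ f x) :
    IsUDS (toProd ⁻¹' E) := by
  rintro f ⟨K, hf⟩
  obtain ⟨y, hy, hd⟩ := hE (f ∘ ofProd) _ (hf.comp ofProd.lipschitz)
  refine ⟨ofProd y, by rwa [mem_preimage, toProd_ofProd], ?_⟩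
  have hd' : DifferentiableAt ℝ (f ∘ ofProd) (toProd (ofProd y)) := by rwa [toProd_ofProd]
  have := hd'.comp (ofProd y) toProd.differentiableAt
  refine this.congr_of_eventuallyEq (Eventually.of_forall fun x => ?_)
  simp [ofProd_toProd]

/-- Directions outside the cone around the vertical direction are transversal to every line
`x₁ = c + m x₂` of small slope `m`. -/
lemma transversal {v : E2} {β m : ℝ} (hv : ‖v‖ = 1) (hβ : 0 < β)
    (hv1 : |v 1| < 1 - β) (hm : |m| ≤ β / 4) :
    β / 2 ≤ |(toProd v).1 - m * (toProd v).2| := by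
  rw [toProd_apply]
  have h1 := sq_add_sq v
  rw [hv, ← sq_abs (v 0), ← sq_abs (v 1)] at h1
  have h2 : β ≤ |v 0| := by
    refine abs_le_of_sq_le_sq' ?_ (abs_nonneg _) |>.2
    nlinarith [abs_nonneg (v 1)]
  have h3 := abs_mul_le hm (show |v 1| ≤ 1 by linarith)
  have h4 := abs_sub_abs_le_abs_sub (v 0) (m * v 1)
  simp only
  linarith

end UDS

open UDS
/-- For every `α > 0` there are a universal differentiability set `E ⊆ ℝ²`,
a Lipschitz `h : ℝ² → ℝ`, a unit vector `w` and `α' ∈ (0,α]` such that the set of points of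
`E` at which `h` has a directional derivative in some direction of `S¹ ∖ Ĉ(w,α')` is
contained in a purely unrectifiable set. -/
theorem stmt1 (α : ℝ) (hα : 0 < α) :
    ∃ (E : Set E2) (h : E2 → ℝ) (w : E2) (α' : ℝ),
      IsUDS E ∧ (∃ K, LipschitzWith K h) ∧ w ∈ sphere (0:E2) 1 ∧
      0 < α' ∧ α' ≤ α ∧
      ∃ P : Set E2, PurelyUnrectifiable P ∧
        {x ∈ E | ∃ v ∈ sphere (0:E2) 1 \ hatC w α', HasDirDeriv h x v} ⊆ P := by
  -- the cone of width `β` around the vertical direction contains, with room to spare, the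
  -- directions of all lines of slope at most `β / 4`
  set β : ℝ := min α 1 with hβ
  have hβ0 : 0 < β := lt_min hα one_pos
  have hβ1 : β ≤ 1 := min_le_right _ _
  have hη : 0 < β / 4 := by positivity
  have hη4 : β / 4 ≤ 1 / 4 := by linarith
  obtain ⟨R⟩ := exists_run hη hη4
  refine ⟨toProd ⁻¹' R.E, fun x => R.h (toProd x), !₂[0, 1], β,
    isUDS_preimage fun f K hf => R.exists_diff hη hη4 hf, ⟨3, ?_⟩, ?_, hβ0, min_le_left _ _,
    toProd ⁻¹' R.P, ⟨?_, ?_⟩, ?_⟩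
  · refine LipschitzWith.of_dist_le_mul fun x y => ?_
    rw [Real.dist_eq, dist_eq_norm]
    refine (R.lip_h _ _).trans ?_
    rw [← map_sub]
    have := norm_toProd_le (x - y)
    push_cast
    linarith
  · rw [mem_sphere_zero_iff_norm, EuclideanSpace.norm_eq]
    simp
  · exact toProd.continuous.measurable R.measurableSet_P
  · rintro a b γ γ' ⟨-, hc, hd, hn⟩
    refine R.null_curve hη hη4 (γ := fun t => toProd (γ t)) (γ' := fun t => toProd (γ' t))
      (toProd.continuous.comp_continuousOn hc)
      (fun t ht => toProd.hasFDerivAt.comp_hasDerivWithinAt t (hd t ht)) (fun t ht => ?_)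
    have := sq_add_sq (γ' t)
    rw [hn t ht] at this
    simpa [toProd_apply] using this
  · rintro x ⟨hx, v, ⟨hv, hvC⟩, L, hL⟩
    have hv1 : ‖v‖ = 1 := mem_sphere_zero_iff_norm.1 hv
    have hcone : |v 1| < 1 - β := by
      by_contra hcon
      refine hvC ⟨hv, ?_⟩
      rw [not_lt] at hcon
      simpa [PiLp.inner_apply] using hcon
    refine R.mem_P hx ((norm_toProd_le v).trans hv1.le) (half_pos hβ0)
      (fun k => transversal hv1 hβ0 hcone (R.hm k)) (L := L) ?_
    simpa only [map_add, map_smul] using hL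

end
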